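/- Let η > 0 and let A = ∪_{j≥1} ]T_j, H_j T_j] ∩ ℕ be a block sequence with parameter η, and assume that for some ε ∈ (0,1) one has log H_{j+1} > 2·(log T_{j+1})^ε·(log T_j)^{1−ε} for all j ≥ 1. Put δ := 1 − (1 + log log 2)/log 2. If ∑_j (log H_j/log T_j)^{δ₁} = ∞ for some δ₁ > δ, then A is a Behrend sequence, while if ∑_j (log H_j/log T_j)^{δ₂} < ∞ for some δ₂ < δ, then A is not a Behrend sequence. -/

import Mathlib

/-!
The set of prime divisors, from a finite set of primes, of a random integer behaves like a random
set in which each prime `p` is selected independently with probability `1 / p`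
(`tendsto_average`). For a random squarefree number with logarithmic weights the probability is
`1 / (p + 1)` (`sum_powerset_inv_eq`). In both models the task is to estimate the probability that
some product of selected primes falls in the block `(T, H T]`, and the answer, up to an
arbitrarily small change of the exponent, is `(log H / log T) ^ δ`. The hypothesis on the lengths
of the blocks gives `log H (j + 1) ≥ 2 log T j`. Hence `T j` grows doubly exponentially, and the
ranges of primes `(H j, H j * T j]` are pairwise disjoint.

*Divergent case.* The primes in `(H j, H j * T j]` alone produce a divisor in the block with
probability at least `c (log H j / log T j) ^ δ₁` (`lower_bound`). The ranges being disjoint, these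
events are independent, and the probability that none of them occurs is at most
`exp (-c ∑ (log H j / log T j) ^ δ₁)`, which tends to `0` (`isBehrend_blocks`).

For the lower bound, put `h = log H` and split the primes between `H` and `T` into about
`log (log T / h) / (R log 2)` ranges on which `log p` grows by the factor `2 ^ R` (`blk`). The number
of selected primes in such a range is nearly Poisson of mean `R log 2`, and it equals `R` with
probability at least `2 ^ (-R δ')`, for any `δ' > δ` and suitable `R` (`exists_poisson_gt`).
If exactly `R` primes are selected in each of the `K` ranges, there are `2 ^ (R K)` products, about
`log T / h` in number, and on average only `O(2 ^ (R K) (1 + K))` pairs of them have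
a ratio within a factor `H` (`It_pairs_le`). By the Cauchy–Schwarz inequality many primes `p`
complete one of the products to an element of `(T, H T]`, and one of them is selected with
probability at least a constant times `1 / (1 + K)` (`completion_ge`, `core_lower`). This last
factor is absorbed by the gap between `δ₁` and `δ'` (`log_absorb`).

*Convergent case.* A random squarefree number has a divisor in `(T, H T]` with probability
at most `C (log H / log T) ^ δ₂` (`upper_bound`). Put `l = log (log T / log H)`. Either the primes up
to `H` contribute more than `e ^ (l h)`, which is rare by Rankin's method. Or there are more than
`l / log 2` prime factors above `H`, and such an excess over the mean `l` has probability
about `e ^ (-δ l)`. Or there are at most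
`l / log 2` such primes, and then one counts the products of them that fall in
`(T e ^ (-l h), H T]` (`ind_hasDiv_le`, `sum_products_le`). Since `(s - 1) - log s / log 2` with
`s = 1 / log 2` equals `-δ`, and the same exponent comes out of the count, all three
contributions are admissible.

If `∑ (log H j / log T j) ^ δ₂` converges, a tail of the blocks is avoided with probability at least
`1 / 2`. Squarefree numbers without small primes also avoid the finitely many first blocks, so on
the logarithmic scale a positive proportion of the integers are not multiples
(`not_isBehrend_blocks`), while a set of density one leaves out only a proportion zero
(`log_sum_compl_le`).
-/


open Filter Topology
open scoped Classical

/-- Number of elements of `S` in `[1, N]`. -/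
noncomputable def countIn (S : Set ℕ) (N : ℕ) : ℕ :=
  ((Finset.Icc 1 N).filter (fun n => n ∈ S)).card

/-- `S` has natural density `d`. -/
def HasDensity (S : Set ℕ) (d : ℝ) : Prop :=
  Tendsto (fun N : ℕ => (countIn S N : ℝ) / N) atTop (nhds d)

/-- The set of multiples of `A`. -/
def setOfMultiples (A : Set ℕ) : Set ℕ :=
  {n : ℕ | ∃ a ∈ A, ∃ m : ℕ, 1 ≤ m ∧ n = m * a}

/-- `A` is a Behrend sequence: its set of multiples has natural density 1. -/
def IsBehrend (A : Set ℕ) : Prop := HasDensity (setOfMultiples A) 1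

/-- The Erdős–Ford–Tenenbaum constant `δ = 1 - (1 + log log 2)/log 2`. -/
noncomputable def deltaEFT : ℝ := 1 - (1 + Real.log (Real.log 2)) / Real.log 2

namespace BlockBehrend

/-! ### Mertens' theorems -/

/-- The primes `p` with `a < p ≤ b`, for real `a` and `b`. -/
noncomputable def primesIoc (a b : ℝ) : Finset ℕ :=
  (Finset.Icc 1 ⌊b⌋₊).filter (fun p => p.Prime ∧ a < (p : ℝ))

lemma mem_primesIoc {a b : ℝ} {p : ℕ} :
    p ∈ primesIoc a b ↔ p.Prime ∧ a < (p : ℝ) ∧ (p : ℝ) ≤ b := by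
  unfold primesIoc
  rw [Finset.mem_filter, Finset.mem_Icc]
  constructor
  · rintro ⟨⟨h1, h2⟩, h3, h4⟩
    exact ⟨h3, h4, (Nat.le_floor_iff' (by omega)).1 h2⟩
  · rintro ⟨h1, h2, h3⟩
    exact ⟨⟨h1.one_le, (Nat.le_floor_iff' h1.ne_zero).2 h3⟩, h1, h2⟩

/-- Crude bounds for the exponent of `p` in `N !`: it lies between `⌊N / p⌋` and `N / (p - 1)`. -/
lemma factorization_factorial_bounds {p N : ℕ} (hp : p.Prime) :
    N / p ≤ (N.factorial).factorization p ∧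
      (p - 1) * (N.factorial).factorization p ≤ N := by
  have : Fact p.Prime := ⟨hp⟩
  constructor
  · have h1 : (p ^ (N / p)) ∣ N.factorial := by
      have h2 : p ^ (N / p) ∣ (p * (N / p)).factorial := by
        have := Nat.Prime.pow_dvd_factorial_iff (p := p) (n := p * (N / p)) (r := N / p)
          (b := Nat.log p (p * (N / p)) + 1) hp (by omega)
        rw [this]
        by_cases h0 : N / p = 0
        · simp [h0]
        have hpos : 0 < p * (N / p) := Nat.mul_pos hp.pos (Nat.pos_of_ne_zero h0)
        have hlog : 1 ≤ Nat.log p (p * (N / p)) := by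
          apply (Nat.le_log_iff_pow_le hp.one_lt hpos.ne').2
          simpa using Nat.le_mul_of_pos_right p (Nat.pos_of_ne_zero h0)
        calc N / p = p * (N / p) / p ^ 1 := by
              rw [pow_one, Nat.mul_div_cancel_left _ hp.pos]
          _ ≤ _ := Finset.single_le_sum (f := fun i => p * (N / p) / p ^ i)
              (fun _ _ => Nat.zero_le _) (Finset.mem_Ico.2 ⟨le_rfl, by omega⟩)
      exact h2.trans (Nat.factorial_dvd_factorial (Nat.mul_div_le N p))
    exact (hp.pow_dvd_iff_le_factorization (Nat.factorial_ne_zero N)).1 h1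
  · rw [Nat.factorization_def _ hp, sub_one_mul_padicValNat_factorial]
    exact Nat.sub_le _ _

lemma log_factorial_eq (N : ℕ) : Real.log (N.factorial : ℝ) =
    ∑ p ∈ Nat.primesLE N, ((N.factorial).factorization p : ℝ) * Real.log p := by
  have h := Nat.prod_factorization_pow_eq_self (Nat.factorial_ne_zero N)
  conv_lhs => rw [← h]
  rw [Finsupp.prod, Nat.cast_prod, Real.log_prod]
  · have hs : (N.factorial).factorization.support ⊆ Nat.primesLE N := by
      intro p hp
      rw [Nat.support_factorization, Nat.mem_primeFactors] at hp
      exact Nat.mem_primesLE.2 ⟨(hp.1.dvd_factorial).1 hp.2.1, hp.1⟩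
    rw [← Finset.sum_subset hs]
    · exact Finset.sum_congr rfl fun p _ => by rw [Nat.cast_pow, Real.log_pow]
    · intro p _ hp
      simp [Finsupp.notMem_support_iff.1 hp]
  · intro p hp
    rw [Nat.support_factorization, Nat.mem_primeFactors] at hp
    have := hp.1.pos
    positivity

lemma log_factorial_bounds {N : ℕ} (hN : 1 ≤ N) :
    N * Real.log N - N ≤ Real.log (N.factorial : ℝ) ∧
      Real.log (N.factorial : ℝ) ≤ N * Real.log N := by
  have hN0 : (0 : ℝ) < N := by exact_mod_cast hN
  constructor
  · have h := Real.pow_div_factorial_le_exp (N : ℝ) hN0.le N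
    have hf : (0 : ℝ) < N.factorial := by exact_mod_cast N.factorial_pos
    have h2 := Real.log_le_log (by positivity) h
    rw [Real.log_exp, Real.log_div (by positivity) hf.ne', Real.log_pow] at h2
    linarith
  · have h : (N.factorial : ℝ) ≤ (N : ℝ) ^ N := by exact_mod_cast N.factorial_le_pow
    have := Real.log_le_log (by exact_mod_cast N.factorial_pos) h
    rwa [Real.log_pow] at this

/-- The sum of `log n / (n (n - 1))` converges. -/
lemma exists_sum_log_bound : ∃ C : ℝ, 0 < C ∧ ∀ N : ℕ,
    ∑ p ∈ Nat.primesLE N, Real.log p / (p * (p - 1)) ≤ C := by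
  have hs : Summable (fun n : ℕ => 4 * (1 / (n : ℝ) ^ (3 / 2 : ℝ))) :=
    (Real.summable_one_div_nat_rpow.2 (by norm_num)).mul_left 4
  refine ⟨∑' n : ℕ, 4 * (1 / (n : ℝ) ^ (3 / 2 : ℝ)) + 1, ?_, fun N => ?_⟩
  · have : 0 ≤ ∑' n : ℕ, 4 * (1 / (n : ℝ) ^ (3 / 2 : ℝ)) := tsum_nonneg fun n => by positivity
    linarith
  · have h1 : ∑ p ∈ Nat.primesLE N, Real.log p / (p * (p - 1)) ≤
        ∑ p ∈ Nat.primesLE N, 4 * (1 / (p : ℝ) ^ (3 / 2 : ℝ)) := by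
      refine Finset.sum_le_sum fun p hp => ?_
      have hp2 : (2 : ℝ) ≤ p := by exact_mod_cast Nat.two_le_of_mem_primesLE hp
      have hlog : Real.log p ≤ 2 * (p : ℝ) ^ (1 / 2 : ℝ) := by
        have := Real.log_le_rpow_div (x := (p : ℝ)) (ε := 1 / 2) (by linarith) (by norm_num)
        linarith
      have e1 : (p : ℝ) ^ (3 / 2 : ℝ) * (p : ℝ) ^ (1 / 2 : ℝ) = p ^ 2 := by
        rw [← Real.rpow_add (by linarith)]; norm_num
      have hq : 0 < (p : ℝ) ^ (1 / 2 : ℝ) := by positivity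
      have hq3 : 0 < (p : ℝ) ^ (3 / 2 : ℝ) := by positivity
      rw [mul_one_div, div_le_div_iff₀ (by nlinarith) hq3]
      calc Real.log p * (p : ℝ) ^ (3 / 2 : ℝ) ≤ 2 * (p : ℝ) ^ (1 / 2 : ℝ) * p ^ (3 / 2 : ℝ) := by
            gcongr
        _ = 2 * p ^ 2 := by rw [← e1]; ring
        _ ≤ 4 * (p * (p - 1)) := by nlinarith
    have h2 := hs.sum_le_tsum (Nat.primesLE N) (fun n _ => by positivity)
    linarith

/-- Mertens' first theorem, at integers. -/
lemma mertens_first_nat : ∃ C : ℝ, 0 < C ∧ ∀ N : ℕ, 1 ≤ N →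
    |∑ p ∈ Nat.primesLE N, Real.log p / p - Real.log N| ≤ C := by
  obtain ⟨C, hC, hCN⟩ := exists_sum_log_bound
  refine ⟨C + 1 + Real.log 4, by have := Real.log_nonneg (show (1 : ℝ) ≤ 4 by norm_num); linarith,
    fun N hN => ?_⟩
  have hN0 : (0 : ℝ) < N := by exact_mod_cast hN
  have hl4 := Real.log_nonneg (show (1 : ℝ) ≤ 4 by norm_num)
  obtain ⟨hf1, hf2⟩ := log_factorial_bounds hN
  have hth := Chebyshev.theta_le_log4_mul_x (x := (N : ℝ)) hN0.le
  rw [Chebyshev.theta_eq_sum_primesLE_log] at hth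
  rw [log_factorial_eq] at hf1 hf2
  rw [abs_le]
  constructor
  · have h1 : ∑ p ∈ Nat.primesLE N, ((N.factorial).factorization p : ℝ) * Real.log p ≤
        N * (∑ p ∈ Nat.primesLE N, Real.log p / p +
          ∑ p ∈ Nat.primesLE N, Real.log p / (p * (p - 1))) := by
      rw [← Finset.sum_add_distrib, Finset.mul_sum]
      refine Finset.sum_le_sum fun p hp => ?_
      have hpp := Nat.prime_of_mem_primesLE hp
      have hp2 : (2 : ℝ) ≤ p := by exact_mod_cast hpp.two_le
      have hb := (factorization_factorial_bounds (N := N) hpp).2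
      have hb' : ((p : ℝ) - 1) * (N.factorial).factorization p ≤ N := by
        have : (((p - 1) * (N.factorial).factorization p : ℕ) : ℝ) ≤ N := by exact_mod_cast hb
        rwa [Nat.cast_mul, Nat.cast_sub hpp.one_le, Nat.cast_one] at this
      have hlp : 0 ≤ Real.log p := Real.log_nonneg (by linarith)
      have e : Real.log p / p + Real.log p / (p * (p - 1)) = Real.log p / (p - 1) := by
        have : (p : ℝ) - 1 ≠ 0 := by linarith
        field_simp
        ring
      rw [e, ← mul_div_assoc, le_div_iff₀ (by linarith)]
      nlinarith
    have h2 := hCN N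
    have h3 : N * (Real.log N - 1) ≤ N * (∑ p ∈ Nat.primesLE N, Real.log p / p +
          ∑ p ∈ Nat.primesLE N, Real.log p / (p * (p - 1))) := by linarith
    have h4 := le_of_mul_le_mul_left h3 hN0
    linarith
  · have h1 : N * ∑ p ∈ Nat.primesLE N, Real.log p / p - ∑ p ∈ Nat.primesLE N, Real.log p ≤
        ∑ p ∈ Nat.primesLE N, ((N.factorial).factorization p : ℝ) * Real.log p := by
      rw [Finset.mul_sum, ← Finset.sum_sub_distrib]
      refine Finset.sum_le_sum fun p hp => ?_
      have hpp := Nat.prime_of_mem_primesLE hp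
      have hp2 : (2 : ℝ) ≤ p := by exact_mod_cast hpp.two_le
      have hlp : 0 ≤ Real.log p := Real.log_nonneg (by linarith)
      have hb := (factorization_factorial_bounds (N := N) hpp).1
      have hb' : (N : ℝ) / p - 1 ≤ (N.factorial).factorization p := by
        have h5 : (N : ℝ) / p - 1 ≤ ((N / p : ℕ) : ℝ) := by
          rw [← Nat.floor_div_eq_div (K := ℝ)]
          have := Nat.lt_floor_add_one ((N : ℝ) / p)
          linarith
        exact h5.trans (by exact_mod_cast hb)
      calc N * (Real.log p / p) - Real.log p = (N / p - 1) * Real.log p := by ring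
        _ ≤ _ := mul_le_mul_of_nonneg_right hb' hlp
    have h3 : N * (∑ p ∈ Nat.primesLE N, Real.log p / p) ≤ N * (Real.log N + Real.log 4) := by
      linarith
    have h4 := le_of_mul_le_mul_left h3 hN0
    linarith

/-- `log p / p` at primes, `0` elsewhere. -/
noncomputable def logOver (n : ℕ) : ℝ := if n.Prime then Real.log n / n else 0

/-- Mertens' first theorem at real arguments. -/
lemma mertens_first : ∃ C : ℝ, 0 < C ∧ ∀ x : ℝ, 1 ≤ x →
    |∑ n ∈ Finset.Icc 0 ⌊x⌋₊, logOver n - Real.log x| ≤ C := by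
  obtain ⟨C, hC, h⟩ := mertens_first_nat
  refine ⟨C + 1, by linarith, fun x hx => ?_⟩
  have hN : 1 ≤ ⌊x⌋₊ := (Nat.one_le_floor_iff _).2 hx
  have h1 := h _ hN
  have e : ∑ n ∈ Finset.Icc 0 ⌊x⌋₊, logOver n = ∑ p ∈ Nat.primesLE ⌊x⌋₊, Real.log p / p := by
    unfold logOver
    rw [← Finset.sum_filter]
    apply Finset.sum_congr _ fun _ _ => rfl
    ext p
    simp [Nat.mem_primesLE]
  rw [e]
  have hfl : (⌊x⌋₊ : ℝ) ≤ x := Nat.floor_le (by linarith)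
  have hfl2 : x < ⌊x⌋₊ + 1 := Nat.lt_floor_add_one x
  have hN1 : (1 : ℝ) ≤ ⌊x⌋₊ := by exact_mod_cast hN
  have h2 : Real.log ⌊x⌋₊ ≤ Real.log x := Real.log_le_log (by linarith) hfl
  have h3 : Real.log x ≤ Real.log ⌊x⌋₊ + 1 := by
    have : Real.log (x / ⌊x⌋₊) ≤ x / ⌊x⌋₊ - 1 := Real.log_le_sub_one_of_pos (by positivity)
    rw [Real.log_div (by linarith) (by linarith)] at this
    have h4 : x / ⌊x⌋₊ ≤ 2 := by rw [div_le_iff₀ (by linarith)]; linarith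
    linarith
  rw [abs_le] at h1 ⊢
  constructor <;> linarith [h1.1, h1.2]

lemma sum_primesIoc_eq (g : ℕ → ℝ) {a b : ℝ} (ha : 0 ≤ a) :
    ∑ p ∈ primesIoc a b, g p =
      ∑ n ∈ Finset.Ioc ⌊a⌋₊ ⌊b⌋₊, if n.Prime then g n else 0 := by
  rw [← Finset.sum_filter]
  apply Finset.sum_congr _ fun _ _ => rfl
  ext p
  rw [mem_primesIoc, Finset.mem_filter, Finset.mem_Ioc, Nat.floor_lt ha]
  constructor
  · rintro ⟨h1, h2, h3⟩
    exact ⟨⟨h2, (Nat.le_floor_iff' h1.ne_zero).2 h3⟩, h1⟩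
  · rintro ⟨⟨h1, h2⟩, h3⟩
    exact ⟨h3, h1, (Nat.le_floor_iff' h3.ne_zero).1 h2⟩

/-- Mertens' first theorem on an interval. -/
lemma mertens_interval : ∃ C : ℝ, 0 < C ∧ ∀ a b : ℝ, 1 ≤ a → a ≤ b →
    |∑ p ∈ primesIoc a b, Real.log p / p - (Real.log b - Real.log a)| ≤ C := by
  obtain ⟨C, hC, h⟩ := mertens_first
  refine ⟨2 * C, by linarith, fun a b ha hab => ?_⟩
  have h1 := h a ha
  have h2 := h b (ha.trans hab)
  have e : ∑ p ∈ primesIoc a b, Real.log p / p =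
      ∑ n ∈ Finset.Icc 0 ⌊b⌋₊, logOver n - ∑ n ∈ Finset.Icc 0 ⌊a⌋₊, logOver n := by
    rw [sum_primesIoc_eq _ (by linarith)]
    have hs : Finset.Icc 0 ⌊b⌋₊ = Finset.Icc 0 ⌊a⌋₊ ∪ Finset.Ioc ⌊a⌋₊ ⌊b⌋₊ := by
      ext n
      have := Nat.floor_le_floor hab
      simp only [Finset.mem_union, Finset.mem_Icc, Finset.mem_Ioc]
      omega
    rw [hs, Finset.sum_union]
    · simp [logOver]
    · rw [Finset.disjoint_left]
      intro n h1 h2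
      simp only [Finset.mem_Icc, Finset.mem_Ioc] at h1 h2
      omega
  rw [e]
  rw [abs_le] at h1 h2 ⊢
  constructor <;> linarith [h1.1, h1.2, h2.1, h2.2]

lemma hasDerivAt_aux (C : ℝ) {t : ℝ} (ht : 1 < t) :
    HasDerivAt (fun t => Real.log (Real.log t) - C * (Real.log t)⁻¹)
      (-(deriv (fun t => (Real.log t)⁻¹) t * (Real.log t + C))) t := by
  have hl : 0 < Real.log t := Real.log_pos ht
  have ht0 : t ≠ 0 := by linarith
  have h1 : HasDerivAt Real.log t⁻¹ t := Real.hasDerivAt_log ht0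
  have h2 : HasDerivAt (fun t => (Real.log t)⁻¹) (-t⁻¹ / (Real.log t) ^ 2) t := h1.fun_inv hl.ne'
  have h3 : HasDerivAt (fun t => Real.log (Real.log t)) (t⁻¹ / Real.log t) t := h1.log hl.ne'
  rw [h2.deriv]
  refine (h3.fun_sub (h2.const_mul C)).congr_deriv ?_
  field_simp
  ring

/-- The integral that comes from partial summation with the weight `1 / log t` against the main
term `log t + C` of Mertens' first theorem. -/
lemma integral_aux (C : ℝ) {a b : ℝ} (ha : 1 < a) (hab : a ≤ b) :
    IntervalIntegrable (fun t => -(deriv (fun t => (Real.log t)⁻¹) t * (Real.log t + C)))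
      MeasureTheory.volume a b ∧
    ∫ t in a..b, -(deriv (fun t => (Real.log t)⁻¹) t * (Real.log t + C)) =
      (Real.log (Real.log b) - C * (Real.log b)⁻¹) -
        (Real.log (Real.log a) - C * (Real.log a)⁻¹) := by
  have hInt : IntervalIntegrable
      (fun t => -(deriv (fun t => (Real.log t)⁻¹) t * (Real.log t + C)))
      MeasureTheory.volume a b := by
    apply ContinuousOn.intervalIntegrable
    rw [Set.uIcc_of_le hab]
    have : ContinuousOn (fun t => -((-t⁻¹ / (Real.log t) ^ 2) * (Real.log t + C)))
        (Set.Icc a b) := by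
      intro z hz
      have hz0 : z ≠ 0 := by linarith [hz.1]
      have hl : Real.log z ^ 2 ≠ 0 := pow_ne_zero 2 (Real.log_pos (by linarith [hz.1])).ne'
      exact ContinuousAt.continuousWithinAt (by fun_prop (disch := assumption))
    refine this.congr fun z hz => ?_
    have hl : 0 < Real.log z := Real.log_pos (by linarith [hz.1])
    have h2 : HasDerivAt (fun t => (Real.log t)⁻¹) (-z⁻¹ / (Real.log z) ^ 2) z :=
      (Real.hasDerivAt_log (by linarith [hz.1])).fun_inv hl.ne'
    simp only [h2.deriv]
  refine ⟨hInt, intervalIntegral.integral_eq_sub_of_hasDerivAt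
    (f := fun t => Real.log (Real.log t) - C * (Real.log t)⁻¹) (fun t ht => ?_) hInt⟩
  rw [Set.uIcc_of_le hab] at ht
  exact hasDerivAt_aux C (by linarith [ht.1])

/-- Mertens' second theorem on an interval, with error `O(1 / log a)`. -/
lemma mertens_second : ∃ C : ℝ, 0 < C ∧ ∀ a b : ℝ, 2 ≤ a → a ≤ b →
    |∑ p ∈ primesIoc a b, 1 / (p : ℝ) - (Real.log (Real.log b) - Real.log (Real.log a))| ≤
      C / Real.log a := by
  obtain ⟨C, hC, h⟩ := mertens_first
  refine ⟨2 * C, by linarith, fun a b ha hab => ?_⟩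
  have hla : 0 < Real.log a := Real.log_pos (by linarith)
  have hlb : 0 < Real.log b := Real.log_pos (by linarith)
  have hdiff : ∀ t ∈ Set.Icc a b, DifferentiableAt ℝ (fun t => (Real.log t)⁻¹) t := by
    intro z hz
    have hz0 : z ≠ 0 := by linarith [hz.1]
    have hl : Real.log z ≠ 0 := (Real.log_pos (by linarith [hz.1])).ne'
    fun_prop (disch := assumption)
  have hderiv : ∀ t ∈ Set.Icc a b,
      deriv (fun t => (Real.log t)⁻¹) t = -t⁻¹ / (Real.log t) ^ 2 := fun z hz =>
    ((Real.hasDerivAt_log (by linarith [hz.1])).fun_inv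
      (Real.log_pos (by linarith [hz.1])).ne').deriv
  have hintd : MeasureTheory.IntegrableOn (deriv (fun t => (Real.log t)⁻¹)) (Set.Icc a b) := by
    apply ContinuousOn.integrableOn_Icc
    have : ContinuousOn (fun t : ℝ => -t⁻¹ / (Real.log t) ^ 2) (Set.Icc a b) := by
      intro z hz
      have hz0 : z ≠ 0 := by linarith [hz.1]
      have hl : Real.log z ^ 2 ≠ 0 := pow_ne_zero 2 (Real.log_pos (by linarith [hz.1])).ne'
      exact ContinuousAt.continuousWithinAt (by fun_prop (disch := assumption))
    exact this.congr hderiv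
  have habel := sum_mul_eq_sub_sub_integral_mul logOver (by linarith : (0 : ℝ) ≤ a) hab hdiff hintd
  have e1 : ∑ p ∈ primesIoc a b, 1 / (p : ℝ) =
      ∑ k ∈ Finset.Ioc ⌊a⌋₊ ⌊b⌋₊, (Real.log k)⁻¹ * logOver k := by
    rw [sum_primesIoc_eq _ (by linarith)]
    refine Finset.sum_congr rfl fun n _ => ?_
    unfold logOver
    split_ifs with hn
    · have : Real.log n ≠ 0 := (Real.log_pos (by exact_mod_cast hn.one_lt)).ne'
      field_simp
    · simp
  have hMint : IntervalIntegrable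
      (fun t => -(deriv (fun t => (Real.log t)⁻¹) t * ∑ k ∈ Finset.Icc 0 ⌊t⌋₊, logOver k))
      MeasureTheory.volume a b := by
    rw [intervalIntegrable_iff_integrableOn_Icc_of_le hab]
    exact (integrableOn_mul_sum_Icc logOver (by linarith) hintd).neg
  rw [← intervalIntegral.integral_of_le hab] at habel
  have e2 : -∫ t in a..b, deriv (fun t => (Real.log t)⁻¹) t * ∑ k ∈ Finset.Icc 0 ⌊t⌋₊, logOver k =
      ∫ t in a..b, -(deriv (fun t => (Real.log t)⁻¹) t * ∑ k ∈ Finset.Icc 0 ⌊t⌋₊, logOver k) :=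
    intervalIntegral.integral_neg.symm
  have hneg : ∀ t ∈ Set.Icc a b, 0 ≤ -deriv (fun t => (Real.log t)⁻¹) t := by
    intro t ht
    rw [hderiv t ht]
    have : 0 < t := by linarith [ht.1]
    rw [neg_div, neg_neg]
    positivity
  obtain ⟨i1, v1⟩ := integral_aux C (by linarith) hab
  obtain ⟨i2, v2⟩ := integral_aux (-C) (by linarith) hab
  have hup := intervalIntegral.integral_mono_on hab hMint i1 (fun t ht => by
    have := h t (by linarith [ht.1])
    rw [abs_le] at this
    have := mul_le_mul_of_nonneg_left (show ∑ k ∈ Finset.Icc 0 ⌊t⌋₊, logOver k ≤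
      Real.log t + C by linarith [this.2]) (hneg t ht)
    linarith)
  have hlo := intervalIntegral.integral_mono_on hab i2 hMint (fun t ht => by
    have := h t (by linarith [ht.1])
    rw [abs_le] at this
    have := mul_le_mul_of_nonneg_left (show Real.log t + -C ≤
      ∑ k ∈ Finset.Icc 0 ⌊t⌋₊, logOver k by linarith [this.1]) (hneg t ht)
    linarith)
  rw [v1] at hup
  rw [v2] at hlo
  have hA := h a (by linarith)
  have hB := h b (by linarith)
  set I := ∫ t in a..b, -(deriv (fun t => (Real.log t)⁻¹) t * ∑ k ∈ Finset.Icc 0 ⌊t⌋₊, logOver k)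
  rw [e1, habel, sub_eq_add_neg _ (∫ t in a..b, _), e2]
  set MA := ∑ k ∈ Finset.Icc 0 ⌊a⌋₊, logOver k
  set MB := ∑ k ∈ Finset.Icc 0 ⌊b⌋₊, logOver k
  rw [abs_le] at hA hB ⊢
  have a1 := mul_le_mul_of_nonneg_left hA.1 (inv_pos.2 hla).le
  have a2 := mul_le_mul_of_nonneg_left hA.2 (inv_pos.2 hla).le
  have b1 := mul_le_mul_of_nonneg_left hB.1 (inv_pos.2 hlb).le
  have b2 := mul_le_mul_of_nonneg_left hB.2 (inv_pos.2 hlb).le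
  rw [mul_sub, inv_mul_cancel₀ hla.ne'] at a1 a2
  rw [mul_sub, inv_mul_cancel₀ hlb.ne'] at b1 b2
  rw [div_eq_mul_inv]
  constructor <;> nlinarith

/-! ### Independent random sets of primes -/

/-- The probability of the outcome `W` when each `p ∈ S` is selected independently with
probability `π p`. -/
noncomputable def bw (π : ℕ → ℝ) (S W : Finset ℕ) : ℝ :=
  (∏ p ∈ W, π p) * ∏ p ∈ S \ W, (1 - π p)

/-- The expectation of `f W`, where `W` is the random subset of `S` in which each `p ∈ S` is
selected independently with probability `π p`. -/
noncomputable def Ex (π : ℕ → ℝ) (S : Finset ℕ) (f : Finset ℕ → ℝ) : ℝ :=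
  ∑ W ∈ S.powerset, bw π S W * f W

/-- The indicator of a proposition. -/
noncomputable def ind (P : Prop) : ℝ := if P then 1 else 0

lemma ind_nonneg (P : Prop) : 0 ≤ ind P := by unfold ind; split_ifs <;> norm_num
lemma ind_le_one (P : Prop) : ind P ≤ 1 := by unfold ind; split_ifs <;> norm_num
lemma ind_of {P : Prop} (h : P) : ind P = 1 := by simp [ind, h]
lemma ind_of_not {P : Prop} (h : ¬ P) : ind P = 0 := by simp [ind, h]
lemma ind_mono {P Q : Prop} (h : P → Q) : ind P ≤ ind Q := by
  by_cases hp : P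
  · rw [ind_of hp, ind_of (h hp)]
  · rw [ind_of_not hp]; exact ind_nonneg Q
lemma ind_le {P : Prop} {x : ℝ} (h0 : 0 ≤ x) (h : P → 1 ≤ x) : ind P ≤ x := by
  by_cases hp : P
  · rw [ind_of hp]; exact h hp
  · rw [ind_of_not hp]; exact h0

section
variable {π : ℕ → ℝ} {S : Finset ℕ}

lemma bw_nonneg (h0 : ∀ p, 0 ≤ π p) (h1 : ∀ p, π p ≤ 1) (W : Finset ℕ) : 0 ≤ bw π S W :=
  mul_nonneg (Finset.prod_nonneg fun p _ => h0 p)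
    (Finset.prod_nonneg fun p _ => sub_nonneg.2 (h1 p))

lemma Ex_empty (f : Finset ℕ → ℝ) : Ex π ∅ f = f ∅ := by simp [Ex, bw]

lemma Ex_insert {a : ℕ} (ha : a ∉ S) (f : Finset ℕ → ℝ) :
    Ex π (insert a S) f = (1 - π a) * Ex π S f + π a * Ex π S (fun W => f (insert a W)) := by
  unfold Ex
  rw [Finset.sum_powerset_insert ha, Finset.mul_sum, Finset.mul_sum]
  congr 1
  · refine Finset.sum_congr rfl fun W hW => ?_
    have haW : a ∉ W := fun h => ha (Finset.mem_powerset.1 hW h)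
    unfold bw
    rw [Finset.insert_sdiff_of_notMem _ haW, Finset.prod_insert (by simp [ha])]
    ring
  · refine Finset.sum_congr rfl fun W hW => ?_
    have haW : a ∉ W := fun h => ha (Finset.mem_powerset.1 hW h)
    unfold bw
    rw [Finset.insert_sdiff_insert, Finset.prod_insert haW, Finset.sdiff_insert_of_notMem ha]
    ring

lemma Ex_congr {f g : Finset ℕ → ℝ} (h : ∀ W, W ⊆ S → f W = g W) : Ex π S f = Ex π S g :=
  Finset.sum_congr rfl fun W hW => by rw [h W (Finset.mem_powerset.1 hW)]

lemma Ex_mono (h0 : ∀ p, 0 ≤ π p) (h1 : ∀ p, π p ≤ 1) {f g : Finset ℕ → ℝ}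
    (h : ∀ W, W ⊆ S → f W ≤ g W) : Ex π S f ≤ Ex π S g :=
  Finset.sum_le_sum fun W hW =>
    mul_le_mul_of_nonneg_left (h W (Finset.mem_powerset.1 hW)) (bw_nonneg h0 h1 W)

lemma Ex_add (f g : Finset ℕ → ℝ) : Ex π S (fun W => f W + g W) = Ex π S f + Ex π S g := by
  unfold Ex
  rw [← Finset.sum_add_distrib]
  exact Finset.sum_congr rfl fun W _ => by ring

lemma Ex_const_mul (c : ℝ) (f : Finset ℕ → ℝ) : Ex π S (fun W => c * f W) = c * Ex π S f := by
  unfold Ex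
  rw [Finset.mul_sum]
  exact Finset.sum_congr rfl fun W _ => by ring

lemma Ex_sum {ι : Type*} (s : Finset ι) (f : ι → Finset ℕ → ℝ) :
    Ex π S (fun W => ∑ i ∈ s, f i W) = ∑ i ∈ s, Ex π S (f i) := by
  unfold Ex
  rw [Finset.sum_comm]
  exact Finset.sum_congr rfl fun W _ => by rw [Finset.mul_sum]

/-- Expectation of a function that is a product over the selected and non-selected elements. -/
lemma Ex_prod_ite (a b : ℕ → ℝ) :
    Ex π S (fun W => ∏ p ∈ S, if p ∈ W then a p else b p) =
      ∏ p ∈ S, (π p * a p + (1 - π p) * b p) := by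
  rw [Finset.prod_add]
  refine Finset.sum_congr rfl fun W hW => ?_
  have hWS := Finset.mem_powerset.1 hW
  have e : ∏ p ∈ S, (if p ∈ W then a p else b p) = (∏ p ∈ W, a p) * ∏ p ∈ S \ W, b p := by
    rw [← Finset.prod_sdiff hWS, mul_comm]
    congr 1
    · exact Finset.prod_congr rfl fun p hp => if_pos hp
    · exact Finset.prod_congr rfl fun p hp => if_neg (Finset.mem_sdiff.1 hp).2
  beta_reduce
  rw [e, Finset.prod_mul_distrib, Finset.prod_mul_distrib]
  unfold bw
  ring

lemma Ex_prod (g : ℕ → ℝ) :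
    Ex π S (fun W => ∏ p ∈ W, g p) = ∏ p ∈ S, (1 + π p * (g p - 1)) := by
  have h := Ex_prod_ite (π := π) (S := S) g (fun _ => 1)
  rw [Ex_congr (g := fun W => ∏ p ∈ W, g p)] at h
  · rw [h]
    exact Finset.prod_congr rfl fun p _ => by ring
  · intro W hW
    rw [Finset.prod_ite_mem, Finset.inter_eq_right.2 hW]

lemma Ex_one : Ex π S (fun _ => 1) = 1 := by
  have := Ex_prod (π := π) (S := S) (fun _ => 1)
  simpa using this

lemma Ex_const (c : ℝ) : Ex π S (fun _ => c) = c := by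
  have := Ex_const_mul (π := π) (S := S) c (fun _ => 1)
  rw [Ex_one] at this
  simpa using this

lemma Ex_nonneg (h0 : ∀ p, 0 ≤ π p) (h1 : ∀ p, π p ≤ 1) {f : Finset ℕ → ℝ}
    (h : ∀ W, W ⊆ S → 0 ≤ f W) : 0 ≤ Ex π S f := by
  have := Ex_mono h0 h1 (f := fun _ => 0) h
  rwa [Ex_const] at this

/-- The selections in disjoint sets are independent. -/
lemma Ex_union {S₁ S₂ : Finset ℕ} (hd : Disjoint S₁ S₂) (f : Finset ℕ → ℝ) :
    Ex π (S₁ ∪ S₂) f = Ex π S₁ (fun W₁ => Ex π S₂ (fun W₂ => f (W₁ ∪ W₂))) := by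
  induction S₁ using Finset.induction_on generalizing f with
  | empty => simp [Ex_empty]
  | insert a S₁ ha ih =>
    rw [Finset.disjoint_insert_left] at hd
    rw [Finset.insert_union, Ex_insert (by simp [ha, hd.1]), Ex_insert ha, ih hd.2, ih hd.2]
    simp only [Finset.insert_union]

lemma Ex_inter {S' : Finset ℕ} (h : S' ⊆ S) (f : Finset ℕ → ℝ) :
    Ex π S (fun W => f (W ∩ S')) = Ex π S' f := by
  conv_lhs => rw [← Finset.union_sdiff_of_subset h]
  rw [Ex_union Finset.disjoint_sdiff]
  refine Ex_congr fun W₁ hW₁ => ?_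
  rw [Ex_congr (g := fun _ => f W₁), Ex_const]
  intro W₂ hW₂
  congr 1
  ext p
  simp only [Finset.mem_inter, Finset.mem_union]
  constructor
  · rintro ⟨h1 | h1, h2⟩
    · exact h1
    · exact absurd h2 (Finset.mem_sdiff.1 (hW₂ h1)).2
  · exact fun h1 => ⟨Or.inl h1, hW₁ h1⟩

/-- A set `W` of primes has a subset whose product lies in `(T, X]`, that is, `∏ W` has a divisor
there. -/
def HasDiv (T X : ℝ) (W : Finset ℕ) : Prop :=
  ∃ D ⊆ W, T < ∏ p ∈ D, (p : ℝ) ∧ ∏ p ∈ D, (p : ℝ) ≤ X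

lemma HasDiv.mono {T X : ℝ} {W W' : Finset ℕ} (h : W ⊆ W') (hW : HasDiv T X W) :
    HasDiv T X W' := by
  obtain ⟨D, hD, h1, h2⟩ := hW
  exact ⟨D, hD.trans h, h1, h2⟩

lemma Ex_hasDiv_mono (h0 : ∀ p, 0 ≤ π p) (h1 : ∀ p, π p ≤ 1) {T X : ℝ} {S' : Finset ℕ}
    (h : S' ⊆ S) :
    Ex π S' (fun W => ind (HasDiv T X W)) ≤ Ex π S (fun W => ind (HasDiv T X W)) := by
  rw [← Ex_inter h]
  exact Ex_mono h0 h1 fun W _ => ind_mono (HasDiv.mono Finset.inter_subset_left)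

/-- Only primes up to `X` matter for divisors in `(T, X]`. -/
lemma Ex_hasDiv_le (h0 : ∀ p, 0 ≤ π p) (h1 : ∀ p, π p ≤ 1) {T X : ℝ}
    (hS : ∀ p ∈ S, Nat.Prime p) :
    Ex π S (fun W => ind (HasDiv T X W)) ≤
      Ex π (primesIoc 1 X) (fun W => ind (HasDiv T X W)) := by
  refine le_trans ?_ (Ex_hasDiv_mono h0 h1 (Finset.inter_subset_right (s₁ := S)))
  rw [← Ex_inter (Finset.inter_subset_left (s₁ := S) (s₂ := primesIoc 1 X))]
  refine Ex_mono h0 h1 fun W hW => ind_mono ?_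
  rintro ⟨D, hD, hT, hX⟩
  refine ⟨D, fun p hp => ?_, hT, hX⟩
  have hpp := hS p (hW (hD hp))
  refine Finset.mem_inter.2 ⟨hD hp, Finset.mem_inter.2 ⟨hW (hD hp), mem_primesIoc.2
    ⟨hpp, by exact_mod_cast hpp.one_lt, le_trans ?_ hX⟩⟩⟩
  have : (p : ℕ) ∣ ∏ q ∈ D, q := Finset.dvd_prod_of_mem _ hp
  have h2 : p ≤ ∏ q ∈ D, q := Nat.le_of_dvd
    (Finset.prod_pos fun q hq => (hS q (hW (hD hq))).pos) this
  calc (p : ℝ) ≤ ((∏ q ∈ D, q : ℕ) : ℝ) := by exact_mod_cast h2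
    _ = ∏ q ∈ D, (q : ℝ) := by rw [Nat.cast_prod]

end

/-! ### Sums over primes for the upper bound -/

/-- The sum of `1 / p` over the primes in `(H, H T]` is `log (log T / log H) + O(1)`. -/
lemma sum_inv_long : ∃ C : ℝ, 0 < C ∧ ∀ T H : ℝ, 0 < H → 1 ≤ Real.log H → H ≤ T →
    |∑ p ∈ primesIoc H (H * T), 1 / (p : ℝ) - Real.log (Real.log T / Real.log H)| ≤ C := by
  obtain ⟨C, hC, h⟩ := mertens_second
  refine ⟨C + Real.log 2, by positivity, fun T H hH0 hH1 hHT => ?_⟩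
  have hH2 : 2 ≤ H := by
    have := Real.add_one_le_exp (Real.log H)
    rw [Real.exp_log hH0] at this
    linarith
  have hT0 : 0 < T := by linarith
  have hlog : Real.log H ≤ Real.log T := Real.log_le_log hH0 hHT
  have hb := h H (H * T) hH2 (by nlinarith)
  have h1 : Real.log (H * T) = Real.log H + Real.log T := Real.log_mul hH0.ne' hT0.ne'
  have h2 : Real.log (Real.log T / Real.log H)
      = Real.log (Real.log T) - Real.log (Real.log H) :=
    Real.log_div (by linarith) (by linarith)
  have h3 : Real.log (Real.log T) ≤ Real.log (Real.log (H * T)) :=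
    Real.log_le_log (by linarith) (by linarith)
  have h4 : Real.log (Real.log (H * T)) ≤ Real.log 2 + Real.log (Real.log T) := by
    rw [← Real.log_mul (by norm_num) (by linarith)]
    exact Real.log_le_log (by linarith) (by linarith)
  have h5 : C / Real.log H ≤ C := div_le_self hC.le hH1
  rw [abs_le] at hb ⊢
  have := Real.log_pos one_lt_two
  constructor <;> linarith [hb.1, hb.2]

lemma exp_le_one_add_two_mul {x : ℝ} (h0 : 0 ≤ x) (h1 : x ≤ 1) : Real.exp x ≤ 1 + 2 * x := by
  have := Real.abs_exp_sub_one_sub_id_le (x := x) (by rw [abs_of_nonneg h0]; exact h1)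
  have := (abs_le.1 this).2
  nlinarith

/-- Rankin's trick costs only a bounded factor for primes up to `z` with exponent `1 / log z`. -/
lemma sum_rankin : ∃ C : ℝ, 0 < C ∧ ∀ z : ℝ, 0 < z → 1 ≤ Real.log z →
    ∑ p ∈ primesIoc 1 z, ((p : ℝ) ^ (1 / Real.log z) - 1) / (p : ℝ) ≤ C := by
  obtain ⟨C, hC, h⟩ := mertens_interval
  refine ⟨2 + 2 * C, by positivity, fun z hz hlz => ?_⟩
  have hz1 : 1 ≤ z := by
    by_contra hh
    have := Real.log_nonpos hz.le (by linarith)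
    linarith
  have hb := (abs_le.1 (h 1 z le_rfl hz1)).2
  rw [Real.log_one, sub_zero] at hb
  calc _ ≤ ∑ p ∈ primesIoc 1 z, 2 / Real.log z * (Real.log p / p) := by
        refine Finset.sum_le_sum fun p hp => ?_
        obtain ⟨hpp, hp1, hpz⟩ := mem_primesIoc.1 hp
        have hp0 : (0 : ℝ) < p := by linarith
        have hlp : Real.log p ≤ Real.log z := Real.log_le_log hp0 hpz
        have e : (p : ℝ) ^ (1 / Real.log z) = Real.exp (Real.log p / Real.log z) := by
          rw [Real.rpow_def_of_pos hp0]; congr 1; ring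
        have := exp_le_one_add_two_mul (x := Real.log p / Real.log z)
          (div_nonneg (Real.log_nonneg hp1.le) (by linarith)) ((div_le_one (by linarith)).2 hlp)
        rw [e, show 2 / Real.log z * (Real.log p / p) = (2 * (Real.log p / Real.log z)) / p by ring]
        gcongr
        linarith
    _ = 2 / Real.log z * ∑ p ∈ primesIoc 1 z, Real.log p / p := by rw [Finset.mul_sum]
    _ ≤ 2 / Real.log z * (Real.log z + C) := by
        refine mul_le_mul_of_nonneg_left (by linarith) (by positivity)
    _ = 2 + 2 * C * (1 / Real.log z) := by field_simp
    _ ≤ _ := by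
        have : 1 / Real.log z ≤ 1 := (div_le_one (by linarith)).2 hlz
        nlinarith

lemma prod_one_add_le_exp {S : Finset ℕ} {g : ℕ → ℝ} (hg : ∀ p ∈ S, 0 ≤ 1 + g p) :
    ∏ p ∈ S, (1 + g p) ≤ Real.exp (∑ p ∈ S, g p) := by
  rw [Real.exp_sum]
  refine Finset.prod_le_prod hg fun p _ => ?_
  rw [add_comm]
  exact Real.add_one_le_exp _

lemma sum_inv_mul_succ_le (S : Finset ℕ) (hS : ∀ p ∈ S, 1 ≤ p) :
    ∑ p ∈ S, 1 / ((p : ℝ) * (p + 1)) ≤ 1 := by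
  have key : ∀ N : ℕ, ∑ n ∈ Finset.Icc 1 N, 1 / ((n : ℝ) * (n + 1)) = 1 - 1 / ((N : ℝ) + 1) := by
    intro N
    induction N with
    | zero => simp
    | succ N ih =>
      rw [Finset.sum_Icc_succ_top (by omega), ih]
      push_cast
      field_simp
      ring
  calc _ ≤ ∑ n ∈ Finset.Icc 1 (S.sup id), 1 / ((n : ℝ) * (n + 1)) := by
        refine Finset.sum_le_sum_of_subset_of_nonneg (fun p hp => ?_) fun _ _ _ => by positivity
        exact Finset.mem_Icc.2 ⟨hS p hp, Finset.le_sup (f := id) hp⟩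
    _ ≤ 1 := by
      rw [key]
      have : (0 : ℝ) ≤ 1 / (((S.sup id : ℕ) : ℝ) + 1) := by positivity
      linarith

/-- The weighted number of products of large primes that fall in `(x, X]`. -/
lemma sum_products_le : ∃ C : ℝ, 0 < C ∧ ∀ (v x X : ℝ) (B : Finset ℕ), 0 < v → v ≤ 1 →
    1 < x → x ≤ X → (∀ p ∈ B, Nat.Prime p) →
    ∑ D ∈ B.powerset.filter (fun D : Finset ℕ => x < ∏ p ∈ D, (p : ℝ) ∧ ∏ p ∈ D, (p : ℝ) ≤ X),
        ∏ p ∈ D, v / (p : ℝ) ≤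
      (Real.log X - Real.log x + C) / Real.log x * ∏ p ∈ B, (1 + v / (p : ℝ)) := by
  obtain ⟨C, hC, h⟩ := mertens_interval
  refine ⟨C, hC, fun v x X B hv hv1 hx hxX hB => ?_⟩
  set w : Finset ℕ → ℝ := fun D => ∏ p ∈ D, v / (p : ℝ) with hw
  have hw0 : ∀ D, 0 ≤ w D := fun D => Finset.prod_nonneg fun p _ => by positivity
  have hlx : 0 < Real.log x := Real.log_pos hx
  have hlX : Real.log x ≤ Real.log X := Real.log_le_log (by linarith) hxX
  have hprod : ∀ D ⊆ B, (0 : ℝ) < ∏ p ∈ D, (p : ℝ) := fun D hD =>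
    Finset.prod_pos fun p hp => by exact_mod_cast (hB p (hD hp)).pos
  set Q : Finset (Finset ℕ) :=
    B.powerset.filter (fun D : Finset ℕ => x < ∏ p ∈ D, (p : ℝ) ∧ ∏ p ∈ D, (p : ℝ) ≤ X) with hQ
  -- Multiply by `log x ≤ ∑ q ∈ D, log q`, remove `q` from `D`, and sum over `q` first: by Mertens'
  -- theorem the sum of `log q / q` over the admissible `q` is at most `log (X / x) + O(1)`.
  have s1 : ∀ D ∈ Q, Real.log x * w D ≤
      ∑ q ∈ B, if q ∈ D then Real.log q * w D else 0 := by
    intro D hD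
    obtain ⟨hDB, hxD, hDX⟩ := Finset.mem_filter.1 hD
    have hDB := Finset.mem_powerset.1 hDB
    rw [← Finset.sum_filter, ← Finset.sum_mul, Finset.filter_mem_eq_inter,
      Finset.inter_eq_right.2 hDB, ← Real.log_prod]
    · exact mul_le_mul_of_nonneg_right (Real.log_le_log (by linarith) hxD.le) (hw0 D)
    · intro p hp
      exact_mod_cast (hB p (hDB hp)).ne_zero
  have s2 : ∀ q ∈ B, ∑ D ∈ Q, (if q ∈ D then Real.log q * w D else 0) ≤
      ∑ D ∈ B.powerset, if x < q * ∏ p ∈ D, (p : ℝ) ∧ q * ∏ p ∈ D, (p : ℝ) ≤ X then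
        v * (Real.log q / q) * w D else 0 := by
    intro q hq
    have hq0 : (0 : ℝ) < q := by exact_mod_cast (hB q hq).pos
    have hq1 : (1 : ℝ) ≤ q := by exact_mod_cast (hB q hq).one_le
    rw [← Finset.sum_filter, ← Finset.sum_filter]
    have e : ∑ D ∈ Q.filter (fun D => q ∈ D), Real.log q * w D =
        ∑ D ∈ (Q.filter (fun D => q ∈ D)).image (fun D => D.erase q),
          v * (Real.log q / q) * w D := by
      rw [Finset.sum_image]
      · refine Finset.sum_congr rfl fun D hD => ?_
        have hqD := (Finset.mem_filter.1 hD).2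
        have : w D = v / q * w (D.erase q) := by
          rw [hw]; exact (Finset.mul_prod_erase D (fun p : ℕ => v / (p : ℝ)) hqD).symm
        rw [this]; ring
      · intro D hD D' hD' hE
        have h1 := (Finset.mem_filter.1 hD).2
        have h2 := (Finset.mem_filter.1 hD').2
        rw [← Finset.insert_erase h1, ← Finset.insert_erase h2]
        exact congrArg _ hE
    rw [e]
    refine Finset.sum_le_sum_of_subset_of_nonneg ?_ fun D _ _ =>
      mul_nonneg (mul_nonneg hv.le (div_nonneg (Real.log_nonneg hq1) hq0.le)) (hw0 D)
    intro D' hD'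
    obtain ⟨D, hD, rfl⟩ := Finset.mem_image.1 hD'
    obtain ⟨hDQ, hqD⟩ := Finset.mem_filter.1 hD
    obtain ⟨hDB, hxD, hDX⟩ := Finset.mem_filter.1 hDQ
    have hDB := Finset.mem_powerset.1 hDB
    rw [← Finset.mul_prod_erase D (fun p : ℕ => (p : ℝ)) hqD] at hxD hDX
    exact Finset.mem_filter.2 ⟨Finset.mem_powerset.2 ((Finset.erase_subset _ _).trans hDB),
      hxD, hDX⟩
  have s3 : ∀ D ∈ B.powerset, ∑ q ∈ B,
      (if x < q * ∏ p ∈ D, (p : ℝ) ∧ q * ∏ p ∈ D, (p : ℝ) ≤ X then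
        v * (Real.log q / q) * w D else 0) ≤ (Real.log X - Real.log x + C) * w D := by
    intro D hD
    have hP := hprod D (Finset.mem_powerset.1 hD)
    set P := ∏ p ∈ D, (p : ℝ)
    rw [← Finset.sum_filter, ← Finset.sum_mul]
    refine mul_le_mul_of_nonneg_right ?_ (hw0 D)
    rcases lt_or_ge (X / P) 1 with hlt | hge
    · rw [Finset.filter_false_of_mem]
      · simp; linarith
      · rintro q hq ⟨_, hh⟩
        have hq1 : (1 : ℝ) ≤ q := by exact_mod_cast (hB q hq).one_le
        rw [← le_div_iff₀ hP] at hh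
        linarith
    · have hb1 : max 1 (x / P) ≤ X / P := max_le hge (by gcongr)
      have hb := (abs_le.1 (h (max 1 (x / P)) (X / P) (le_max_left _ _) hb1)).2
      have hlog : Real.log (x / P) ≤ Real.log (max 1 (x / P)) :=
        Real.log_le_log (by positivity) (le_max_right _ _)
      rw [Real.log_div (by linarith) hP.ne'] at hb
      rw [Real.log_div (by linarith) hP.ne'] at hlog
      calc _ ≤ ∑ q ∈ B.filter (fun q : ℕ => x < q * P ∧ q * P ≤ X), Real.log q / q := by
            refine Finset.sum_le_sum fun q hq => ?_
            have hq1 : (1 : ℝ) ≤ q := by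
              exact_mod_cast (hB q (Finset.mem_filter.1 hq).1).one_le
            exact mul_le_of_le_one_left
              (div_nonneg (Real.log_nonneg hq1) (by positivity)) hv1
        _ ≤ ∑ q ∈ primesIoc (max 1 (x / P)) (X / P), Real.log q / q := by
            refine Finset.sum_le_sum_of_subset_of_nonneg ?_ ?_
            · intro q hq
              obtain ⟨hqB, h1, h2⟩ := Finset.mem_filter.1 hq
              refine mem_primesIoc.2 ⟨hB q hqB, max_lt ?_ ?_, ?_⟩
              · exact_mod_cast (hB q hqB).one_lt
              · rwa [div_lt_iff₀ hP]
              · rwa [le_div_iff₀ hP]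
            · intro q hq _
              have := (mem_primesIoc.1 hq).1.one_le
              exact div_nonneg (Real.log_nonneg (by exact_mod_cast this)) (by positivity)
        _ ≤ _ := by linarith
  have total : Real.log x * ∑ D ∈ Q, w D ≤
      (Real.log X - Real.log x + C) * ∏ p ∈ B, (1 + v / (p : ℝ)) := by
    calc _ = ∑ D ∈ Q, Real.log x * w D := by rw [Finset.mul_sum]
      _ ≤ _ := Finset.sum_le_sum s1
      _ = _ := Finset.sum_comm
      _ ≤ _ := Finset.sum_le_sum s2
      _ = _ := Finset.sum_comm
      _ ≤ _ := Finset.sum_le_sum s3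
      _ = _ := by rw [← Finset.mul_sum, Finset.prod_one_add]
  rw [div_mul_eq_mul_div, le_div_iff₀ hlx, mul_comm]
  exact total

/-! ### A majorant for the divisor event -/

/-- The majorant of the event `HasDiv T X W`, according to whether the divisor has a large
smooth part, `W` has many large primes, or `W` has few large primes. -/
lemma ind_hasDiv_le {T X h l k s v : ℝ} {A B W : Finset ℕ} (hW : W ⊆ A ∪ B)
    (hp : ∀ p ∈ W, Nat.Prime p) (hd : Disjoint A B) (hh : 0 < h) (hs : 1 ≤ s) (hv0 : 0 < v)
    (hv1 : v ≤ 1) :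
    ind (HasDiv T X W) ≤ Real.exp (-l) * ∏ p ∈ W ∩ A, (p : ℝ) ^ (1 / h)
      + s ^ (-k) * ∏ _p ∈ W ∩ B, s
      + v ^ (-k) * ∑ D ∈ B.powerset.filter (fun D : Finset ℕ =>
          T * Real.exp (-(l * h)) < ∏ p ∈ D, (p : ℝ) ∧ ∏ p ∈ D, (p : ℝ) ≤ X),
          ind (D ⊆ W ∩ B) * ∏ _p ∈ W ∩ B, v := by
  have t1 : 0 ≤ Real.exp (-l) * ∏ p ∈ W ∩ A, (p : ℝ) ^ (1 / h) :=
    mul_nonneg (Real.exp_pos _).le (Finset.prod_nonneg fun p _ => by positivity)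
  have t2 : 0 ≤ s ^ (-k) * ∏ _p ∈ W ∩ B, s :=
    mul_nonneg (by positivity) (Finset.prod_nonneg fun p _ => by positivity)
  have t30 : ∀ D : Finset ℕ, 0 ≤ ind (D ⊆ W ∩ B) * ∏ _p ∈ W ∩ B, v := fun D =>
    mul_nonneg (ind_nonneg _) (Finset.prod_nonneg fun p _ => by positivity)
  have t3 := mul_nonneg (Real.rpow_nonneg hv0.le (-k)) (Finset.sum_nonneg fun D
    (_ : D ∈ B.powerset.filter (fun D : Finset ℕ =>
          T * Real.exp (-(l * h)) < ∏ p ∈ D, (p : ℝ) ∧ ∏ p ∈ D, (p : ℝ) ≤ X)) => t30 D)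
  refine ind_le (by linarith) ?_
  rintro ⟨D, hDW, hTD, hDX⟩
  have hp1 : ∀ p ∈ W, (1 : ℝ) ≤ p := fun p h => by exact_mod_cast (hp p h).one_le
  rcases le_or_gt k ((W ∩ B).card : ℝ) with hk | hk
  · have : 1 ≤ s ^ (-k) * ∏ _p ∈ W ∩ B, s := by
      rw [Finset.prod_const, ← Real.rpow_natCast, ← Real.rpow_add (by linarith)]
      exact Real.one_le_rpow hs (by linarith)
    linarith
  rcases lt_or_ge (Real.exp (l * h)) (∏ p ∈ D ∩ A, (p : ℝ)) with hA | hA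
  · have : 1 ≤ Real.exp (-l) * ∏ p ∈ W ∩ A, (p : ℝ) ^ (1 / h) := by
      have h1 : ∏ p ∈ D ∩ A, (p : ℝ) ^ (1 / h) ≤ ∏ p ∈ W ∩ A, (p : ℝ) ^ (1 / h) := by
        refine Finset.prod_le_prod_of_subset_of_one_le
          (Finset.inter_subset_inter_right hDW) (fun _ _ => by positivity) fun p hpW _ => ?_
        exact Real.one_le_rpow (hp1 p (Finset.mem_inter.1 hpW).1) (by positivity)
      rw [Real.finsetProd_rpow _ _ fun p _ => by positivity] at h1
      have h2 : Real.exp l ≤ (∏ p ∈ D ∩ A, (p : ℝ)) ^ (1 / h) := by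
        calc Real.exp l = (Real.exp (l * h)) ^ (1 / h) := by
              rw [← Real.exp_mul]; congr 1; field_simp
          _ ≤ _ := Real.rpow_le_rpow (Real.exp_pos _).le hA.le (by positivity)
      rw [Real.exp_neg, inv_mul_eq_div, one_le_div (Real.exp_pos _)]
      exact h2.trans h1
    linarith
  · have hsplit : (∏ p ∈ D ∩ A, (p : ℝ)) * ∏ p ∈ D ∩ B, (p : ℝ) = ∏ p ∈ D, (p : ℝ) := by
      rw [← Finset.prod_union, ← Finset.inter_union_distrib_left,
        Finset.inter_eq_left.2 (hDW.trans hW)]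
      exact (hd.mono Finset.inter_subset_right Finset.inter_subset_right)
    have hone : ∀ E ⊆ W, 1 ≤ ∏ p ∈ E, (p : ℝ) := fun E hE =>
      Finset.one_le_prod fun p hpE => hp1 p (hE hpE)
    have hA1 := hone (D ∩ A) (Finset.inter_subset_left.trans hDW)
    have hB1 := hone (D ∩ B) (Finset.inter_subset_left.trans hDW)
    have hmem : D ∩ B ∈ B.powerset.filter (fun D : Finset ℕ =>
          T * Real.exp (-(l * h)) < ∏ p ∈ D, (p : ℝ) ∧ ∏ p ∈ D, (p : ℝ) ≤ X) := by
      refine Finset.mem_filter.2 ⟨Finset.mem_powerset.2 Finset.inter_subset_right, ?_, ?_⟩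
      · rw [Real.exp_neg, ← div_eq_mul_inv, div_lt_iff₀ (Real.exp_pos _)]
        nlinarith
      · nlinarith
    have h1 := Finset.single_le_sum (fun D _ => t30 D) hmem
    have h2 : 1 ≤ v ^ (-k) * (ind (D ∩ B ⊆ W ∩ B) * ∏ _p ∈ W ∩ B, v) := by
      rw [ind_of (Finset.inter_subset_inter_right hDW), one_mul, Finset.prod_const,
        ← Real.rpow_natCast, ← Real.rpow_add hv0]
      exact Real.one_le_rpow_of_pos_of_le_one_of_nonpos hv0 hv1 (by linarith)
    have h3 := mul_le_mul_of_nonneg_left h1 (Real.rpow_nonneg hv0.le (-k))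
    linarith

/-- The probability weight `1 / (p + 1)`, that of `p` dividing a random squarefree number. -/
noncomputable def wsq (p : ℕ) : ℝ := 1 / ((p : ℝ) + 1)

lemma wsq_nonneg (p : ℕ) : 0 ≤ wsq p := by unfold wsq; positivity
lemma wsq_le_one (p : ℕ) : wsq p ≤ 1 := by
  unfold wsq
  rw [div_le_one (by positivity)]
  have : (0 : ℝ) ≤ p := by positivity
  linarith
lemma wsq_le {p : ℕ} (hp : Nat.Prime p) : wsq p ≤ 1 / p := by
  unfold wsq
  have : (0 : ℝ) < p := by exact_mod_cast hp.pos
  gcongr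
  linarith

lemma Ex_wsq_prod_le {S : Finset ℕ} (hS : ∀ p ∈ S, Nat.Prime p) {g : ℕ → ℝ}
    (hg : ∀ p ∈ S, 1 ≤ g p) :
    Ex wsq S (fun W => ∏ p ∈ W, g p) ≤ Real.exp (∑ p ∈ S, (g p - 1) / p) := by
  rw [Ex_prod]
  refine (prod_one_add_le_exp fun p hp => ?_).trans (Real.exp_le_exp.2 ?_)
  · have := mul_nonneg (wsq_nonneg p) (sub_nonneg.2 (hg p hp)); linarith
  · refine Finset.sum_le_sum fun p hp => ?_
    have := mul_le_mul_of_nonneg_right (wsq_le (hS p hp)) (sub_nonneg.2 (hg p hp))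
    calc _ ≤ _ := this
      _ = _ := by ring

/-- The average of `v ^ #W` over the random sets `W` that contain `D`, as a product over primes:
each prime of `D` contributes at most `v / p`, up to the factor `1 - (1 - v) / (p + 1)` that comes
from every prime of `B`. -/
lemma Ex_wsq_subset_le {B D : Finset ℕ} (hB : ∀ p ∈ B, Nat.Prime p) (hD : D ⊆ B) {v : ℝ}
    (hv0 : 0 < v) :
    Ex wsq B (fun W => ind (D ⊆ W) * ∏ _p ∈ W, v) ≤
      (∏ p ∈ D, v / (p : ℝ)) * Real.exp (-(1 - v) * ∑ p ∈ B, wsq p) := by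
  have e : Ex wsq B (fun W => ind (D ⊆ W) * ∏ _p ∈ W, v) =
      Ex wsq B (fun W => ∏ p ∈ B, if p ∈ W then v else (if p ∈ D then 0 else 1)) := by
    refine Ex_congr fun W hW => ?_
    by_cases hDW : D ⊆ W
    · rw [ind_of hDW, one_mul, ← Finset.prod_sdiff hW]
      rw [Finset.prod_eq_one (s := B \ W), one_mul]
      · exact Finset.prod_congr rfl fun p hp => (if_pos hp).symm
      · intro p hp
        have := (Finset.mem_sdiff.1 hp).2
        rw [if_neg this, if_neg fun h => this (hDW h)]
    · rw [ind_of_not hDW, zero_mul]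
      obtain ⟨p, hpD, hpW⟩ := Finset.not_subset.1 hDW
      refine (Finset.prod_eq_zero (hD hpD) ?_).symm
      rw [if_neg hpW, if_pos hpD]
  rw [e, Ex_prod_ite]
  have hle : ∀ p ∈ B, wsq p * v + (1 - wsq p) * (if p ∈ D then 0 else 1) ≤
      (if p ∈ D then v / (p : ℝ) else 1) * (1 + -(1 - v) * wsq p) := by
    intro p hp
    have hp0 : (0 : ℝ) < p := by exact_mod_cast (hB p hp).pos
    split_ifs
    · unfold wsq
      have : v / (p : ℝ) * (1 + -(1 - v) * (1 / ((p : ℝ) + 1))) - (1 / ((p : ℝ) + 1) * v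
        + (1 - 1 / ((p : ℝ) + 1)) * 0) = v * v / (p * (p + 1)) := by
        field_simp
        ring
      have h2 : 0 ≤ v * v / ((p : ℝ) * (p + 1)) := by positivity
      linarith
    · linarith
  have hnn : ∀ p ∈ B, 0 ≤ 1 + -(1 - v) * wsq p := fun p _ => by
    nlinarith [wsq_nonneg p, wsq_le_one p]
  calc _ ≤ ∏ p ∈ B, ((if p ∈ D then v / (p : ℝ) else 1) * (1 + -(1 - v) * wsq p)) := by
        refine Finset.prod_le_prod (fun p _ => ?_) hle
        have := wsq_nonneg p
        have := sub_nonneg.2 (wsq_le_one p)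
        split_ifs <;> positivity
    _ = (∏ p ∈ D, v / (p : ℝ)) * ∏ p ∈ B, (1 + -(1 - v) * wsq p) := by
        rw [Finset.prod_mul_distrib, Finset.prod_ite_mem, Finset.inter_eq_right.2 hD]
    _ ≤ _ := by
        refine mul_le_mul_of_nonneg_left ?_ (Finset.prod_nonneg fun p _ => by positivity)
        rw [Finset.mul_sum]
        exact prod_one_add_le_exp hnn

/-! ### The upper bound for the probability of a divisor in a block -/

lemma deltaEFT_mul_log_two :
    deltaEFT * Real.log 2 = Real.log 2 - 1 - Real.log (Real.log 2) := by
  unfold deltaEFT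
  have := Real.log_pos one_lt_two
  field_simp
  ring

lemma deltaEFT_lt_one : deltaEFT < 1 := by
  have h1 := Real.log_two_gt_d9
  have h2 : -1 < Real.log (Real.log 2) := by
    rw [Real.lt_log_iff_exp_lt (by linarith)]
    have := Real.exp_neg_one_lt_d9
    linarith
  unfold deltaEFT
  have : 0 < (1 + Real.log (Real.log 2)) / Real.log 2 := div_pos (by linarith) (by linarith)
  linarith

lemma aux_mul_le {a x y c : ℝ} (ha0 : 0 ≤ a) (ha1 : a ≤ 1) (h : x - y ≤ c) (hc : 0 ≤ c) :
    a * x ≤ a * y + c := by nlinarith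

lemma aux_ratio {C l h g : ℝ} (hC : 0 < C) (hl : 0 ≤ l) (hh : 1 ≤ h) (hg : 1 / 2 ≤ g) :
    h + l * h + C ≤ 2 * (1 + C) * (l + 1) * h * g := by
  have f3 : 0 ≤ (1 + C) * (l + 1) * h := by positivity
  have f4 : (l + 1) * h + C ≤ (1 + C) * (l + 1) * h := by
    nlinarith [mul_nonneg hC.le (mul_nonneg hl (by linarith : 0 ≤ h))]
  nlinarith

lemma aux_le_mul {a b l : ℝ} (ha : 0 ≤ a) (hb : 0 ≤ b) (hl : 0 ≤ l) :
    a * b ≤ a * (l + 1) * b := by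
  nlinarith [mul_nonneg (mul_nonneg ha hb) hl]

lemma aux_exp_le {l : ℝ} : l * Real.exp (-l) ≤ 1 / 2 := by
  have h2 := Real.add_one_le_exp (l - 1)
  have h3 : 2 * Real.exp (l - 1) ≤ Real.exp l := by
    have : Real.exp l = Real.exp 1 * Real.exp (l - 1) := by rw [← Real.exp_add]; congr 1; ring
    rw [this]
    have := Real.exp_one_gt_d9
    nlinarith [Real.exp_pos (l - 1)]
  rw [Real.exp_neg, ← div_eq_mul_inv, div_le_iff₀ (Real.exp_pos _)]
  linarith

lemma primesIoc_union {H X : ℝ} (h1 : 1 ≤ H) (h2 : H ≤ X) :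
    primesIoc 1 X = primesIoc 1 H ∪ primesIoc H X := by
  ext p
  simp only [Finset.mem_union, mem_primesIoc]
  constructor
  · rintro ⟨h1, h2, h3⟩
    rcases le_or_gt (p : ℝ) H with h4 | h4
    · exact Or.inl ⟨h1, h2, h4⟩
    · exact Or.inr ⟨h1, h4, h3⟩
  · rintro (⟨h1, h2, h3⟩ | ⟨h1, h2, h3⟩)
    · exact ⟨h1, h2, by linarith⟩
    · exact ⟨h1, by linarith, h3⟩

lemma id_s {l2 s δ : ℝ} (hl2 : 0 < l2) (hs : s * l2 = 1)
    (hδ : δ * l2 = l2 - 1 - Real.log l2) : s - 1 - -Real.log l2 / l2 = -δ := by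
  field_simp
  linarith

lemma id_v {l2 s δ : ℝ} (hl2 : 0 < l2) (hs : s * l2 = 1)
    (hδ : δ * l2 = l2 - 1 - Real.log l2) :
    -(-Real.log l2 - l2) / l2 + s / 2 - (1 - s / 2) - 1 = -δ := by
  field_simp
  linarith

set_option maxHeartbeats 2000000 in
/-- The probability that a random squarefree number has a divisor in `(T, H T]` is at most about
`(log H / log T) ^ deltaEFT`. -/
lemma upper_bound {δ₂ : ℝ} (hδ : δ₂ < deltaEFT) : ∃ C : ℝ, 0 < C ∧
    ∀ (T H : ℝ) (S : Finset ℕ), (∀ p ∈ S, Nat.Prime p) → 0 < H → 1 ≤ Real.log H → H ≤ T →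
      Ex wsq S (fun W => ind (HasDiv T (H * T) W)) ≤ C * (Real.log H / Real.log T) ^ δ₂ := by
  obtain ⟨C₁, hC₁, hsum⟩ := sum_inv_long
  obtain ⟨C₂, hC₂, hrankin⟩ := sum_rankin
  obtain ⟨C₃, hC₃, hprods⟩ := sum_products_le
  have hl2 : 0 < Real.log 2 := Real.log_pos one_lt_two
  have hl2a := Real.log_two_gt_d9
  have hl2b := Real.log_two_lt_d9
  -- `s` minimises `s - 1 - log s / log 2`, and `v = s / 2` minimises `2 v - log v / log 2 - 2`.
  -- These are the exponents of the two contributions below, and both minima equal `-deltaEFT`.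
  set s : ℝ := 1 / Real.log 2 with hs
  set v : ℝ := s / 2 with hv
  have hs1 : 1 ≤ s := by rw [hs, le_div_iff₀ hl2]; linarith
  have hs2 : s ≤ 2 := by rw [hs, div_le_iff₀ hl2]; linarith
  have hlogs : Real.log s = - Real.log (Real.log 2) := by rw [hs, one_div, Real.log_inv]
  have hlogv : Real.log v = Real.log s - Real.log 2 := Real.log_div (by linarith) (by norm_num)
  have hv0 : 0 < v := by linarith
  have hv1 : v ≤ 1 := by linarith
  have hδl := deltaEFT_mul_log_two
  have hsl : s * Real.log 2 = 1 := by rw [hs]; field_simp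
  have id1 : s - 1 - Real.log s / Real.log 2 = - deltaEFT := by
    rw [hlogs]
    exact id_s hl2 hsl hδl
  have id2 : - Real.log v / Real.log 2 + v - (1 - v) - 1 = - deltaEFT := by
    rw [hlogv, hlogs, hv]
    exact id_v hl2 hsl hδl
  set τ := deltaEFT - δ₂ with hτ
  have hτ0 : 0 < τ := by linarith
  set K : ℝ := Real.exp C₂ + Real.exp C₁ + 2 * (1 + C₃) * Real.exp (2 * C₁ + 1) with hK
  have hK0 : 0 < K := by positivity
  refine ⟨K * (1 + 1 / τ), by positivity, fun T H S hS hH0 hlH hHT => ?_⟩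
  set h := Real.log H with hh
  set L := Real.log T with hL
  have hT0 : 0 < T := by linarith
  have hhL : h ≤ L := Real.log_le_log hH0 hHT
  have hh0 : 0 < h := by linarith
  have hL0 : 0 < L := by linarith
  have hH1 : 1 ≤ H := by
    by_contra hc
    have := Real.log_nonpos hH0.le (by linarith)
    linarith
  set l := Real.log (L / h) with hl
  have hl0 : 0 ≤ l := Real.log_nonneg ((one_le_div hh0).2 hhL)
  have hu : h / L = Real.exp (-l) := by
    rw [hl, ← Real.log_inv, Real.exp_log (by positivity), inv_div]
  have hX : Real.log (H * T) = h + L := Real.log_mul hH0.ne' hT0.ne'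
  set A := primesIoc 1 H with hA
  set B := primesIoc H (H * T) with hB
  have hHX : H ≤ H * T := le_mul_of_one_le_right hH0.le (by linarith)
  have hAB : primesIoc 1 (H * T) = A ∪ B := primesIoc_union hH1 hHX
  have hdisj : Disjoint A B := by
    rw [Finset.disjoint_left]
    intro p h1 h2
    have h1 := (mem_primesIoc.1 h1).2.2
    have h2 := (mem_primesIoc.1 h2).2.1
    linarith
  have hBp : ∀ p ∈ B, Nat.Prime p := fun p hp => (mem_primesIoc.1 hp).1
  have hAp : ∀ p ∈ A, Nat.Prime p := fun p hp => (mem_primesIoc.1 hp).1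
  have hsumB := abs_le.1 (hsum T H hH0 hlH hHT)
  rw [← hB, ← hL, ← hh, ← hl] at hsumB
  set σ := ∑ p ∈ B, 1 / (p : ℝ) with hσ
  have hwsum : l - C₁ - 1 ≤ ∑ p ∈ B, wsq p := by
    have h1 : σ - ∑ p ∈ B, wsq p = ∑ p ∈ B, 1 / ((p : ℝ) * (p + 1)) := by
      rw [hσ, ← Finset.sum_sub_distrib]
      refine Finset.sum_congr rfl fun p hp => ?_
      have hp0 : (0 : ℝ) < p := by exact_mod_cast (hBp p hp).pos
      unfold wsq
      field_simp
      ring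
    have h2 := sum_inv_mul_succ_le B fun p hp => (hBp p hp).one_le
    linarith
  set k := l / Real.log 2 with hk
  set x := T * Real.exp (-(l * h)) with hx
  set Q := B.powerset.filter (fun D : Finset ℕ =>
          x < ∏ p ∈ D, (p : ℝ) ∧ ∏ p ∈ D, (p : ℝ) ≤ H * T) with hQ
  have hlogx : Real.log x = L - l * h := by
    rw [hx, Real.log_mul hT0.ne' (Real.exp_ne_zero _), Real.log_exp]; ring
  -- `l * exp (-l)` is at most `1 / 2`, so `log x` is at least half of `log T`
  have hlh : l * h ≤ L / 2 := by
    have h1 : l * Real.exp (-l) ≤ 1 / 2 := aux_exp_le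
    rw [← hu] at h1
    have : l * (h / L) = l * h / L := by ring
    rw [this, div_le_iff₀ hL0] at h1
    linarith
  have hx1 : 1 < x := by
    have : 0 < x := by positivity
    rw [← Real.log_pos_iff this.le, hlogx]
    linarith
  have hxX : x ≤ H * T := by
    have : Real.exp (-(l * h)) ≤ 1 := Real.exp_le_one_iff.2 (neg_nonpos.2 (mul_nonneg hl0 hh0.le))
    calc x ≤ T * 1 := mul_le_mul_of_nonneg_left this hT0.le
      _ ≤ H * T := by rw [mul_comm]; exact mul_le_mul_of_nonneg_right hH1 hT0.le
  have hw0 := wsq_nonneg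
  have hw1 := wsq_le_one
  -- the cases of a large part of small primes, of more than `k` and of at most `k` large primes
  have main : Ex wsq S (fun W => ind (HasDiv T (H * T) W)) ≤
      Real.exp (-l) * Ex wsq A (fun W => ∏ p ∈ W, (p : ℝ) ^ (1 / h))
      + s ^ (-k) * Ex wsq B (fun W => ∏ _p ∈ W, s)
      + v ^ (-k) * ∑ D ∈ Q, Ex wsq B (fun W => ind (D ⊆ W) * ∏ _p ∈ W, v) := by
    refine (Ex_hasDiv_le hw0 hw1 hS).trans ?_
    rw [hAB]
    refine (Ex_mono hw0 hw1 fun W hW => ind_hasDiv_le (k := k) (l := l) hW (fun p hp => ?_) hdisj hh0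
      hs1 hv0 hv1).trans (le_of_eq ?_)
    · rcases Finset.mem_union.1 (hW hp) with h1 | h1
      · exact hAp p h1
      · exact hBp p h1
    · rw [Ex_add, Ex_add, Ex_const_mul, Ex_const_mul, Ex_const_mul, Ex_sum]
      rw [Ex_inter Finset.subset_union_left (fun W => ∏ p ∈ W, (p : ℝ) ^ (1 / h)),
        Ex_inter Finset.subset_union_right (fun W => ∏ _p ∈ W, s)]
      congr 2
      refine Finset.sum_congr rfl fun D _ => ?_
      exact Ex_inter Finset.subset_union_right (fun W => ind (D ⊆ W) * ∏ _p ∈ W, v)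
  have b1 : Ex wsq A (fun W => ∏ p ∈ W, (p : ℝ) ^ (1 / h)) ≤ Real.exp C₂ := by
    refine (Ex_wsq_prod_le hAp fun p hp => ?_).trans (Real.exp_le_exp.2 (hrankin H hH0 hlH))
    exact Real.one_le_rpow (mem_primesIoc.1 hp).2.1.le (by positivity)
  have b2 : Ex wsq B (fun W => ∏ _p ∈ W, s) ≤ Real.exp ((s - 1) * l + C₁) := by
    refine (Ex_wsq_prod_le hBp fun p hp => hs1).trans (Real.exp_le_exp.2 ?_)
    have : ∑ p ∈ B, (s - 1) / (p : ℝ) = (s - 1) * σ := by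
      rw [hσ, Finset.mul_sum]; exact Finset.sum_congr rfl fun p _ => by ring
    rw [this]
    exact aux_mul_le (by linarith) (by linarith) (by linarith) hC₁.le
  have b3 : ∑ D ∈ Q, Ex wsq B (fun W => ind (D ⊆ W) * ∏ _p ∈ W, v) ≤
      2 * (1 + C₃) * (l + 1) * Real.exp (-l) * Real.exp (v * l + C₁) *
        Real.exp (-(1 - v) * l + C₁ + 1) := by
    calc _ ≤ ∑ D ∈ Q, (∏ p ∈ D, v / (p : ℝ)) * Real.exp (-(1 - v) * ∑ p ∈ B, wsq p) :=
          Finset.sum_le_sum fun D hD => Ex_wsq_subset_le hBp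
            (Finset.mem_powerset.1 (Finset.mem_filter.1 hD).1) hv0
      _ = (∑ D ∈ Q, ∏ p ∈ D, v / (p : ℝ)) * Real.exp (-(1 - v) * ∑ p ∈ B, wsq p) := by
          rw [Finset.sum_mul]
      _ ≤ _ := by
          have e1 : Real.exp (-(1 - v) * ∑ p ∈ B, wsq p) ≤ Real.exp (-(1 - v) * l + C₁ + 1) := by
            refine Real.exp_le_exp.2 ?_
            have := aux_mul_le (a := 1 - v) (x := l) (y := ∑ p ∈ B, wsq p) (c := C₁ + 1)
              (by linarith) (by linarith) (by linarith) (by linarith)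
            linarith
          have e2 : ∏ p ∈ B, (1 + v / (p : ℝ)) ≤ Real.exp (v * l + C₁) := by
            refine (prod_one_add_le_exp fun p _ => by positivity).trans (Real.exp_le_exp.2 ?_)
            have : ∑ p ∈ B, v / (p : ℝ) = v * σ := by
              rw [hσ, Finset.mul_sum]; exact Finset.sum_congr rfl fun p _ => by ring
            rw [this]
            exact aux_mul_le hv0.le hv1 (by linarith) hC₁.le
          have e3 : (Real.log (H * T) - Real.log x + C₃) / Real.log x ≤
              2 * (1 + C₃) * (l + 1) * Real.exp (-l) := by
            rw [hX, hlogx, ← hu, div_le_iff₀ (by linarith)]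
            have f1 : 1 / 2 ≤ (L - l * h) / L := by
              rw [div_le_div_iff₀ (by norm_num) hL0]; linarith
            have f2 : 2 * (1 + C₃) * (l + 1) * (h / L) * (L - l * h) =
              2 * (1 + C₃) * (l + 1) * h * ((L - l * h) / L) := by ring
            rw [f2]
            have := aux_ratio hC₃ hl0 hlH f1
            linarith
          have e4 := hprods v x (H * T) B hv0 hv1 hx1 hxX hBp
          have e5 : 0 ≤ (∏ p ∈ B, (1 + v / (p : ℝ))) :=
            Finset.prod_nonneg fun p _ => by positivity
          calc _ ≤ (2 * (1 + C₃) * (l + 1) * Real.exp (-l) * Real.exp (v * l + C₁)) *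
                Real.exp (-(1 - v) * ∑ p ∈ B, wsq p) := by
                refine mul_le_mul_of_nonneg_right (e4.trans ?_) (Real.exp_pos _).le
                exact mul_le_mul e3 e2 e5 (by positivity)
            _ ≤ _ := mul_le_mul_of_nonneg_left e1 (by positivity)
  have hspow : s ^ (-k) = Real.exp (-(Real.log s / Real.log 2) * l) := by
    rw [Real.rpow_def_of_pos (by linarith)]; congr 1; rw [hk]; ring
  have hvpow : v ^ (-k) = Real.exp (-(Real.log v / Real.log 2) * l) := by
    rw [Real.rpow_def_of_pos hv0]; congr 1; rw [hk]; ring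
  have E := Real.exp_pos (-deltaEFT * l)
  have c1 : Real.exp (-l) * Ex wsq A (fun W => ∏ p ∈ W, (p : ℝ) ^ (1 / h)) ≤
      Real.exp C₂ * (l + 1) * Real.exp (-deltaEFT * l) := by
    have g1 : Real.exp (-l) ≤ Real.exp (-deltaEFT * l) :=
      Real.exp_le_exp.2 (by
        rw [neg_mul]; exact neg_le_neg (mul_le_of_le_one_left hl0 deltaEFT_lt_one.le))
    calc _ ≤ Real.exp (-deltaEFT * l) * Real.exp C₂ :=
          mul_le_mul g1 b1 (Ex_nonneg hw0 hw1 fun W _ => Finset.prod_nonneg fun p _ => by positivity)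
            E.le
      _ ≤ _ := by rw [mul_comm]; exact aux_le_mul (Real.exp_pos C₂).le E.le hl0
  have c2 : s ^ (-k) * Ex wsq B (fun W => ∏ _p ∈ W, s) ≤
      Real.exp C₁ * (l + 1) * Real.exp (-deltaEFT * l) := by
    calc _ ≤ s ^ (-k) * Real.exp ((s - 1) * l + C₁) :=
          mul_le_mul_of_nonneg_left b2 (by positivity)
      _ = Real.exp C₁ * Real.exp (-deltaEFT * l) := by
          rw [hspow, ← Real.exp_add, ← Real.exp_add, ← id1]
          congr 1; ring
      _ ≤ _ := aux_le_mul (Real.exp_pos C₁).le E.le hl0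
  have c3 : v ^ (-k) * ∑ D ∈ Q, Ex wsq B (fun W => ind (D ⊆ W) * ∏ _p ∈ W, v) ≤
      2 * (1 + C₃) * Real.exp (2 * C₁ + 1) * (l + 1) * Real.exp (-deltaEFT * l) := by
    refine (mul_le_mul_of_nonneg_left b3 (by positivity)).trans (le_of_eq ?_)
    have : Real.exp (-(Real.log v / Real.log 2) * l) * (Real.exp (-l) * Real.exp (v * l + C₁) *
        Real.exp (-(1 - v) * l + C₁ + 1)) = Real.exp (2 * C₁ + 1) * Real.exp (-deltaEFT * l) := by
      rw [← Real.exp_add, ← Real.exp_add, ← Real.exp_add, ← Real.exp_add, ← id2]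
      congr 1; ring
    rw [hvpow]
    linear_combination (2 * (1 + C₃) * (l + 1)) * this
  -- the factor `l + 1` is absorbed by the gap `τ` between `δ₂` and `deltaEFT`
  have hfin : (l + 1) * Real.exp (-deltaEFT * l) ≤ (1 + 1 / τ) * (h / L) ^ δ₂ := by
    have g1 : (h / L) ^ δ₂ = Real.exp (τ * l) * Real.exp (-deltaEFT * l) := by
      rw [hu, ← Real.exp_mul, ← Real.exp_add]; congr 1; rw [hτ]; ring
    have g2 : l + 1 ≤ (1 + 1 / τ) * Real.exp (τ * l) := by
      have := Real.add_one_le_exp (τ * l)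
      have hτl : 0 ≤ τ * l := by positivity
      calc l + 1 ≤ (1 + 1 / τ) * (τ * l + 1) := by
            have : (1 + 1 / τ) * (τ * l + 1) = l + 1 + τ * l + 1 / τ := by field_simp; ring
            rw [this]; have : 0 < 1 / τ := by positivity
            linarith
        _ ≤ _ := mul_le_mul_of_nonneg_left this (by positivity)
    rw [g1, ← mul_assoc]
    exact mul_le_mul_of_nonneg_right g2 E.le
  calc _ ≤ _ := main
    _ ≤ K * ((l + 1) * Real.exp (-deltaEFT * l)) := by rw [hK]; linarith
    _ ≤ K * ((1 + 1 / τ) * (h / L) ^ δ₂) := mul_le_mul_of_nonneg_left hfin hK0.le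
    _ = _ := by ring

/-! ### Logarithmic density and squarefree numbers -/

lemma sum_inv_succ_le (N : ℕ) :
    ∑ n ∈ Finset.Icc 1 N, 1 / ((n : ℝ) + 1) ≤ Real.log ((N : ℝ) + 1) := by
  induction N with
  | zero => simp
  | succ N ih =>
    rw [Finset.sum_Icc_succ_top (by omega)]
    push_cast
    have h := Real.one_sub_inv_le_log_of_pos (x := ((N : ℝ) + 1 + 1) / (N + 1)) (by positivity)
    rw [Real.log_div (by positivity) (by positivity), inv_div] at h
    have : 1 - ((N : ℝ) + 1) / (N + 1 + 1) = 1 / (N + 1 + 1) := by field_simp; ring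
    linarith

/-- Partial summation: a reciprocal sum in terms of the counting function. -/
lemma log_sum_eq (P : ℕ → Prop) [DecidablePred P] (N : ℕ) :
    ∑ n ∈ (Finset.Icc 1 N).filter P, 1 / (n : ℝ) =
      (((Finset.Icc 1 N).filter P).card : ℝ) / (N + 1) +
        ∑ n ∈ Finset.Icc 1 N, (((Finset.Icc 1 n).filter P).card : ℝ) / (n * (n + 1)) := by
  induction N with
  | zero => simp
  | succ N ih =>
    have e : ∀ n : ℕ, Finset.Icc 1 (n + 1) = insert (n + 1) (Finset.Icc 1 n) := fun n => by
      ext m; simp only [Finset.mem_Icc, Finset.mem_insert]; omega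
    rw [Finset.sum_Icc_succ_top (by omega), e N, Finset.filter_insert]
    have hnot : N + 1 ∉ (Finset.Icc 1 N).filter P := by simp
    split_ifs
    · rw [Finset.sum_insert hnot, ih, Finset.card_insert_of_notMem hnot]
      push_cast
      field_simp
      ring
    · rw [ih]
      push_cast
      field_simp
      ring

/-- The complement of a set of density one is small on the logarithmic scale: the sum of its
reciprocals up to `N` is at most `ε log N + O(1)`. -/
lemma log_sum_compl_le {M : Set ℕ} (hM : HasDensity M 1) {ε : ℝ} (hε : 0 < ε) :
    ∃ C : ℝ, ∀ N : ℕ, ∑ n ∈ (Finset.Icc 1 N).filter (fun n => n ∉ M), 1 / (n : ℝ) ≤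
      ε * Real.log (N + 1) + C := by
  have hev : ∀ᶠ N : ℕ in atTop, 1 - ε < (countIn M N : ℝ) / N :=
    hM.eventually_const_lt (by linarith)
  obtain ⟨N₀, hN₀⟩ := eventually_atTop.1 hev
  have hcard : ∀ n : ℕ, (((Finset.Icc 1 n).filter (fun m => m ∉ M)).card : ℝ) =
      n - countIn M n := by
    intro n
    have := Finset.card_filter_add_card_filter_not (s := Finset.Icc 1 n) (fun m => m ∈ M)
    rw [Nat.card_Icc, Nat.add_sub_cancel] at this
    unfold countIn
    rw [eq_sub_iff_add_eq, add_comm]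
    exact_mod_cast this
  have hc : ∀ n : ℕ, (((Finset.Icc 1 n).filter (fun m => m ∉ M)).card : ℝ) ≤ ε * n + N₀ := by
    intro n
    rw [hcard]
    have h0 : (0 : ℝ) ≤ countIn M n := by positivity
    have h0' : (0 : ℝ) ≤ N₀ := by positivity
    rcases le_or_gt N₀ n with h | h
    · rcases Nat.eq_zero_or_pos n with h1 | h1
      · subst h1; simp; linarith
      · have h2 : (0 : ℝ) < n := by exact_mod_cast h1
        have h3 := hN₀ n h
        rw [lt_div_iff₀ h2] at h3
        linarith
    · have : (n : ℝ) ≤ N₀ := by exact_mod_cast h.le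
      have : 0 ≤ ε * n := by positivity
      linarith
  refine ⟨1 + N₀, fun N => ?_⟩
  rw [log_sum_eq]
  have h1 : (((Finset.Icc 1 N).filter (fun m => m ∉ M)).card : ℝ) / (N + 1) ≤ 1 := by
    rw [div_le_one (by positivity), hcard]
    have h0 : (0 : ℝ) ≤ countIn M N := by positivity
    linarith
  have h2 : ∑ n ∈ Finset.Icc 1 N,
      (((Finset.Icc 1 n).filter (fun m => m ∉ M)).card : ℝ) / (n * (n + 1)) ≤
      ∑ n ∈ Finset.Icc 1 N, (ε * (1 / ((n : ℝ) + 1)) + N₀ * (1 / ((n : ℝ) * (n + 1)))) := by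
    refine Finset.sum_le_sum fun n hn => ?_
    have hn0 : (0 : ℝ) < n := by exact_mod_cast (Finset.mem_Icc.1 hn).1
    calc _ ≤ (ε * n + N₀) / (n * (n + 1)) := by gcongr; exact hc n
      _ = _ := by field_simp
  rw [Finset.sum_add_distrib, ← Finset.mul_sum, ← Finset.mul_sum] at h2
  have h3 := mul_le_mul_of_nonneg_left (sum_inv_succ_le N) hε.le
  have h4 := mul_le_mul_of_nonneg_left
    (sum_inv_mul_succ_le (Finset.Icc 1 N) fun p hp => (Finset.mem_Icc.1 hp).1)
    (by positivity : (0 : ℝ) ≤ N₀)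
  linarith

/-- Sums over squarefree numbers composed of primes in `S` as expectations. -/
lemma sum_powerset_inv_eq {S : Finset ℕ} (hS : ∀ p ∈ S, Nat.Prime p) (f : Finset ℕ → ℝ) :
    ∑ W ∈ S.powerset, 1 / (∏ p ∈ W, (p : ℝ)) * f W =
      (∏ p ∈ S, (1 + 1 / (p : ℝ))) * Ex wsq S f := by
  unfold Ex
  rw [Finset.mul_sum]
  refine Finset.sum_congr rfl fun W hW => ?_
  have hWS := Finset.mem_powerset.1 hW
  rw [← mul_assoc]
  congr 1
  unfold bw
  rw [← Finset.prod_sdiff hWS, one_div, ← Finset.prod_inv_distrib]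
  have h1 : ∏ p ∈ W, (p : ℝ)⁻¹ = (∏ p ∈ W, (1 + 1 / (p : ℝ))) * ∏ p ∈ W, wsq p := by
    rw [← Finset.prod_mul_distrib]
    refine Finset.prod_congr rfl fun p hp => ?_
    have : (0 : ℝ) < p := by exact_mod_cast (hS p (hWS hp)).pos
    unfold wsq
    field_simp
  have h2 : (∏ p ∈ S \ W, (1 + 1 / (p : ℝ))) * ∏ p ∈ S \ W, (1 - wsq p) = 1 := by
    rw [← Finset.prod_mul_distrib]
    refine Finset.prod_eq_one fun p hp => ?_
    have : (0 : ℝ) < p := by exact_mod_cast (hS p (Finset.sdiff_subset hp)).pos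
    unfold wsq
    field_simp
    ring
  rw [h1]
  linear_combination (-(∏ p ∈ W, (1 + 1 / (p : ℝ))) * ∏ p ∈ W, wsq p) * h2

lemma prod_injOn {S : Finset ℕ} (hS : ∀ p ∈ S, Nat.Prime p) :
    Set.InjOn (fun W : Finset ℕ => ∏ p ∈ W, p) (S.powerset : Set (Finset ℕ)) := by
  intro W hW W' hW' h
  have h1 := Finset.mem_powerset.1 (Finset.mem_coe.1 hW)
  have h2 := Finset.mem_powerset.1 (Finset.mem_coe.1 hW')
  have := congrArg Nat.primeFactors h
  simp only at this
  rwa [Nat.primeFactors_prod fun p hp => hS p (h1 hp),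
    Nat.primeFactors_prod fun p hp => hS p (h2 hp)] at this

lemma exists_prod_eq_of_dvd {W : Finset ℕ} (hW : ∀ p ∈ W, Nat.Prime p) {a : ℕ}
    (ha : a ∣ ∏ p ∈ W, p) : ∃ D ⊆ W, ∏ p ∈ D, p = a := by
  have hne : ∏ p ∈ W, p ≠ 0 := Finset.prod_ne_zero_iff.2 fun p hp => (hW p hp).ne_zero
  refine ⟨a.primeFactors, ?_, ?_⟩
  · have := Nat.primeFactors_mono ha hne
    rwa [Nat.primeFactors_prod hW] at this
  · refine Nat.prod_primeFactors_of_squarefree (Squarefree.squarefree_of_dvd ha ?_)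
    refine Finset.squarefree_prod_of_pairwise_isCoprime ?_ fun p hp => (hW p hp).squarefree
    intro p hp q hq hpq
    exact Nat.coprime_iff_isRelPrime.1 ((Nat.coprime_primes (hW p hp) (hW q hq)).2 hpq)

/-- The total logarithmic weight of the squarefree numbers composed of primes in `(Y, z]` is at
least a constant, depending on `Y`, times `log z`. -/
lemma prod_one_add_inv_ge {Y : ℝ} (hY : 2 ≤ Y) : ∃ c : ℝ, 0 < c ∧ ∀ z : ℝ, Y ≤ z →
    c * Real.log z ≤ ∏ p ∈ primesIoc Y z, (1 + 1 / (p : ℝ)) := by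
  obtain ⟨C, hC, h⟩ := mertens_second
  set R := Real.log (Real.log Y) + C / Real.log Y + 1
  refine ⟨Real.exp (-R), Real.exp_pos _, fun z hz => ?_⟩
  have hlz : 0 < Real.log z := Real.log_pos (by linarith)
  have hp : ∀ p ∈ primesIoc Y z, (0 : ℝ) < p := fun p hp => by
    exact_mod_cast (mem_primesIoc.1 hp).1.pos
  have h1 : Real.exp (∑ p ∈ primesIoc Y z, wsq p) ≤ ∏ p ∈ primesIoc Y z, (1 + 1 / (p : ℝ)) := by
    rw [Real.exp_sum]
    refine Finset.prod_le_prod (fun p _ => (Real.exp_pos _).le) fun p hpm => ?_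
    have hp0 := hp p hpm
    have h2 := Real.one_sub_le_exp_neg (wsq p)
    have h3 : 1 - wsq p = (1 + 1 / (p : ℝ))⁻¹ := by unfold wsq; field_simp; ring
    rw [h3, Real.exp_neg] at h2
    exact (inv_le_inv₀ (by positivity) (Real.exp_pos _)).1 h2
  have h2 : Real.log (Real.log z) - R ≤ ∑ p ∈ primesIoc Y z, wsq p := by
    have e : ∑ p ∈ primesIoc Y z, 1 / (p : ℝ) - ∑ p ∈ primesIoc Y z, wsq p =
        ∑ p ∈ primesIoc Y z, 1 / ((p : ℝ) * (p + 1)) := by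
      rw [← Finset.sum_sub_distrib]
      refine Finset.sum_congr rfl fun p hpm => ?_
      have hp0 := hp p hpm
      unfold wsq
      field_simp
      ring
    have := sum_inv_mul_succ_le (primesIoc Y z) fun p hp => (mem_primesIoc.1 hp).1.one_le
    have := (abs_le.1 (h Y z hY hz)).1
    simp only [R]
    linarith
  refine le_trans (le_of_eq ?_) ((Real.exp_le_exp.2 h2).trans h1)
  rw [sub_eq_neg_add, Real.exp_add, Real.exp_log hlz]

/-! ### The convergent case -/

/-- The union of the blocks `(T j, H j * T j]`, `j ≥ 1`. -/
def blocks (T H : ℕ → ℝ) : Set ℕ :=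
  {n : ℕ | ∃ j : ℕ, 1 ≤ j ∧ T j < (n : ℝ) ∧ (n : ℝ) ≤ H j * T j}

/-- A product of primes above `Y` that is at most `X` is not a multiple of any element of the
blocks if it has no divisor in the blocks `j` with `i < j < J`: the elements of the earlier blocks
are at most `Y`, those of the later ones exceed `X`. -/
lemma notMem_multiples {T H : ℕ → ℝ} {i J : ℕ} {Y z X : ℝ} {W : Finset ℕ}
    (hT2 : ∀ j : ℕ, 1 ≤ j → 2 ≤ T j) (hY : ∀ j, j < i + 1 → H j * T j ≤ Y)
    (hJ : ∀ j, J ≤ j → X < T j) (hW : W ⊆ primesIoc Y z)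
    (hbad : ¬ ∃ k ∈ Finset.range J, HasDiv (T (k + i + 1)) (H (k + i + 1) * T (k + i + 1)) W)
    (hbig : ¬ X < ∏ p ∈ W, (p : ℝ)) :
    ∏ p ∈ W, p ∉ setOfMultiples (blocks T H) := by
  rintro ⟨a, ⟨j, hj, hTa, haH⟩, m, hm, hmul⟩
  have hWp : ∀ p ∈ W, Nat.Prime p := fun p hp => (mem_primesIoc.1 (hW hp)).1
  obtain ⟨D, hD, hDa⟩ := exists_prod_eq_of_dvd hWp ⟨m, hmul.trans (mul_comm _ _)⟩
  have hDa' : ∏ p ∈ D, (p : ℝ) = a := by rw [← hDa, Nat.cast_prod]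
  have h2 := hT2 j hj
  have ha0 : 0 < a := by
    have : (0 : ℝ) < a := by linarith
    exact_mod_cast this
  rcases lt_or_ge j (i + 1) with hji | hji
  · obtain ⟨p, hp⟩ : D.Nonempty := by
      rw [Finset.nonempty_iff_ne_empty]
      rintro rfl
      simp only [Finset.prod_empty] at hDa'
      linarith
    have h3 := (mem_primesIoc.1 (hW (hD hp))).2.1
    have h4 : p ≤ a := Nat.le_of_dvd ha0 (hDa ▸ Finset.dvd_prod_of_mem _ hp)
    have h5 : (p : ℝ) ≤ a := by exact_mod_cast h4
    have := hY j hji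
    linarith
  · have haX : (a : ℝ) ≤ X := by
      have h6 : a ≤ ∏ p ∈ W, p := Nat.le_of_dvd
        (Finset.prod_pos fun p hp => (hWp p hp).pos) ⟨m, hmul.trans (mul_comm _ _)⟩
      have h7 : (a : ℝ) ≤ ∏ p ∈ W, (p : ℝ) := by rw [← Nat.cast_prod]; exact_mod_cast h6
      exact h7.trans (not_lt.1 hbig)
    have hjJ : j < J := by
      by_contra hc
      have := hJ j (not_lt.1 hc)
      linarith
    refine hbad ⟨j - (i + 1), Finset.mem_range.2 (by omega), D, hD, ?_⟩
    rw [show j - (i + 1) + i + 1 = j by omega, hDa']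
    exact ⟨hTa, haH⟩

/-- If the series of `(log H j / log T j) ^ δ₂` converges for some `δ₂ < deltaEFT`, a positive
proportion, on the logarithmic scale, of the squarefree numbers without small prime factors have no
divisor in any block. -/
lemma not_isBehrend_blocks {T H : ℕ → ℝ} (hT2 : ∀ j : ℕ, 1 ≤ j → 2 ≤ T j)
    (hH1 : ∀ j : ℕ, 1 ≤ j → 1 < H j) (hHT : ∀ j : ℕ, 1 ≤ j → H j ≤ T j)
    (hTtop : Tendsto T atTop atTop) (hHtop : Tendsto (fun j => Real.log (H j)) atTop atTop)
    {δ₂ : ℝ} (hδ : δ₂ < deltaEFT)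
    (hsum : Summable (fun j : ℕ => (Real.log (H (j + 1)) / Real.log (T (j + 1))) ^ δ₂)) :
    ¬ IsBehrend (blocks T H) := by
  intro hB
  obtain ⟨C, hC, hub⟩ := upper_bound hδ
  obtain ⟨C₂, hC₂, hrank⟩ := sum_rankin
  set f : ℕ → ℝ := fun j => (Real.log (H (j + 1)) / Real.log (T (j + 1))) ^ δ₂ with hf
  have hf0 : ∀ j, 0 ≤ f j := fun j => by
    refine Real.rpow_nonneg (div_nonneg (Real.log_nonneg ?_) (Real.log_nonneg ?_)) _
    · exact (hH1 _ (by omega)).le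
    · linarith [hT2 (j + 1) (by omega)]
  -- from `i` on, the probabilities of the blocks add up to at most `1 / 2`
  obtain ⟨i₀, hi₀⟩ := eventually_atTop.1 ((tendsto_sum_nat_add f).eventually_lt_const
    (show (0 : ℝ) < 1 / (2 * C) by positivity))
  obtain ⟨i₁, hi₁⟩ := eventually_atTop.1 (hHtop.eventually_ge_atTop 1)
  set i := max i₀ i₁ with hi
  -- no prime above `Y` divides an element of the first `i` blocks
  set Y : ℝ := 2 + ∑ j ∈ Finset.range (i + 1), |H j * T j| with hY
  have hsn : 0 ≤ ∑ j ∈ Finset.range (i + 1), |H j * T j| :=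
    Finset.sum_nonneg fun j _ => abs_nonneg _
  have hY2 : 2 ≤ Y := by linarith
  have hYj : ∀ j, j < i + 1 → H j * T j ≤ Y := fun j hj => by
    have := Finset.single_le_sum (f := fun j => |H j * T j|) (fun j _ => abs_nonneg _)
      (Finset.mem_range.2 hj)
    have h2 := le_abs_self (H j * T j)
    linarith
  -- products of primes up to `z = e ^ l` exceed `X = e ^ (K l)` with probability at most `1 / 4`
  set K := C₂ + 2 with hK
  have hK0 : 0 < K := by linarith
  obtain ⟨c, hc, hprod⟩ := prod_one_add_inv_ge hY2
  obtain ⟨C₄, hC₄⟩ := log_sum_compl_le hB (ε := c / (8 * K)) (by positivity)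
  -- `l` is so large that the lower bound `c l / 4` contradicts the upper bound from density one
  set l := max (max 1 (Real.log Y)) ((c / (8 * K) * Real.log 2 + C₄) / (c / 8) + 1) with hl
  have hl1 : 1 ≤ l := (le_max_left _ _).trans (le_max_left _ _)
  have hlY : Real.log Y ≤ l := (le_max_right _ _).trans (le_max_left _ _)
  have hlC : (c / (8 * K) * Real.log 2 + C₄) / (c / 8) < l :=
    (lt_add_one _).trans_le (le_max_right _ _)
  set z := Real.exp l with hz
  have hz0 : 0 < z := Real.exp_pos _
  have hlz : Real.log z = l := Real.log_exp l
  have hYz : Y ≤ z := (Real.log_le_iff_le_exp (by linarith)).1 hlY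
  set X := Real.exp (K * l) with hX
  obtain ⟨J, hJ⟩ := eventually_atTop.1 (hTtop.eventually_gt_atTop X)
  set S := primesIoc Y z with hS
  have hSp : ∀ p ∈ S, Nat.Prime p := fun p hp => (mem_primesIoc.1 hp).1
  set bad : Finset ℕ → Prop := fun W =>
    ∃ k ∈ Finset.range J, HasDiv (T (k + i + 1)) (H (k + i + 1) * T (k + i + 1)) W with hbad
  set big : Finset ℕ → Prop := fun W => X < ∏ p ∈ W, (p : ℝ) with hbig
  have hw0 := wsq_nonneg
  have hw1 := wsq_le_one
  have e1 : Ex wsq S (fun W => ind (bad W)) ≤ 1 / 2 := by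
    calc _ ≤ Ex wsq S (fun W => ∑ k ∈ Finset.range J,
          ind (HasDiv (T (k + i + 1)) (H (k + i + 1) * T (k + i + 1)) W)) := by
          refine Ex_mono hw0 hw1 fun W _ => ind_le (Finset.sum_nonneg fun k _ => ind_nonneg _) ?_
          rintro ⟨k, hk, hd⟩
          rw [← ind_of hd]
          exact Finset.single_le_sum (f := fun k =>
            ind (HasDiv (T (k + i + 1)) (H (k + i + 1) * T (k + i + 1)) W))
            (fun k _ => ind_nonneg _) hk
      _ = ∑ k ∈ Finset.range J, Ex wsq S (fun W =>
          ind (HasDiv (T (k + i + 1)) (H (k + i + 1) * T (k + i + 1)) W)) := Ex_sum _ _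
      _ ≤ ∑ k ∈ Finset.range J, C * f (k + i) := by
          refine Finset.sum_le_sum fun k _ => ?_
          exact hub _ _ S hSp (by linarith [hH1 (k + i + 1) (by omega)])
            (hi₁ _ (by have := le_max_right i₀ i₁; omega)) (hHT _ (by omega))
      _ = C * ∑ k ∈ Finset.range J, f (k + i) := by rw [Finset.mul_sum]
      _ ≤ C * (1 / (2 * C)) := by
          refine mul_le_mul_of_nonneg_left ?_ hC.le
          refine le_trans ?_ (hi₀ i (le_max_left _ _)).le
          exact Summable.sum_le_tsum _ (fun k _ => hf0 _) ((summable_nat_add_iff i).2 hsum)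
      _ = 1 / 2 := by field_simp
  -- Rankin's method with the exponent `1 / l`
  have e2 : Ex wsq S (fun W => ind (big W)) ≤ 1 / 4 := by
    calc _ ≤ Ex wsq S (fun W => Real.exp (-K) * ∏ p ∈ W, (p : ℝ) ^ (1 / l)) := by
          refine Ex_mono hw0 hw1 fun W _ => ind_le
            (mul_nonneg (Real.exp_pos _).le (Finset.prod_nonneg fun p _ => by positivity)) ?_
          intro h
          rw [Real.finsetProd_rpow _ _ fun p _ => by positivity, Real.exp_neg, inv_mul_eq_div,
            one_le_div (Real.exp_pos _)]
          calc Real.exp K = X ^ (1 / l) := by rw [hX, ← Real.exp_mul]; congr 1; field_simp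
            _ ≤ _ := Real.rpow_le_rpow (Real.exp_pos _).le (le_of_lt h) (by positivity)
      _ = Real.exp (-K) * Ex wsq S (fun W => ∏ p ∈ W, (p : ℝ) ^ (1 / l)) := Ex_const_mul _ _
      _ ≤ Real.exp (-K) * Real.exp C₂ := by
          refine mul_le_mul_of_nonneg_left ?_ (Real.exp_pos _).le
          have hone : ∀ p : ℕ, Nat.Prime p → 1 ≤ (p : ℝ) ^ (1 / l) := fun p hp =>
            Real.one_le_rpow (by exact_mod_cast hp.one_le) (by positivity)
          refine (Ex_wsq_prod_le hSp fun p hp => hone p (hSp p hp)).trans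
            (Real.exp_le_exp.2 (le_trans ?_ (hrank z hz0 (by rw [hlz]; exact hl1))))
          rw [hlz]
          refine Finset.sum_le_sum_of_subset_of_nonneg (fun p hp => ?_) fun p hp _ => ?_
          · obtain ⟨h1, h2, h3⟩ := mem_primesIoc.1 hp
            exact mem_primesIoc.2 ⟨h1, by linarith, h3⟩
          · exact div_nonneg (sub_nonneg.2 (hone p (mem_primesIoc.1 hp).1)) (by positivity)
      _ = Real.exp (-1) * Real.exp (-1) := by
          rw [← Real.exp_add, ← Real.exp_add]; congr 1; rw [hK]; ring
      _ ≤ 1 / 2 * (1 / 2) := by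
          have : Real.exp (-1) ≤ 1 / 2 := by linarith [Real.exp_neg_one_lt_d9]
          exact mul_le_mul this this (Real.exp_pos _).le (by norm_num)
      _ = 1 / 4 := by norm_num
  have e3 : 1 / 4 ≤ Ex wsq S (fun W => ind (¬ bad W ∧ ¬ big W)) := by
    have h1 : (1 : ℝ) ≤ Ex wsq S (fun W => (ind (¬ bad W ∧ ¬ big W) + ind (bad W))
        + ind (big W)) := by
      rw [← Ex_one (π := wsq) (S := S)]
      refine Ex_mono hw0 hw1 fun W _ => ?_
      by_cases h1 : bad W
      · rw [ind_of h1]; linarith [ind_nonneg (¬ bad W ∧ ¬ big W), ind_nonneg (big W)]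
      · by_cases h2 : big W
        · rw [ind_of h2]; linarith [ind_nonneg (¬ bad W ∧ ¬ big W), ind_nonneg (bad W)]
        · rw [ind_of (P := ¬ bad W ∧ ¬ big W) ⟨h1, h2⟩]
          linarith [ind_nonneg (big W), ind_nonneg (bad W)]
    rw [Ex_add, Ex_add] at h1
    linarith
  have low : c * l * (1 / 4) ≤ ∑ n ∈ (Finset.Icc 1 ⌊X⌋₊).filter
      (fun n => n ∉ setOfMultiples (blocks T H)), 1 / (n : ℝ) := by
    have h1 := sum_powerset_inv_eq hSp (fun W => ind (¬ bad W ∧ ¬ big W))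
    have h2 := hprod z hYz
    rw [hlz, ← hS] at h2
    have h3 : c * l * (1 / 4) ≤ (∏ p ∈ S, (1 + 1 / (p : ℝ))) *
        Ex wsq S (fun W => ind (¬ bad W ∧ ¬ big W)) :=
      mul_le_mul h2 e3 (by norm_num) (Finset.prod_nonneg fun p _ => by positivity)
    rw [← h1] at h3
    refine h3.trans ?_
    have h4 : ∑ W ∈ S.powerset, 1 / (∏ p ∈ W, (p : ℝ)) * ind (¬ bad W ∧ ¬ big W) =
        ∑ W ∈ S.powerset.filter (fun W => ¬ bad W ∧ ¬ big W), 1 / ((∏ p ∈ W, p : ℕ) : ℝ) := by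
      rw [Finset.sum_filter]
      refine Finset.sum_congr rfl fun W _ => ?_
      rw [Nat.cast_prod]
      unfold ind
      split_ifs <;> simp
    rw [h4, ← Finset.sum_image (s := S.powerset.filter (fun W => ¬ bad W ∧ ¬ big W))
      (g := fun W : Finset ℕ => ∏ p ∈ W, p) (f := fun n : ℕ => 1 / (n : ℝ))]
    · refine Finset.sum_le_sum_of_subset_of_nonneg ?_ fun _ _ _ => by positivity
      intro n hn
      obtain ⟨W, hW, rfl⟩ := Finset.mem_image.1 hn
      obtain ⟨hWS, hg⟩ := Finset.mem_filter.1 hW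
      have hWS := Finset.mem_powerset.1 hWS
      refine Finset.mem_filter.2 ⟨Finset.mem_Icc.2 ⟨?_, ?_⟩,
        notMem_multiples hT2 hYj hJ hWS hg.1 hg.2⟩
      · exact Finset.prod_pos fun p hp => (hSp p (hWS hp)).pos
      · refine Nat.le_floor ?_
        rw [Nat.cast_prod]
        exact not_lt.1 hg.2
    · intro W hW W' hW' h
      exact prod_injOn hSp (Finset.mem_coe.2 (Finset.filter_subset _ _ (Finset.mem_coe.1 hW)))
        (Finset.mem_coe.2 (Finset.filter_subset _ _ (Finset.mem_coe.1 hW'))) h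
  have up := hC₄ ⌊X⌋₊
  have hlog : Real.log ((⌊X⌋₊ : ℝ) + 1) ≤ Real.log 2 + K * l := by
    have h1 : (⌊X⌋₊ : ℝ) ≤ X := Nat.floor_le (Real.exp_pos _).le
    have h2 : 1 ≤ X := Real.one_le_exp (by positivity)
    calc _ ≤ Real.log (2 * X) := Real.log_le_log (by positivity) (by linarith)
      _ = _ := by rw [Real.log_mul (by norm_num) (Real.exp_ne_zero _), Real.log_exp]
  have h5 := mul_le_mul_of_nonneg_left hlog (show 0 ≤ c / (8 * K) by positivity)
  have h6 : c / (8 * K) * (Real.log 2 + K * l) = c / (8 * K) * Real.log 2 + c / 8 * l := by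
    field_simp
  rw [div_lt_iff₀ (by positivity)] at hlC
  linarith

/-! ### The divergent case, given a lower bound for each block -/

/-- The probability weight `1 / p`, that of `p` dividing a random integer. -/
noncomputable def winv (p : ℕ) : ℝ := 1 / (p : ℝ)

lemma winv_nonneg (p : ℕ) : 0 ≤ winv p := by unfold winv; positivity
lemma winv_le_one (p : ℕ) : winv p ≤ 1 := by
  unfold winv
  rcases Nat.eq_zero_or_pos p with h | h
  · simp [h]
  · have : (1 : ℝ) ≤ p := by exact_mod_cast h
    rw [div_le_one (by linarith)]
    exact this

/-- Divisibility of a random integer by the primes of a finite set is governed by the independent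
model with weights `1 / p`. -/
lemma tendsto_average {S : Finset ℕ} (hS : ∀ p ∈ S, Nat.Prime p) (F : Finset ℕ → ℝ) :
    Tendsto (fun N : ℕ => (∑ n ∈ Finset.Icc 1 N, F (S.filter (fun p => p ∣ n))) / (N : ℝ))
      atTop (nhds (Ex winv S F)) := by
  induction S using Finset.induction_on generalizing F with
  | empty =>
    rw [Ex_empty]
    refine tendsto_const_nhds.congr' ?_
    filter_upwards [eventually_gt_atTop 0] with N hN
    have : (N : ℝ) ≠ 0 := by exact_mod_cast hN.ne'
    simp only [Finset.filter_empty, Finset.sum_const, Nat.card_Icc, Nat.add_sub_cancel,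
      nsmul_eq_mul]
    field_simp
  | insert a S ha ih =>
    have hap : Nat.Prime a := hS a (Finset.mem_insert_self _ _)
    have ha0 : (0 : ℝ) < a := by exact_mod_cast hap.pos
    have ih := ih fun p hp => hS p (Finset.mem_insert_of_mem hp)
    set G : Finset ℕ → ℝ := fun W => F (insert a W) - F W with hG
    have key : ∀ N : ℕ, ∑ n ∈ Finset.Icc 1 N, F ((insert a S).filter (fun p => p ∣ n)) =
        ∑ n ∈ Finset.Icc 1 N, F (S.filter (fun p => p ∣ n)) +
          ∑ m ∈ Finset.Icc 1 (N / a), G (S.filter (fun p => p ∣ m)) := by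
      intro N
      have h1 : ∀ n : ℕ, F ((insert a S).filter (fun p => p ∣ n)) =
          F (S.filter (fun p => p ∣ n)) +
            if a ∣ n then G (S.filter (fun p => p ∣ n)) else 0 := by
        intro n
        rw [Finset.filter_insert]
        split_ifs <;> simp [hG]
      rw [Finset.sum_congr rfl fun n _ => h1 n, Finset.sum_add_distrib]
      congr 1
      rw [← Finset.sum_filter]
      symm
      refine Finset.sum_bij (fun m _ => a * m) ?_ ?_ ?_ ?_
      · intro m hm
        obtain ⟨h2, h3⟩ := Finset.mem_Icc.1 hm
        refine Finset.mem_filter.2 ⟨Finset.mem_Icc.2 ⟨Nat.mul_pos hap.pos h2, ?_⟩, dvd_mul_right _ _⟩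
        rw [mul_comm]
        exact (Nat.le_div_iff_mul_le hap.pos).1 h3
      · intro m _ m' _ h
        exact Nat.eq_of_mul_eq_mul_left hap.pos h
      · intro n hn
        obtain ⟨h2, m, rfl⟩ := Finset.mem_filter.1 hn
        obtain ⟨h2, h3⟩ := Finset.mem_Icc.1 h2
        refine ⟨m, Finset.mem_Icc.2 ⟨Nat.pos_of_mul_pos_left h2, ?_⟩, rfl⟩
        rw [Nat.le_div_iff_mul_le hap.pos, mul_comm]
        exact h3
      · intro m _
        congr 1
        refine Finset.filter_congr fun p hp => ?_
        have hpp := hS p (Finset.mem_insert_of_mem hp)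
        have hpa : p ≠ a := fun h => ha (h ▸ hp)
        rw [hpp.dvd_mul]
        constructor
        · exact Or.inr
        · rintro (h | h)
          · exact absurd ((Nat.prime_dvd_prime_iff_eq hpp hap).1 h) hpa
          · exact h
    have hdiv : Tendsto (fun N : ℕ => N / a) atTop atTop := Nat.tendsto_div_const_atTop hap.ne_zero
    have hfl : Tendsto (fun N : ℕ => ((N / a : ℕ) : ℝ) / N) atTop (nhds (1 / (a : ℝ))) := by
      have := (tendsto_nat_floor_mul_div_atTop (R := ℝ) (a := 1 / (a : ℝ)) (by positivity)).comp
        tendsto_natCast_atTop_atTop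
      refine this.congr fun N => ?_
      simp only [Function.comp]
      rw [one_div_mul_eq_div, Nat.floor_div_natCast, Nat.floor_natCast]
    have h2 := (ih F).add (((ih G).comp hdiv).mul hfl)
    have hval : Ex winv (insert a S) F = Ex winv S F + Ex winv S G * (1 / (a : ℝ)) := by
      rw [Ex_insert ha]
      have : Ex winv S G = Ex winv S (fun W => F (insert a W)) + (-1) * Ex winv S F := by
        rw [← Ex_const_mul, ← Ex_add]
        exact Ex_congr fun W _ => by rw [hG]; ring
      rw [this]
      unfold winv
      ring
    rw [hval]
    refine h2.congr' ?_
    filter_upwards [hdiv.eventually_gt_atTop 0, eventually_gt_atTop 0] with N hN hN0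
    have e1 : ((N / a : ℕ) : ℝ) ≠ 0 := by exact_mod_cast hN.ne'
    have e2 : (N : ℝ) ≠ 0 := by exact_mod_cast hN0.ne'
    rw [key N]
    simp only [Function.comp]
    field_simp

/-- The events attached to disjoint ranges of primes are independent. -/
lemma Ex_prod_indep {π : ℕ → ℝ} (s : ℕ → Finset ℕ)
    (hd : ∀ k m, k < m → Disjoint (s k) (s m)) (g : ℕ → Finset ℕ → ℝ) (m : ℕ) :
    Ex π ((Finset.range m).biUnion s) (fun W => ∏ k ∈ Finset.range m, g k (W ∩ s k)) =
      ∏ k ∈ Finset.range m, Ex π (s k) (g k) := by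
  induction m with
  | zero => simp [Ex_empty]
  | succ m ih =>
    have hdis : Disjoint ((Finset.range m).biUnion s) (s m) :=
      (Finset.disjoint_biUnion_left _ _ _).2 fun k hk => hd k m (Finset.mem_range.1 hk)
    rw [Finset.prod_range_succ, ← ih, Finset.range_add_one, Finset.biUnion_insert,
      Finset.union_comm, Ex_union hdis, mul_comm, ← Ex_const_mul]
    refine Ex_congr fun W₁ h₁ => ?_
    rw [mul_comm, ← Ex_const_mul]
    refine Ex_congr fun W₂ h₂ => ?_
    rw [Finset.prod_insert Finset.notMem_range_self, mul_comm]
    congr 1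
    · refine Finset.prod_congr rfl fun k hk => ?_
      congr 1
      rw [Finset.union_inter_distrib_right]
      have : W₂ ∩ s k = ∅ := Finset.disjoint_iff_inter_eq_empty.1
        ((hd k m (Finset.mem_range.1 hk)).symm.mono_left h₂)
      rw [this, Finset.union_empty]
    · congr 1
      rw [Finset.union_inter_distrib_right]
      have : W₁ ∩ s m = ∅ := Finset.disjoint_iff_inter_eq_empty.1 (hdis.mono_left h₁)
      rw [this, Finset.empty_union, Finset.inter_eq_left.2 h₂]

lemma hasDensity_one_of_compl {M : Set ℕ} (h : ∀ ε : ℝ, 0 < ε → ∀ᶠ N : ℕ in atTop,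
    (((Finset.Icc 1 N).filter (fun n => n ∉ M)).card : ℝ) / N ≤ ε) : HasDensity M 1 := by
  unfold HasDensity
  have e : ∀ᶠ N : ℕ in atTop, (countIn M N : ℝ) / N =
      1 - (((Finset.Icc 1 N).filter (fun n => n ∉ M)).card : ℝ) / N := by
    filter_upwards [eventually_gt_atTop 0] with N hN
    have hN0 : (N : ℝ) ≠ 0 := by exact_mod_cast hN.ne'
    have := Finset.card_filter_add_card_filter_not (s := Finset.Icc 1 N) (fun m => m ∈ M)
    rw [Nat.card_Icc, Nat.add_sub_cancel] at this
    have h2 : (countIn M N : ℝ) + (((Finset.Icc 1 N).filter (fun n => n ∉ M)).card : ℝ) = N := by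
      unfold countIn
      exact_mod_cast this
    field_simp
    linarith
  rw [tendsto_congr' e]
  have h0 : Tendsto (fun N : ℕ => (((Finset.Icc 1 N).filter (fun n => n ∉ M)).card : ℝ) / N)
      atTop (nhds 0) := by
    rw [Metric.tendsto_nhds]
    intro ε hε
    filter_upwards [h (ε / 2) (by positivity)] with N hN
    rw [Real.dist_eq, sub_zero, abs_of_nonneg (by positivity)]
    linarith
  simpa using h0.const_sub 1

/-- If the probabilities of having a divisor in the blocks, estimated on disjoint ranges of primes,
have a divergent sum, then almost all integers are multiples. -/
lemma isBehrend_blocks {T H : ℕ → ℝ} {j₀ : ℕ} {c δ₁ : ℝ} (hc : 0 < c)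
    (hT2 : ∀ j : ℕ, 1 ≤ j → 2 ≤ T j) (hH1 : ∀ j : ℕ, 1 ≤ j → 1 < H j)
    (hHT : ∀ j : ℕ, 1 ≤ j → H j * T j ≤ H (j + 1))
    (hlb : ∀ j : ℕ, j₀ ≤ j → c * (Real.log (H (j + 1)) / Real.log (T (j + 1))) ^ δ₁ ≤
      Ex winv (primesIoc (H (j + 1)) (H (j + 1) * T (j + 1)))
        (fun W => ind (HasDiv (T (j + 1)) (H (j + 1) * T (j + 1)) W)))
    (hsum : ¬ Summable (fun j : ℕ => (Real.log (H (j + 1)) / Real.log (T (j + 1))) ^ δ₁)) :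
    IsBehrend (blocks T H) := by
  set f : ℕ → ℝ := fun j => (Real.log (H (j + 1)) / Real.log (T (j + 1))) ^ δ₁ with hf
  have hf0 : ∀ j, 0 ≤ f j := fun j => by
    refine Real.rpow_nonneg (div_nonneg (Real.log_nonneg ?_) (Real.log_nonneg ?_)) _
    · exact (hH1 _ (by omega)).le
    · linarith [hT2 (j + 1) (by omega)]
  have hdiv : Tendsto (fun n => ∑ k ∈ Finset.range n, f (k + j₀)) atTop atTop :=
    (not_summable_iff_tendsto_nat_atTop_of_nonneg (f := fun k => f (k + j₀))
      fun k => hf0 _).1 ((summable_nat_add_iff j₀).not.2 hsum)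
  set s : ℕ → Finset ℕ := fun k =>
    primesIoc (H (k + j₀ + 1)) (H (k + j₀ + 1) * T (k + j₀ + 1)) with hs
  set E : ℕ → Finset ℕ → Prop := fun k W =>
    HasDiv (T (k + j₀ + 1)) (H (k + j₀ + 1) * T (k + j₀ + 1)) W with hE
  have hsep : ∀ k d, H (k + 1) * T (k + 1) ≤ H (k + 1 + d + 1) := by
    intro k d
    induction d with
    | zero => exact hHT _ (by omega)
    | succ d ih =>
      refine ih.trans (le_trans ?_ (hHT (k + 1 + d + 1) (by omega)))
      refine le_mul_of_one_le_right ?_ ?_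
      · linarith [hH1 (k + 1 + d + 1) (by omega)]
      · linarith [hT2 (k + 1 + d + 1) (by omega)]
  have hdisj : ∀ k m, k < m → Disjoint (s k) (s m) := by
    intro k m hkm
    rw [Finset.disjoint_left]
    intro p h1 h2
    have h1 := (mem_primesIoc.1 h1).2.2
    have h2 := (mem_primesIoc.1 h2).2.1
    have h3 := hsep (k + j₀) (m - k - 1)
    rw [show k + j₀ + 1 + (m - k - 1) + 1 = m + j₀ + 1 by omega] at h3
    linarith
  refine hasDensity_one_of_compl fun ε hε => ?_
  obtain ⟨m, hm⟩ := (((tendsto_id.const_mul_atTop hc).comp hdiv).eventually_gt_atTop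
    (-Real.log ε)).exists
  simp only [Function.comp, id] at hm
  -- the product over `k` of `g k (W ∩ s k)` majorizes the indicator of non-multiples
  set g : ℕ → Finset ℕ → ℝ := fun k W => 1 - ind (E k W) with hg
  have hg0 : ∀ k W, 0 ≤ g k W := fun k W => sub_nonneg.2 (ind_le_one _)
  set U := (Finset.range m).biUnion s with hU
  have hUp : ∀ p ∈ U, Nat.Prime p := by
    intro p hp
    obtain ⟨k, _, hk⟩ := Finset.mem_biUnion.1 hp
    exact (mem_primesIoc.1 hk).1
  set F : Finset ℕ → ℝ := fun W => ∏ k ∈ Finset.range m, g k (W ∩ s k) with hF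
  have hFval : Ex winv U F < ε := by
    rw [Ex_prod_indep s hdisj g m]
    calc _ ≤ ∏ k ∈ Finset.range m, Real.exp (-(c * f (k + j₀))) := by
          refine Finset.prod_le_prod (fun k _ => Ex_nonneg winv_nonneg winv_le_one
            fun W _ => hg0 k W) fun k _ => ?_
          have h1 : Ex winv (s k) (g k) = 1 + (-1) * Ex winv (s k) (fun W => ind (E k W)) := by
            rw [← Ex_const_mul, ← Ex_one (π := winv) (S := s k), ← Ex_add, Ex_one]
            exact Ex_congr fun W _ => by rw [hg]; ring
          have h2 := hlb (k + j₀) (by omega)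
          have h3 := Real.one_sub_le_exp_neg (c * f (k + j₀))
          rw [h1]
          simp only [hE, hs, hf] at h2 h3 ⊢
          linarith
      _ = Real.exp (-(c * ∑ k ∈ Finset.range m, f (k + j₀))) := by
          rw [← Real.exp_sum, Finset.sum_neg_distrib, Finset.mul_sum]
      _ < ε := by
          rw [← Real.lt_log_iff_exp_lt hε]
          linarith
  have hav := (tendsto_average hUp F).eventually_lt_const hFval
  filter_upwards [hav] with N hN
  refine le_trans ?_ hN.le
  refine div_le_div_of_nonneg_right ?_ (by positivity)
  rw [Finset.card_eq_sum_ones, Finset.sum_filter]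
  push_cast
  refine Finset.sum_le_sum fun n hn => ?_
  have hn1 := (Finset.mem_Icc.1 hn).1
  split_ifs with hnM
  · refine Finset.prod_nonneg fun k _ => hg0 _ _
  · refine le_of_eq (Finset.prod_eq_one fun k _ => ?_).symm
    rw [hg]
    simp only
    rw [ind_of_not, sub_zero]
    rintro ⟨D, hD, h1, h2⟩
    refine hnM ⟨∏ p ∈ D, p, ⟨k + j₀ + 1, by omega, ?_, ?_⟩, ?_⟩
    · rw [Nat.cast_prod]; exact h1
    · rw [Nat.cast_prod]; exact h2
    · have hdvd : ∏ p ∈ D, p ∣ n := by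
        refine Finset.prod_primes_dvd n (fun p hp => ?_) fun p hp => ?_
        · exact (hUp p (Finset.filter_subset _ _ (Finset.mem_inter.1 (hD hp)).1)).prime
        · exact (Finset.mem_filter.1 (Finset.mem_inter.1 (hD hp)).1).2
      obtain ⟨q, hq⟩ := hdvd
      refine ⟨q, ?_, hq.trans (mul_comm _ _)⟩
      rcases Nat.eq_zero_or_pos q with h | h
      · subst h; omega
      · exact h

/-! ### Elementary symmetric functions and pairs of divisors -/

/-- The elementary symmetric function of degree `r` of the reciprocals of the elements of `J`. -/
noncomputable def esym (J : Finset ℕ) (r : ℕ) : ℝ :=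
  ∑ E ∈ J.powersetCard r, ∏ q ∈ E, winv q

lemma prod_winv_nonneg (E : Finset ℕ) : 0 ≤ ∏ q ∈ E, winv q :=
  Finset.prod_nonneg fun q _ => winv_nonneg q

lemma esym_nonneg (J : Finset ℕ) (r : ℕ) : 0 ≤ esym J r :=
  Finset.sum_nonneg fun E _ => prod_winv_nonneg E

/-- Removing a marked element from a set of size `r + 1`. -/
lemma sum_powersetCard_erase (J : Finset ℕ) (r : ℕ) (f : ℕ → Finset ℕ → ℝ) :
    ∑ E ∈ J.powersetCard (r + 1), ∑ q ∈ E, f q (E.erase q) =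
      ∑ E ∈ J.powersetCard r, ∑ q ∈ J \ E, f q E := by
  rw [Finset.sum_sigma', Finset.sum_sigma']
  refine Finset.sum_bij' (fun x _ => ⟨x.1.erase x.2, x.2⟩) (fun x _ => ⟨insert x.2 x.1, x.2⟩)
    ?_ ?_ ?_ ?_ ?_
  · rintro ⟨E, q⟩ h
    simp only [Finset.mem_sigma, Finset.mem_powersetCard, Finset.mem_sdiff] at h ⊢
    obtain ⟨⟨h1, h2⟩, h3⟩ := h
    refine ⟨⟨(Finset.erase_subset _ _).trans h1, ?_⟩, h1 h3, Finset.notMem_erase _ _⟩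
    rw [Finset.card_erase_of_mem h3, h2, Nat.add_sub_cancel]
  · rintro ⟨E, q⟩ h
    simp only [Finset.mem_sigma, Finset.mem_powersetCard, Finset.mem_sdiff] at h ⊢
    obtain ⟨⟨h1, h2⟩, h3, h4⟩ := h
    refine ⟨⟨Finset.insert_subset h3 h1, ?_⟩, Finset.mem_insert_self _ _⟩
    rw [Finset.card_insert_of_notMem h4, h2]
  · rintro ⟨E, q⟩ h
    simp only [Finset.mem_sigma] at h
    simp [Finset.insert_erase h.2]
  · rintro ⟨E, q⟩ h
    simp only [Finset.mem_sigma, Finset.mem_sdiff] at h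
    simp [Finset.erase_insert h.2.2]
  · rintro ⟨E, q⟩ h
    rfl

lemma esym_succ (J : Finset ℕ) (r : ℕ) :
    ((r : ℝ) + 1) * esym J (r + 1) =
      ∑ E ∈ J.powersetCard r, (∏ q ∈ E, winv q) * ∑ q ∈ J \ E, winv q := by
  have h := sum_powersetCard_erase J r (fun q E => winv q * ∏ p ∈ E, winv p)
  have h1 : ∀ E ∈ J.powersetCard (r + 1),
      ∑ q ∈ E, winv q * ∏ p ∈ E.erase q, winv p = ((r : ℝ) + 1) * ∏ p ∈ E, winv p := by
    intro E hE
    rw [Finset.sum_congr rfl fun q hq => Finset.mul_prod_erase E winv hq, Finset.sum_const,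
      (Finset.mem_powersetCard.1 hE).2, nsmul_eq_mul]
    push_cast
    ring
  rw [Finset.sum_congr rfl h1, ← Finset.mul_sum] at h
  unfold esym
  rw [h]
  refine Finset.sum_congr rfl fun E _ => ?_
  rw [Finset.mul_sum]
  exact Finset.sum_congr rfl fun q _ => mul_comm _ _

/-- Adding one more element to an `r`-element subset: at most `r * m` of the total weight is lost
to the elements already present. -/
lemma esym_succ_ge {J : Finset ℕ} {m : ℝ} (hm : ∀ q ∈ J, winv q ≤ m) (r : ℕ) :
    esym J r * (∑ q ∈ J, winv q - r * m) ≤ ((r : ℝ) + 1) * esym J (r + 1) := by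
  rw [esym_succ]
  unfold esym
  rw [Finset.sum_mul]
  refine Finset.sum_le_sum fun E hE => mul_le_mul_of_nonneg_left ?_ (prod_winv_nonneg E)
  obtain ⟨h1, h2⟩ := Finset.mem_powersetCard.1 hE
  have h3 := Finset.sum_sdiff h1 (f := winv)
  have h4 : ∑ q ∈ E, winv q ≤ r * m := by
    have := Finset.sum_le_card_nsmul E winv m fun q hq => hm q (h1 hq)
    rwa [h2, nsmul_eq_mul] at this
  linarith

/-- If all weights are small, the elementary symmetric sum of degree `r` is nearly `μ ^ r / r !`. -/
lemma esym_ge {J : Finset ℕ} {m μ : ℝ} (hm0 : 0 ≤ m) (hm : ∀ q ∈ J, winv q ≤ m)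
    (hμ : μ = ∑ q ∈ J, winv q) (R : ℕ) (hR : 0 ≤ μ - R * m) (r : ℕ) (hr : r ≤ R) :
    (μ - R * m) ^ r / (r.factorial : ℝ) ≤ esym J r := by
  induction r with
  | zero => simp [esym]
  | succ r ih =>
    have ih := ih (by omega)
    have h1 := esym_succ_ge hm r
    rw [← hμ] at h1
    have h2 : (r : ℝ) * m ≤ R * m := by
      refine mul_le_mul_of_nonneg_right ?_ hm0
      exact_mod_cast (by omega : r ≤ R)
    have h3 : (μ - R * m) ^ r / (r.factorial : ℝ) * (μ - R * m) ≤ ((r : ℝ) + 1) * esym J (r + 1) :=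
      le_trans (mul_le_mul ih (by linarith) hR (esym_nonneg _ _)) h1
    rw [Nat.factorial_succ]
    push_cast
    rw [pow_succ, div_le_iff₀ (by positivity)]
    rw [div_mul_eq_mul_div, div_le_iff₀ (by positivity)] at h3
    linarith

/-- The logarithm of the product of a finite set of integers. -/
noncomputable def ell (A : Finset ℕ) : ℝ := ∑ p ∈ A, Real.log p

lemma ell_insert {q : ℕ} {A : Finset ℕ} (h : q ∉ A) : ell (insert q A) = Real.log q + ell A :=
  Finset.sum_insert h

lemma ell_union {A B : Finset ℕ} (h : Disjoint A B) : ell (A ∪ B) = ell A + ell B :=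
  Finset.sum_union h

/-- The number of pairs of subsets of `V` for which the logarithms of the products differ by `-x`
up to an error less than `h`. -/
noncomputable def pairs (h : ℝ) (V : Finset ℕ) (x : ℝ) : ℝ :=
  ∑ A ∈ V.powerset, ∑ B ∈ V.powerset, ind (|x + ell A - ell B| < h)

lemma pairs_nonneg (h : ℝ) (V : Finset ℕ) (x : ℝ) : 0 ≤ pairs h V x :=
  Finset.sum_nonneg fun A _ => Finset.sum_nonneg fun B _ => ind_nonneg _

lemma sum_powerset_union {E W : Finset ℕ} (hd : Disjoint E W) (f : Finset ℕ → ℝ) :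
    ∑ A ∈ (E ∪ W).powerset, f A = ∑ A ∈ E.powerset, ∑ B ∈ W.powerset, f (A ∪ B) := by
  induction E using Finset.induction_on generalizing f with
  | empty => simp
  | insert a E ha ih =>
    rw [Finset.disjoint_insert_left] at hd
    rw [Finset.insert_union, Finset.sum_powerset_insert (by simp [ha, hd.1]),
      Finset.sum_powerset_insert ha, ih hd.2, ih hd.2]
    simp only [Finset.insert_union]

lemma pairs_union {E W : Finset ℕ} (hd : Disjoint E W) (h x : ℝ) :
    pairs h (E ∪ W) x =
      ∑ A ∈ E.powerset, ∑ B ∈ E.powerset, pairs h W (x + ell A - ell B) := by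
  unfold pairs
  rw [sum_powerset_union hd]
  refine Finset.sum_congr rfl fun A hA => ?_
  have e : ∀ C ∈ W.powerset, ∑ B ∈ (E ∪ W).powerset, ind (|x + ell (A ∪ C) - ell B| < h) =
      ∑ B ∈ E.powerset, ∑ D ∈ W.powerset, ind (|x + ell A - ell B + ell C - ell D| < h) := by
    intro C hC
    rw [sum_powerset_union hd]
    refine Finset.sum_congr rfl fun B hB => Finset.sum_congr rfl fun D hD => ?_
    rw [ell_union (hd.mono (Finset.mem_powerset.1 hA) (Finset.mem_powerset.1 hC)),
      ell_union (hd.mono (Finset.mem_powerset.1 hB) (Finset.mem_powerset.1 hD))]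
    congr 3
    ring
  rw [Finset.sum_congr rfl e, Finset.sum_comm]

lemma sum_pairs_insert {E : Finset ℕ} {q : ℕ} (hq : q ∉ E) (n : ℝ → ℝ) (x : ℝ) :
    ∑ A ∈ (insert q E).powerset, ∑ B ∈ (insert q E).powerset,
        (ind (q ∈ A ∧ q ∉ B) + ind (q ∉ A ∧ q ∈ B)) * n (x + ell A - ell B) =
      ∑ A ∈ E.powerset, ∑ B ∈ E.powerset,
        (n (x + ell A - ell B + Real.log q) + n (x + ell A - ell B - Real.log q)) := by
  rw [Finset.sum_powerset_insert hq, ← Finset.sum_add_distrib]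
  refine Finset.sum_congr rfl fun A hA => ?_
  rw [Finset.sum_powerset_insert hq, Finset.sum_powerset_insert hq, ← Finset.sum_add_distrib,
    ← Finset.sum_add_distrib, ← Finset.sum_add_distrib]
  refine Finset.sum_congr rfl fun B hB => ?_
  have hA : q ∉ A := fun h => hq (Finset.mem_powerset.1 hA h)
  have hB : q ∉ B := fun h => hq (Finset.mem_powerset.1 hB h)
  rw [ell_insert hA, ell_insert hB]
  have e1 : x + (Real.log q + ell A) - ell B = x + ell A - ell B + Real.log q := by ring
  have e2 : x + ell A - (Real.log q + ell B) = x + ell A - ell B - Real.log q := by ring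
  rw [e1, e2]
  simp [ind, hA, hB]
  ring

/-- Splitting the pairs `(A, B)` of subsets of `E` into the diagonal and the pairs separated by
some `q ∈ E`. -/
lemma sum_pairs_le {E : Finset ℕ} {n : ℝ → ℝ} {X : ℝ} (hn0 : ∀ y, 0 ≤ n y) (hnX : ∀ y, n y ≤ X)
    (x : ℝ) :
    ∑ A ∈ E.powerset, ∑ B ∈ E.powerset, n (x + ell A - ell B) ≤ 2 ^ E.card * X +
      ∑ q ∈ E, ∑ A ∈ (E.erase q).powerset, ∑ B ∈ (E.erase q).powerset,
        (n (x + ell A - ell B + Real.log q) + n (x + ell A - ell B - Real.log q)) := by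
  have h1 : ∀ A ∈ E.powerset, ∀ B ∈ E.powerset, n (x + ell A - ell B) ≤
      (if A = B then X else 0) + ∑ q ∈ E,
        (ind (q ∈ A ∧ q ∉ B) + ind (q ∉ A ∧ q ∈ B)) * n (x + ell A - ell B) := by
    intro A hA B hB
    have hA := Finset.mem_powerset.1 hA
    have hB := Finset.mem_powerset.1 hB
    have hnn : ∀ q ∈ E, 0 ≤ (ind (q ∈ A ∧ q ∉ B) + ind (q ∉ A ∧ q ∈ B)) * n (x + ell A - ell B) :=
      fun q _ => mul_nonneg (add_nonneg (ind_nonneg _) (ind_nonneg _)) (hn0 _)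
    split_ifs with hAB
    · have := Finset.sum_nonneg hnn
      have := hnX (x + ell A - ell B)
      linarith
    · have : ∃ q ∈ E, 1 ≤ ind (q ∈ A ∧ q ∉ B) + ind (q ∉ A ∧ q ∈ B) := by
        by_contra hc
        push Not at hc
        refine hAB (Finset.ext fun q => ?_)
        constructor
        · intro hq
          by_contra hq2
          have h3 := hc q (hA hq)
          rw [ind_of (P := q ∈ A ∧ q ∉ B) ⟨hq, hq2⟩] at h3
          linarith [ind_nonneg (q ∉ A ∧ q ∈ B)]
        · intro hq
          by_contra hq2
          have h3 := hc q (hB hq)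
          rw [ind_of (P := q ∉ A ∧ q ∈ B) ⟨hq2, hq⟩] at h3
          linarith [ind_nonneg (q ∈ A ∧ q ∉ B)]
      obtain ⟨q, hq, hq1⟩ := this
      have h2 := Finset.single_le_sum hnn hq
      have h3 := mul_le_mul_of_nonneg_right hq1 (hn0 (x + ell A - ell B))
      linarith
  refine (Finset.sum_le_sum fun A hA => Finset.sum_le_sum fun B hB => h1 A hA B hB).trans
    (le_of_eq ?_)
  rw [Finset.sum_congr rfl fun A _ => Finset.sum_add_distrib, Finset.sum_add_distrib]
  congr 1
  · rw [Finset.sum_congr rfl fun A hA => by rw [Finset.sum_ite_eq, if_pos hA], Finset.sum_const,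
      Finset.card_powerset, nsmul_eq_mul]
    push_cast; rfl
  · rw [Finset.sum_congr rfl fun A _ => Finset.sum_comm, Finset.sum_comm]
    refine Finset.sum_congr rfl fun q hq => ?_
    have := sum_pairs_insert (Finset.notMem_erase q E) n x
    rwa [Finset.insert_erase hq] at this

/-! ### Averages over sets with a prescribed number of primes in each range -/

/-- Weighted sum of `f` over the unions of `b` sets, the `i`-th of which is an `R`-element subset
of `J i`; the weight of a union is the product of the reciprocals of its elements. -/
noncomputable def It (J : ℕ → Finset ℕ) (R : ℕ) : ℕ → (Finset ℕ → ℝ) → ℝ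
  | 0, f => f ∅
  | b + 1, f => ∑ E ∈ (J b).powersetCard R, (∏ q ∈ E, winv q) * It J R b (fun W => f (E ∪ W))

/-- The sets `W` which are unions of `b` sets, the `i`-th of which is an `R`-element subset of
`J i`. -/
def Good (J : ℕ → Finset ℕ) (R : ℕ) : ℕ → Finset ℕ → Prop
  | 0, W => W = ∅
  | b + 1, W => ∃ E ∈ (J b).powersetCard R, ∃ W', Good J R b W' ∧ W = E ∪ W'

section
variable {J : ℕ → Finset ℕ} {R : ℕ}

lemma It_mono {b : ℕ} {f g : Finset ℕ → ℝ} (h : ∀ W, Good J R b W → f W ≤ g W) :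
    It J R b f ≤ It J R b g := by
  induction b generalizing f g with
  | zero => exact h ∅ rfl
  | succ b ih =>
    refine Finset.sum_le_sum fun E hE => mul_le_mul_of_nonneg_left ?_ (prod_winv_nonneg E)
    exact ih fun W hW => h _ ⟨E, hE, W, hW, rfl⟩

lemma It_congr {b : ℕ} {f g : Finset ℕ → ℝ} (h : ∀ W, Good J R b W → f W = g W) :
    It J R b f = It J R b g :=
  le_antisymm (It_mono fun W hW => (h W hW).le) (It_mono fun W hW => (h W hW).ge)

lemma It_lin (b : ℕ) (f g : Finset ℕ → ℝ) (α β : ℝ) :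
    It J R b (fun W => α * f W + β * g W) = α * It J R b f + β * It J R b g := by
  induction b generalizing f g with
  | zero => rfl
  | succ b ih =>
    simp only [It]
    rw [Finset.mul_sum, Finset.mul_sum, ← Finset.sum_add_distrib]
    refine Finset.sum_congr rfl fun E _ => ?_
    rw [ih (fun W => f (E ∪ W)) (fun W => g (E ∪ W))]
    ring

lemma It_zero (b : ℕ) : It J R b (fun _ => 0) = 0 := by
  have := It_lin (J := J) (R := R) b (fun _ => 0) (fun _ => 0) 0 0
  simpa using this

lemma It_add (b : ℕ) (f g : Finset ℕ → ℝ) :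
    It J R b (fun W => f W + g W) = It J R b f + It J R b g := by
  simpa using It_lin (J := J) (R := R) b f g 1 1

lemma It_sum {ι : Type*} (s : Finset ι) (b : ℕ) (f : ι → Finset ℕ → ℝ) :
    It J R b (fun W => ∑ i ∈ s, f i W) = ∑ i ∈ s, It J R b (f i) := by
  induction s using Finset.induction_on with
  | empty => simpa using It_zero b
  | insert a s ha ih =>
    rw [Finset.sum_insert ha, ← ih, ← It_add]
    exact It_congr fun W _ => Finset.sum_insert ha

lemma It_one (b : ℕ) : It J R b (fun _ => 1) = ∏ i ∈ Finset.range b, esym (J i) R := by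
  induction b with
  | zero => simp [It]
  | succ b ih =>
    simp only [It]
    rw [ih, ← Finset.sum_mul, Finset.prod_range_succ, mul_comm]
    rfl

lemma It_nonneg {b : ℕ} {f : Finset ℕ → ℝ} (h : ∀ W, 0 ≤ f W) : 0 ≤ It J R b f := by
  rw [← It_zero (J := J) (R := R) b]
  exact It_mono fun W _ => h W

lemma Good.subset {b : ℕ} {W : Finset ℕ} (h : Good J R b W) :
    W ⊆ (Finset.range b).biUnion J := by
  induction b generalizing W with
  | zero => rw [show W = ∅ from h]; exact Finset.empty_subset _
  | succ b ih =>
    obtain ⟨E, hE, W', hW', rfl⟩ := h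
    refine Finset.union_subset ?_ ?_
    · exact (Finset.mem_powersetCard.1 hE).1.trans
        (Finset.subset_biUnion_of_mem J (Finset.mem_range.2 (Nat.lt_succ_self b)))
    · exact (ih hW').trans (Finset.biUnion_subset_biUnion_of_subset_left _
        (Finset.range_mono (Nat.le_succ b)))

lemma disjoint_biUnion (hJ : ∀ i j, i < j → Disjoint (J j) (J i)) (b : ℕ) :
    Disjoint (J b) ((Finset.range b).biUnion J) := by
  rw [Finset.disjoint_biUnion_right]
  exact fun i hi => hJ i b (Finset.mem_range.1 hi)

lemma Good.card (hJ : ∀ i j, i < j → Disjoint (J j) (J i)) {b : ℕ} {W : Finset ℕ}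
    (h : Good J R b W) : W.card = R * b := by
  induction b generalizing W with
  | zero => rw [show W = ∅ from h]; simp
  | succ b ih =>
    obtain ⟨E, hE, W', hW', rfl⟩ := h
    obtain ⟨h1, h2⟩ := Finset.mem_powersetCard.1 hE
    rw [Finset.card_union_of_disjoint ((disjoint_biUnion hJ b).mono h1 hW'.subset), ih hW', h2]
    ring

/-- Dropping the condition on the unselected elements costs at most the factor `∏ (1 - 1 / q)` over
all of `S`. -/
lemma bw_winv_ge (S W : Finset ℕ) :
    (∏ q ∈ S, (1 - winv q)) * ∏ q ∈ W, winv q ≤ bw winv S W := by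
  unfold bw
  rw [mul_comm]
  refine mul_le_mul_of_nonneg_left ?_ (prod_winv_nonneg W)
  refine Finset.prod_le_prod_of_subset_of_le_one Finset.sdiff_subset
    (fun q _ => sub_nonneg.2 (winv_le_one q)) fun q _ _ => ?_
  linarith [winv_nonneg q]

/-- The event that exactly `R` elements of each `J i` are selected bounds an average over all
random sets from below. -/
lemma It_le_Ex (hJ : ∀ i j, i < j → Disjoint (J j) (J i)) (b : ℕ) {f : Finset ℕ → ℝ}
    (hf : ∀ W, 0 ≤ f W) :
    (∏ i ∈ Finset.range b, ∏ q ∈ J i, (1 - winv q)) * It J R b f ≤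
      Ex winv ((Finset.range b).biUnion J) f := by
  induction b generalizing f with
  | zero => simp [It, Ex_empty]
  | succ b ih =>
    have hd := disjoint_biUnion hJ b
    have e : (Finset.range (b + 1)).biUnion J = J b ∪ (Finset.range b).biUnion J := by
      rw [Finset.range_add_one, Finset.biUnion_insert]
    rw [e, Ex_union hd, Finset.prod_range_succ]
    simp only [It]
    unfold Ex
    rw [Finset.mul_sum]
    refine (Finset.sum_le_sum fun E hE => ?_).trans
      (Finset.sum_le_sum_of_subset_of_nonneg
        (fun E hE => Finset.mem_powerset.2 (Finset.mem_powersetCard.1 hE).1) fun E hE _ => ?_)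
    · have h1 := ih (f := fun W => f (E ∪ W)) fun W => hf _
      have h2 := bw_winv_ge (J b) E
      have h3 := Ex_nonneg (π := winv) (S := (Finset.range b).biUnion J) winv_nonneg winv_le_one
        (f := fun W => f (E ∪ W)) fun W _ => hf _
      have h4 : 0 ≤ (∏ q ∈ J b, (1 - winv q)) * ∏ q ∈ E, winv q :=
        mul_nonneg (Finset.prod_nonneg fun q _ => sub_nonneg.2 (winv_le_one q))
          (prod_winv_nonneg E)
      calc _ = ((∏ q ∈ J b, (1 - winv q)) * ∏ q ∈ E, winv q) *
            ((∏ i ∈ Finset.range b, ∏ q ∈ J i, (1 - winv q)) * It J R b fun W => f (E ∪ W)) := by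
            ring
        _ ≤ ((∏ q ∈ J b, (1 - winv q)) * ∏ q ∈ E, winv q) * _ :=
            mul_le_mul_of_nonneg_left h1 h4
        _ ≤ _ := mul_le_mul_of_nonneg_right h2 h3
    · exact mul_nonneg (bw_nonneg winv_nonneg winv_le_one _)
        (Ex_nonneg winv_nonneg winv_le_one fun W _ => hf _)

end

/-! ### The second moment of the number of pairs of divisors -/

section
variable {J : ℕ → Finset ℕ} {R : ℕ}

lemma It_pairs_succ (hJ : ∀ i j, i < j → Disjoint (J j) (J i)) (h x : ℝ) (b : ℕ) :
    It J R (b + 1) (fun W => pairs h W x) =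
      ∑ E ∈ (J b).powersetCard R, (∏ q ∈ E, winv q) *
        ∑ A ∈ E.powerset, ∑ B ∈ E.powerset, It J R b (fun W => pairs h W (x + ell A - ell B)) := by
  simp only [It]
  refine Finset.sum_congr rfl fun E hE => ?_
  congr 1
  rw [It_congr fun W hW => pairs_union (E := E) ((disjoint_biUnion hJ b).mono
    (Finset.mem_powersetCard.1 hE).1 hW.subset) h x, It_sum]
  exact Finset.sum_congr rfl fun A _ => It_sum _ _ _

/-- A random shift by `g q`, whose values have concentration at most `γ` at scale `h`, leaves at
most a proportion `γ` of the `4 ^ (R b)` pairs of subsets close to each other. -/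
lemma sum_winv_It_pairs_le (hJ : ∀ i j, i < j → Disjoint (J j) (J i)) {S : Finset ℕ} {g : ℕ → ℝ}
    {h γ : ℝ} (hγ : ∀ x, ∑ q ∈ S, winv q * ind (|x + g q| < h) ≤ γ) (b : ℕ) (y : ℝ) :
    ∑ q ∈ S, winv q * It J R b (fun W => pairs h W (y + g q)) ≤
      4 ^ (R * b) * γ * ∏ i ∈ Finset.range b, esym (J i) R := by
  have e : ∑ q ∈ S, winv q * It J R b (fun W => pairs h W (y + g q)) =
      It J R b (fun W => ∑ q ∈ S, winv q * pairs h W (y + g q)) := by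
    rw [It_sum]
    refine Finset.sum_congr rfl fun q _ => ?_
    simpa using (It_lin (J := J) (R := R) b (fun W => pairs h W (y + g q)) (fun _ => 0)
      (winv q) 0).symm
  rw [e, ← It_one, show (4 : ℝ) ^ (R * b) * γ * It J R b (fun _ => 1) =
    It J R b (fun _ => 4 ^ (R * b) * γ) by
      simpa using (It_lin (J := J) (R := R) b (fun _ => 1) (fun _ => 0)
      (4 ^ (R * b) * γ) 0).symm]
  refine It_mono fun W hW => ?_
  unfold pairs
  simp only [Finset.mul_sum]
  rw [Finset.sum_comm]
  have h1 : ∀ A ∈ W.powerset, ∑ q ∈ S, ∑ B ∈ W.powerset,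
      winv q * ind (|y + g q + ell A - ell B| < h) ≤ 2 ^ (R * b) * γ := by
    intro A _
    rw [Finset.sum_comm]
    refine (Finset.sum_le_card_nsmul _ _ γ fun B _ => ?_).trans (le_of_eq ?_)
    · refine (Finset.sum_congr rfl fun q _ => ?_).trans_le (hγ (y + ell A - ell B))
      congr 4
      ring
    · rw [Finset.card_powerset, hW.card hJ, nsmul_eq_mul]
      push_cast
      rfl
  refine (Finset.sum_le_card_nsmul _ _ _ h1).trans (le_of_eq ?_)
  rw [Finset.card_powerset, hW.card hJ, nsmul_eq_mul, ← mul_assoc,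
    show (4 : ℝ) = 2 * 2 by norm_num, mul_pow]
  push_cast
  ring

/-- Second moment estimate: on average over `W`, the number of pairs of divisors whose ratio is
within `e ^ h` of a given number exceeds the number of diagonal pairs by at most a factor
`1 + C b`. -/
lemma It_pairs_le {r : ℕ} {h c κ : ℝ} {K : ℕ} (hc : 0 ≤ c)
    (hJ : ∀ i j, i < j → Disjoint (J j) (J i))
    (hconc : ∀ b < K, ∀ x, ∑ q ∈ J b, winv q * ind (|x + Real.log q| < h) ≤
      c * (1 / 2 : ℝ) ^ ((r + 1) * b))
    (hκ : ∀ b < K, esym (J b) r ≤ κ * esym (J b) (r + 1)) (b : ℕ) (hb : b ≤ K) (x : ℝ) :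
    It J (r + 1) b (fun W => pairs h W x) ≤
      (∏ i ∈ Finset.range b, esym (J i) (r + 1)) * 2 ^ ((r + 1) * b) *
        (1 + 2 * κ * c * 4 ^ r * b) := by
  -- Let `E` be the set chosen in the last range and `A`, `B` its parts in the two divisors. The pairs
  -- with `A = B` are counted by the induction hypothesis; otherwise some `q ∈ E` lies in exactly one of
  -- `A` and `B`, and averaging over `q` alone makes the ratio close only rarely.
  induction b generalizing x with
  | zero =>
    simp only [It, pairs]
    simpa [ell] using ind_le_one _
  | succ b ih =>
    have ih := ih (by omega)
    have hbK : b < K := hb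
    set P := ∏ i ∈ Finset.range b, esym (J i) (r + 1) with hP
    have hP0 : 0 ≤ P := Finset.prod_nonneg fun i _ => esym_nonneg _ _
    set X := P * 2 ^ ((r + 1) * b) * (1 + 2 * κ * c * 4 ^ r * b) with hX
    set n : ℝ → ℝ := fun y => It J (r + 1) b (fun W => pairs h W y) with hn
    have hn0 : ∀ y, 0 ≤ n y := fun y => It_nonneg fun W => pairs_nonneg _ _ _
    have hY : ∀ y, ∑ q ∈ J b, winv q * (n (y + Real.log q) + n (y - Real.log q)) ≤
        2 * (c * 2 ^ ((r + 1) * b) * P) := by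
      intro y
      have e4 : (4 : ℝ) ^ ((r + 1) * b) * (c * (1 / 2 : ℝ) ^ ((r + 1) * b)) * P =
          c * 2 ^ ((r + 1) * b) * P := by
        have : (4 : ℝ) ^ ((r + 1) * b) * (1 / 2 : ℝ) ^ ((r + 1) * b) = 2 ^ ((r + 1) * b) := by
          rw [← mul_pow]; norm_num
        rw [← this]; ring
      have h1 := sum_winv_It_pairs_le (R := r + 1) hJ (hconc b hbK) b y
      have h2 := sum_winv_It_pairs_le (R := r + 1) (g := fun q => - Real.log q) hJ (h := h)
        (γ := c * (1 / 2 : ℝ) ^ ((r + 1) * b)) (S := J b) (fun x => by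
          refine le_trans (le_of_eq ?_) (hconc b hbK (-x))
          refine Finset.sum_congr rfl fun q _ => ?_
          rw [← abs_neg]
          congr 4
          ring) b y
      rw [e4] at h1 h2
      simp only [mul_add, Finset.sum_add_distrib, sub_eq_add_neg]
      linarith
    rw [It_pairs_succ hJ]
    obtain ⟨Φ, hΦ⟩ : ∃ Φ : ℕ → Finset ℕ → ℝ, ∀ q F, Φ q F =
        (winv q * ∏ p ∈ F, winv p) * ∑ A ∈ F.powerset, ∑ B ∈ F.powerset,
          (n (x + ell A - ell B + Real.log q) + n (x + ell A - ell B - Real.log q)) :=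
      ⟨_, fun _ _ => rfl⟩
    have hE : ∀ E ∈ (J b).powersetCard (r + 1), (∏ q ∈ E, winv q) *
        ∑ A ∈ E.powerset, ∑ B ∈ E.powerset, n (x + ell A - ell B) ≤
        (∏ q ∈ E, winv q) * (2 ^ (r + 1) * X) + ∑ q ∈ E, Φ q
          (E.erase q) := by
      intro E hE
      have h1 := sum_pairs_le (E := E) hn0 ih x
      rw [(Finset.mem_powersetCard.1 hE).2] at h1
      refine (mul_le_mul_of_nonneg_left h1 (prod_winv_nonneg E)).trans (le_of_eq ?_)
      rw [mul_add, Finset.mul_sum]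
      congr 1
      refine Finset.sum_congr rfl fun q hq => ?_
      rw [hΦ, Finset.mul_prod_erase E winv hq]
    have hF : ∀ F ∈ (J b).powersetCard r, ∑ q ∈ J b \ F, Φ q F ≤
        (∏ p ∈ F, winv p) * (4 ^ r * (2 * (c * 2 ^ ((r + 1) * b) * P))) := by
      intro F hF
      have h0 : ∀ (y : ℝ) (q : ℕ), 0 ≤ n (y + Real.log q) + n (y - Real.log q) :=
        fun y q => add_nonneg (hn0 _) (hn0 _)
      have hΦ0 : ∀ q, 0 ≤ Φ q F := fun q => by
        rw [hΦ]
        exact mul_nonneg (mul_nonneg (winv_nonneg q) (prod_winv_nonneg F))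
          (Finset.sum_nonneg fun A _ => Finset.sum_nonneg fun B _ => h0 _ _)
      refine (Finset.sum_le_sum_of_subset_of_nonneg (f := fun q => Φ q F) (t := J b)
        Finset.sdiff_subset fun q _ _ => hΦ0 q).trans ?_
      have e : ∑ q ∈ J b, Φ q F =
          (∏ p ∈ F, winv p) * ∑ A ∈ F.powerset, ∑ B ∈ F.powerset, ∑ q ∈ J b, winv q *
            (n (x + ell A - ell B + Real.log q) + n (x + ell A - ell B - Real.log q)) := by
        have e1 : ∑ A ∈ F.powerset, ∑ B ∈ F.powerset, ∑ q ∈ J b, winv q *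
            (n (x + ell A - ell B + Real.log q) + n (x + ell A - ell B - Real.log q)) =
            ∑ q ∈ J b, ∑ A ∈ F.powerset, ∑ B ∈ F.powerset, winv q *
            (n (x + ell A - ell B + Real.log q) + n (x + ell A - ell B - Real.log q)) := by
          rw [Finset.sum_congr rfl fun A _ => Finset.sum_comm, Finset.sum_comm]
        rw [e1, Finset.mul_sum]
        refine Finset.sum_congr rfl fun q _ => ?_
        rw [hΦ, mul_comm (winv q), mul_assoc]
        simp only [Finset.mul_sum]
      rw [e]
      refine mul_le_mul_of_nonneg_left ?_ (prod_winv_nonneg F)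
      have h1 : ∀ A ∈ F.powerset, ∑ B ∈ F.powerset, ∑ q ∈ J b, winv q *
            (n (x + ell A - ell B + Real.log q) + n (x + ell A - ell B - Real.log q)) ≤
            2 ^ r * (2 * (c * 2 ^ ((r + 1) * b) * P)) := by
        intro A _
        refine (Finset.sum_le_card_nsmul _ _ _ fun B _ => hY _).trans (le_of_eq ?_)
        rw [Finset.card_powerset, (Finset.mem_powersetCard.1 hF).2, nsmul_eq_mul]
        push_cast; rfl
      refine (Finset.sum_le_card_nsmul _ _ _ h1).trans (le_of_eq ?_)
      rw [Finset.card_powerset, (Finset.mem_powersetCard.1 hF).2, nsmul_eq_mul, ← mul_assoc,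
        show (4 : ℝ) = 2 * 2 by norm_num, mul_pow]
      push_cast; rfl
    refine (Finset.sum_le_sum hE).trans ?_
    rw [Finset.sum_add_distrib, sum_powersetCard_erase]
    refine (add_le_add_right (Finset.sum_le_sum hF) _).trans ?_
    rw [← Finset.sum_mul, ← Finset.sum_mul, Finset.prod_range_succ, ← hP]
    change esym (J b) (r + 1) * (2 ^ (r + 1) * X) +
      esym (J b) r * (4 ^ r * (2 * (c * 2 ^ ((r + 1) * b) * P))) ≤ _
    have h5 := mul_le_mul_of_nonneg_right (hκ b hbK)
      (show 0 ≤ 4 ^ r * (2 * (c * 2 ^ ((r + 1) * b) * P)) by positivity)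
    refine (add_le_add_right h5 _).trans ?_
    have hes := esym_nonneg (J b) (r + 1)
    have hκ0 : 0 ≤ κ * esym (J b) (r + 1) := (esym_nonneg _ _).trans (hκ b hbK)
    have h2 : (1 : ℝ) ≤ 2 ^ (r + 1) := one_le_pow₀ (by norm_num)
    have h6 : 0 ≤ κ * esym (J b) (r + 1) * (4 ^ r * (2 * (c * 2 ^ ((r + 1) * b) * P))) := by
      positivity
    have h7 := mul_le_mul_of_nonneg_left h2 h6
    rw [mul_one] at h7
    refine (add_le_add_right h7 _).trans (le_of_eq ?_)
    rw [hX, show (r + 1) * (b + 1) = (r + 1) * b + (r + 1) by ring, pow_add 2 ((r + 1) * b)]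
    push_cast
    ring

end

/-! ### Completing a divisor by one large prime -/

/-- The number of `D ⊆ W` for which `p * ∏ D` lies in the interval `(T, H T]`. -/
noncomputable def hitCount (T H : ℝ) (W : Finset ℕ) (p : ℕ) : ℝ :=
  ∑ D ∈ W.powerset, ind (T < p * ∏ q ∈ D, (q : ℝ) ∧ p * ∏ q ∈ D, (q : ℝ) ≤ H * T)

lemma log_prod_eq_ell {D : Finset ℕ} (hD : ∀ q ∈ D, q.Prime) :
    Real.log (∏ q ∈ D, (q : ℝ)) = ell D := by
  unfold ell
  rw [Real.log_prod]
  intro q hq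
  exact_mod_cast (hD q hq).ne_zero

lemma one_le_prod {D : Finset ℕ} (hD : ∀ q ∈ D, q.Prime) : 1 ≤ ∏ q ∈ D, (q : ℝ) :=
  Finset.one_le_prod fun q hq => by exact_mod_cast (hD q hq).one_lt.le

section
variable {T H g C : ℝ} {W : Finset ℕ}

lemma sum_hit_eq (hH : 1 ≤ H) (hW : ∀ q ∈ W, q.Prime)
    (hg : (∏ q ∈ W, (q : ℝ)) * g ≤ T) (hT : 1 ≤ T) {D : Finset ℕ} (hD : D ⊆ W) :
    ∑ p ∈ primesIoc g (H * T),
      ind (T < p * ∏ q ∈ D, (q : ℝ) ∧ p * ∏ q ∈ D, (q : ℝ) ≤ H * T) * (Real.log p / p) =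
      ∑ p ∈ primesIoc (T / ∏ q ∈ D, (q : ℝ)) (H * (T / ∏ q ∈ D, (q : ℝ))), Real.log p / p := by
  have h1 : 1 ≤ ∏ q ∈ D, (q : ℝ) := one_le_prod fun q hq => hW q (hD hq)
  have hle : ∏ q ∈ D, (q : ℝ) ≤ ∏ q ∈ W, (q : ℝ) :=
    Finset.prod_le_prod_of_subset_of_one_le hD (fun q _ => by positivity) fun q hq _ => by
      exact_mod_cast (hW q hq).one_lt.le
  set P := ∏ q ∈ D, (q : ℝ) with hP
  have hP0 : 0 < P := by linarith
  have hgP : g ≤ T / P := by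
    rw [le_div_iff₀ hP0]
    rcases le_total 0 g with h | h
    · exact (mul_comm g P ▸ mul_le_mul_of_nonneg_right hle h).trans hg
    · nlinarith
  have hTP : H * (T / P) ≤ H * T :=
    mul_le_mul_of_nonneg_left (div_le_self (by linarith) h1) (by linarith)
  symm
  refine Finset.sum_subset_zero_on_sdiff ?_ ?_ ?_
  · intro p hp
    rw [mem_primesIoc] at hp ⊢
    exact ⟨hp.1, hgP.trans_lt hp.2.1, hp.2.2.trans hTP⟩
  · intro p hp
    rw [Finset.mem_sdiff, mem_primesIoc, mem_primesIoc] at hp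
    rw [ind_of_not, zero_mul]
    rintro ⟨h2, h3⟩
    refine hp.2 ⟨hp.1.1, ?_, ?_⟩
    · rwa [div_lt_iff₀ hP0]
    · rwa [← mul_div_assoc, le_div_iff₀ hP0]
  · intro p hp
    rw [mem_primesIoc, ← mul_div_assoc, le_div_iff₀ hP0, div_lt_iff₀ hP0] at hp
    rw [ind_of hp.2, one_mul]

/-- For a fixed divisor `D`, the primes that complete it to an element of `(T, H T]` have
logarithmic mass `log H + O(1)`. -/
lemma hit_bounds (hC : ∀ a b : ℝ, 1 ≤ a → a ≤ b →
      |∑ p ∈ primesIoc a b, Real.log p / p - (Real.log b - Real.log a)| ≤ C)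
    (hH : 1 ≤ H) (hW : ∀ q ∈ W, q.Prime) (hg1 : 1 ≤ g)
    (hg : (∏ q ∈ W, (q : ℝ)) * g ≤ T) (hT : 1 ≤ T) {D : Finset ℕ} (hD : D ⊆ W) :
    |∑ p ∈ primesIoc g (H * T),
      ind (T < p * ∏ q ∈ D, (q : ℝ) ∧ p * ∏ q ∈ D, (q : ℝ) ≤ H * T) * (Real.log p / p) -
        Real.log H| ≤ C := by
  rw [sum_hit_eq hH hW hg hT hD]
  have h1 : 1 ≤ ∏ q ∈ D, (q : ℝ) := one_le_prod fun q hq => hW q (hD hq)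
  have hle : ∏ q ∈ D, (q : ℝ) ≤ ∏ q ∈ W, (q : ℝ) :=
    Finset.prod_le_prod_of_subset_of_one_le hD (fun q _ => by positivity) fun q hq _ => by
      exact_mod_cast (hW q hq).one_lt.le
  set P := ∏ q ∈ D, (q : ℝ) with hP
  have hP0 : 0 < P := by linarith
  have hgP : 1 ≤ T / P := by
    rw [le_div_iff₀ hP0]
    nlinarith
  have := hC (T / P) (H * (T / P)) hgP (by nlinarith)
  rwa [Real.log_mul (by linarith) (by linarith), add_sub_cancel_right] at this

/-- First moment of the number of subsets of `W` completed by `p`. -/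
lemma sum_hitCount_ge (hC : ∀ a b : ℝ, 1 ≤ a → a ≤ b →
      |∑ p ∈ primesIoc a b, Real.log p / p - (Real.log b - Real.log a)| ≤ C)
    (hH : 1 ≤ H) (hW : ∀ q ∈ W, q.Prime) (hg1 : 1 ≤ g)
    (hg : (∏ q ∈ W, (q : ℝ)) * g ≤ T) (hT : 1 ≤ T) :
    2 ^ W.card * (Real.log H - C) ≤
      ∑ p ∈ primesIoc g (H * T), hitCount T H W p * (Real.log p / p) := by
  unfold hitCount
  simp only [Finset.sum_mul]
  rw [Finset.sum_comm]
  have := Finset.card_nsmul_le_sum W.powerset (fun D => ∑ p ∈ primesIoc g (H * T),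
      ind (T < p * ∏ q ∈ D, (q : ℝ) ∧ p * ∏ q ∈ D, (q : ℝ) ≤ H * T) * (Real.log p / p))
      (Real.log H - C) fun D hD => by
    have := abs_le.1 (hit_bounds hC hH hW hg1 hg hT (Finset.mem_powerset.1 hD))
    linarith [this.1]
  rw [Finset.card_powerset, nsmul_eq_mul] at this
  exact_mod_cast this

/-- Second moment of the number of subsets of `W` completed by `p`: two subsets are completed by a
common prime only if the ratio of their products is within a factor `H`. -/
lemma sum_hitCount_sq_le (hC : ∀ a b : ℝ, 1 ≤ a → a ≤ b →
      |∑ p ∈ primesIoc a b, Real.log p / p - (Real.log b - Real.log a)| ≤ C)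
    (hH : 1 ≤ H) (hW : ∀ q ∈ W, q.Prime) (hg1 : 1 ≤ g)
    (hg : (∏ q ∈ W, (q : ℝ)) * g ≤ T) (hT : 1 ≤ T) :
    ∑ p ∈ primesIoc g (H * T), hitCount T H W p ^ 2 * (Real.log p / p) ≤
      (Real.log H + C) * pairs (Real.log H) W 0 := by
  have e : ∑ p ∈ primesIoc g (H * T), hitCount T H W p ^ 2 * (Real.log p / p) =
      ∑ A ∈ W.powerset, ∑ B ∈ W.powerset, ∑ p ∈ primesIoc g (H * T),
        ind (T < p * ∏ q ∈ A, (q : ℝ) ∧ p * ∏ q ∈ A, (q : ℝ) ≤ H * T) *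
        ind (T < p * ∏ q ∈ B, (q : ℝ) ∧ p * ∏ q ∈ B, (q : ℝ) ≤ H * T) * (Real.log p / p) := by
    rw [Finset.sum_congr rfl fun A _ => Finset.sum_comm, Finset.sum_comm]
    refine Finset.sum_congr rfl fun p _ => ?_
    rw [sq]
    unfold hitCount
    rw [Finset.sum_mul_sum, Finset.sum_mul]
    exact Finset.sum_congr rfl fun A _ => Finset.sum_mul _ _ _
  rw [e]
  unfold pairs
  rw [Finset.mul_sum]
  refine Finset.sum_le_sum fun A hA => ?_
  rw [Finset.mul_sum]
  refine Finset.sum_le_sum fun B hB => ?_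
  have hA := Finset.mem_powerset.1 hA
  have hB := Finset.mem_powerset.1 hB
  have hA1 := one_le_prod fun q hq => hW q (hA hq)
  have hB1 := one_le_prod fun q hq => hW q (hB hq)
  have hlp : ∀ p : ℕ, 0 ≤ Real.log p / p := fun p =>
    div_nonneg (Real.log_natCast_nonneg p) (Nat.cast_nonneg p)
  by_cases hAB : |0 + ell A - ell B| < Real.log H
  · rw [ind_of hAB, mul_one]
    have h1 := abs_le.1 (hit_bounds hC hH hW hg1 hg hT hA)
    refine le_trans (Finset.sum_le_sum fun p _ => ?_) (by linarith [h1.2] : _ ≤ _)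
    exact mul_le_mul_of_nonneg_right (mul_le_of_le_one_right (ind_nonneg _) (ind_le_one _))
      (hlp p)
  · rw [ind_of_not hAB, mul_zero]
    refine (Finset.sum_eq_zero fun p hp => ?_).le
    by_cases h1 : T < p * ∏ q ∈ A, (q : ℝ) ∧ p * ∏ q ∈ A, (q : ℝ) ≤ H * T
    · by_cases h2 : T < p * ∏ q ∈ B, (q : ℝ) ∧ p * ∏ q ∈ B, (q : ℝ) ≤ H * T
      · exfalso
        have hp0 : (0 : ℝ) < p := by exact_mod_cast ((mem_primesIoc.1 hp).1).pos
        apply hAB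
        rw [← log_prod_eq_ell fun q hq => hW q (hA hq), ← log_prod_eq_ell fun q hq => hW q (hB hq)]
        have l : ∀ x : ℝ, 1 ≤ x → (T < p * x ∧ p * x ≤ H * T) →
            Real.log T < Real.log p + Real.log x ∧
            Real.log p + Real.log x ≤ Real.log H + Real.log T := by
          intro x hx hh
          rw [← Real.log_mul (by positivity) (by positivity),
            ← Real.log_mul (by positivity) (by positivity)]
          exact ⟨Real.log_lt_log (by linarith) hh.1, Real.log_le_log (by positivity) hh.2⟩
        have l1 := l _ hA1 h1
        have l2 := l _ hB1 h2
        rw [abs_lt]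
        constructor <;> linarith [l1.1, l1.2, l2.1, l2.2]
      · rw [ind_of_not h2]; ring
    · rw [ind_of_not h1]; ring

end

/-! ### Lower bound for the probability of a divisor, in terms of prime ranges -/

/-- The probability that some element of `Q` is selected. -/
lemma Ex_meets_ge {G Q : Finset ℕ} (hQ : Q ⊆ G) :
    (∑ p ∈ Q, winv p) / (1 + ∑ p ∈ Q, winv p) ≤
      Ex winv G (fun W => ind (∃ p ∈ Q, p ∈ W)) := by
  set s := ∑ p ∈ Q, winv p with hs
  have hs0 : 0 ≤ s := Finset.sum_nonneg fun p _ => winv_nonneg p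
  have h1 : Ex winv G (fun W => ind (∃ p ∈ Q, p ∈ W)) =
      1 - ∏ p ∈ Q, (1 - winv p) := by
    have e1 : Ex winv G (fun W => ind (∃ p ∈ Q, p ∈ W)) =
        Ex winv G (fun W => (fun V => 1 + (-1) * ∏ p ∈ Q, if p ∈ V then (0 : ℝ) else 1) (W ∩ Q)) := by
      refine Ex_congr fun W _ => ?_
      by_cases h : ∃ p ∈ Q, p ∈ W
      · obtain ⟨p, hp, hpW⟩ := h
        rw [ind_of ⟨p, hp, hpW⟩]
        simp only
        rw [Finset.prod_eq_zero hp (by simp [hp, hpW])]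
        ring
      · rw [ind_of_not h]
        push Not at h
        simp only
        rw [Finset.prod_eq_one fun p hp => by simp [h p hp]]
        ring
    rw [e1, Ex_inter hQ (fun V => 1 + (-1) * ∏ p ∈ Q, if p ∈ V then (0 : ℝ) else 1), Ex_add,
      Ex_const_mul, Ex_const, Ex_prod_ite (fun _ => 0) (fun _ => 1)]
    simp
    ring
  have h2 : ∏ p ∈ Q, (1 - winv p) ≤ Real.exp (-s) := by
    rw [hs, ← Finset.sum_neg_distrib, Real.exp_sum]
    exact Finset.prod_le_prod (fun p _ => sub_nonneg.2 (winv_le_one p))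
      fun p _ => Real.one_sub_le_exp_neg _
  have h3 : Real.exp (-s) ≤ 1 / (1 + s) := by
    rw [Real.exp_neg, ← one_div]
    exact one_div_le_one_div_of_le (by linarith) (by linarith [Real.add_one_le_exp s])
  have h4 : s / (1 + s) = 1 - 1 / (1 + s) := by
    field_simp
    ring
  rw [h1, h4]
  linarith

/-- A mass lower bound obtained from the first two moments by the Cauchy–Schwarz inequality. -/
lemma moment_aux {h C k N s L : ℝ} (hC : 0 < C) (hh : 2 * C ≤ h) (hk : 0 ≤ k) (hN : 0 < N)
    (hL : 0 < L) (hs : 0 ≤ s)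
    (hcs : (k * (h - C)) ^ 2 ≤ (2 * L * s) * ((h + C) * N)) :
    k ^ 2 * h / (12 * L) / N ≤ s := by
  rw [div_le_iff₀ hN, div_le_iff₀ (by positivity)]
  have h1 : (k * (h / 2)) ^ 2 ≤ (k * (h - C)) ^ 2 := by
    apply pow_le_pow_left₀
    · exact mul_nonneg hk (by linarith)
    · exact mul_le_mul_of_nonneg_left (by linarith) hk
  have h2 : (2 * L * s) * ((h + C) * N) ≤ (2 * L * s) * ((3 / 2 * h) * N) := by
    refine mul_le_mul_of_nonneg_left ?_ (by positivity)
    exact mul_le_mul_of_nonneg_right (by linarith) hN.le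
  have h3 : h * (k ^ 2 * h) ≤ h * (s * N * (12 * L)) := by nlinarith
  exact le_of_mul_le_mul_left h3 (by linarith)

/-- The Cauchy–Schwarz inequality for the support of `N`. -/
lemma cs_aux {G : Finset ℕ} {N w : ℕ → ℝ} (hw : ∀ p, 0 ≤ w p) :
    (∑ p ∈ G, N p * w p) ^ 2 ≤
      (∑ p ∈ G.filter (fun p => N p ≠ 0), w p) * ∑ p ∈ G, N p ^ 2 * w p := by
  have e1 : ∑ p ∈ G, N p * w p = ∑ p ∈ G.filter (fun p => N p ≠ 0), N p * w p := by
    rw [Finset.sum_filter]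
    refine Finset.sum_congr rfl fun p _ => ?_
    split_ifs with h
    · rfl
    · push Not at h; rw [h, zero_mul]
  have e2 : ∑ p ∈ G, N p ^ 2 * w p = ∑ p ∈ G.filter (fun p => N p ≠ 0), N p ^ 2 * w p := by
    rw [Finset.sum_filter]
    refine Finset.sum_congr rfl fun p _ => ?_
    split_ifs with h
    · rfl
    · push Not at h; rw [h]; ring
  rw [e1, e2]
  exact Finset.sum_sq_le_sum_mul_sum_of_sq_le_mul _ (fun p _ => hw p)
    (fun p _ => mul_nonneg (sq_nonneg _) (hw p)) fun p _ => le_of_eq (by ring)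

lemma pairs_pos {h : ℝ} (hh : 0 < h) (W : Finset ℕ) : 0 < pairs h W 0 := by
  have h1 : ind (|0 + ell ∅ - ell ∅| < h) ≤ pairs h W 0 := by
    unfold pairs
    refine le_trans ?_ (Finset.single_le_sum (f := fun A => ∑ B ∈ W.powerset,
      ind (|0 + ell A - ell B| < h)) (fun A _ => Finset.sum_nonneg fun B _ => ind_nonneg _)
      (Finset.empty_mem_powerset W))
    exact Finset.single_le_sum (f := fun B => ind (|0 + ell ∅ - ell B| < h))
      (fun B _ => ind_nonneg _) (Finset.empty_mem_powerset W)
  rw [ind_of (by simpa [ell] using hh)] at h1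
  linarith

/-- For a fixed set `W` of primes up to `g`, the probability that completing `W` by a random set of
primes in `(g, H T]` produces a divisor in `(T, H T]`. -/
lemma completion_ge {T H g C : ℝ} {W : Finset ℕ} (hC0 : 0 < C)
    (hC : ∀ a b : ℝ, 1 ≤ a → a ≤ b →
      |∑ p ∈ primesIoc a b, Real.log p / p - (Real.log b - Real.log a)| ≤ C)
    (hH : 1 < H) (hHT : H ≤ T) (hCh : 2 * C ≤ Real.log H) (hW : ∀ q ∈ W, q.Prime)
    (hWg : ∀ q ∈ W, (q : ℝ) ≤ g) (hg1 : 1 ≤ g) (hg : (∏ q ∈ W, (q : ℝ)) * g ≤ T) :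
    4 ^ W.card * Real.log H / (12 * Real.log T) /
        (4 ^ W.card * Real.log H / (12 * Real.log T) + pairs (Real.log H) W 0) ≤
      Ex winv (primesIoc g (H * T)) (fun V => ind (HasDiv T (H * T) (W ∪ V))) := by
  have hT1 : 1 < T := hH.trans_le hHT
  have hL : 0 < Real.log T := Real.log_pos hT1
  have hh : 0 < Real.log H := Real.log_pos hH
  have hN := pairs_pos hh W
  set G := primesIoc g (H * T) with hG
  set N := pairs (Real.log H) W 0
  set Q := G.filter (fun p => hitCount T H W p ≠ 0) with hQ
  have hlp : ∀ p : ℕ, 0 ≤ Real.log p / p := fun p =>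
    div_nonneg (Real.log_natCast_nonneg p) (Nat.cast_nonneg p)
  have hs0 : 0 ≤ ∑ p ∈ Q, winv p := Finset.sum_nonneg fun p _ => winv_nonneg p
  have hcs : (2 ^ W.card * (Real.log H - C)) ^ 2 ≤
      (2 * Real.log T * ∑ p ∈ Q, winv p) * ((Real.log H + C) * N) := by
    have h1 := sum_hitCount_ge hC hH.le hW hg1 hg hT1.le
    have h2 := sum_hitCount_sq_le hC hH.le hW hg1 hg hT1.le
    have h3 := cs_aux (G := G) (N := hitCount T H W) hlp
    have h4 : ∑ p ∈ Q, Real.log p / p ≤ 2 * Real.log T * ∑ p ∈ Q, winv p := by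
      rw [Finset.mul_sum]
      refine Finset.sum_le_sum fun p hp => ?_
      have hp := mem_primesIoc.1 (Finset.mem_filter.1 hp).1
      have hp0 : (0 : ℝ) < p := by exact_mod_cast hp.1.pos
      have : Real.log p ≤ 2 * Real.log T := by
        refine (Real.log_le_log hp0 hp.2.2).trans ?_
        rw [Real.log_mul (by linarith) (by linarith)]
        linarith [Real.log_le_log (by linarith) hHT]
      rw [winv, mul_one_div]
      exact div_le_div_of_nonneg_right this hp0.le
    refine (pow_le_pow_left₀ (mul_nonneg (by positivity) (by linarith)) h1 2).trans
      (h3.trans ?_)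
    refine mul_le_mul h4 h2 (Finset.sum_nonneg fun p _ => mul_nonneg (sq_nonneg _) (hlp p)) ?_
    positivity
  have hs := moment_aux hC0 hCh (by positivity) hN hL hs0 hcs
  rw [← pow_mul, mul_comm _ 2, pow_mul, show (2 : ℝ) ^ 2 = 4 by norm_num] at hs
  set a := 4 ^ W.card * Real.log H / (12 * Real.log T) with ha
  have ha0 : 0 < a := by positivity
  have h5 : a / (a + N) ≤ (∑ p ∈ Q, winv p) / (1 + ∑ p ∈ Q, winv p) := by
    rw [div_le_div_iff₀ (by positivity) (by positivity)]
    rw [div_le_iff₀ hN] at hs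
    nlinarith
  refine h5.trans ((Ex_meets_ge (Finset.filter_subset _ G)).trans ?_)
  refine Ex_mono winv_nonneg winv_le_one fun V _ => ind_mono ?_
  rintro ⟨p, hpQ, hpV⟩
  obtain ⟨hpG, hp0⟩ := Finset.mem_filter.1 hpQ
  obtain ⟨D, hD, hne⟩ := Finset.exists_ne_zero_of_sum_ne_zero hp0
  have hhit : T < p * ∏ q ∈ D, (q : ℝ) ∧ p * ∏ q ∈ D, (q : ℝ) ≤ H * T := by
    by_contra h
    exact hne (ind_of_not h)
  have hD := Finset.mem_powerset.1 hD
  have hpD : p ∉ D := fun h => by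
    have := hWg p (hD h)
    have := (mem_primesIoc.1 hpG).2.1
    linarith
  refine ⟨insert p D, Finset.insert_subset (Finset.mem_union_right _ hpV)
    (hD.trans Finset.subset_union_left), ?_⟩
  rw [Finset.prod_insert hpD]
  exact hhit

/-- The convex function `N ↦ a / (a + N)` lies above its tangent line at `N = t - a`. -/
lemma tangent_aux {a t N : ℝ} (ha : 0 < a) (ht : 0 < t) (hN : 0 < N) :
    2 * a / t - a * a / t ^ 2 + (-(a / t ^ 2)) * N ≤ a / (a + N) := by
  rw [le_div_iff₀ (by positivity)]
  have : (2 * a / t - a * a / t ^ 2 + (-(a / t ^ 2)) * N) * (a + N) =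
      a - a * ((a + N) / t - 1) ^ 2 := by
    field_simp
    ring
  rw [this]
  nlinarith [sq_nonneg ((a + N) / t - 1)]

/-- The second moment lower bound for the probability of a divisor in `(T, H T]`, in terms of
families `J 0, …, J (K - 1)` of primes from each of which exactly `r + 1` are selected. -/
lemma core_lower {J : ℕ → Finset ℕ} {r K : ℕ} {T H g C c κ a : ℝ} (hC0 : 0 < C)
    (hC : ∀ a b : ℝ, 1 ≤ a → a ≤ b →
      |∑ p ∈ primesIoc a b, Real.log p / p - (Real.log b - Real.log a)| ≤ C)
    (hH : 1 < H) (hHT : H ≤ T) (hCh : 2 * C ≤ Real.log H) (hgH : H ≤ g) (hgT : g ≤ T)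
    (hc : 0 ≤ c) (hκ0 : 0 ≤ κ)
    (hJ : ∀ i j, i < j → Disjoint (J j) (J i))
    (hJs : ∀ b < K, J b ⊆ primesIoc H g)
    (hprod : ∀ W, Good J (r + 1) K W → (∏ q ∈ W, (q : ℝ)) * g ≤ T)
    (hconc : ∀ b < K, ∀ x, ∑ q ∈ J b, winv q * ind (|x + Real.log q| < Real.log H) ≤
      c * (1 / 2 : ℝ) ^ ((r + 1) * b))
    (hκ : ∀ b < K, esym (J b) r ≤ κ * esym (J b) (r + 1))
    (ha : a = 4 ^ ((r + 1) * K) * Real.log H / (12 * Real.log T)) :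
    (∏ i ∈ Finset.range K, ((∏ q ∈ J i, (1 - winv q)) * esym (J i) (r + 1))) *
        (a / (a + 2 ^ ((r + 1) * K) * (1 + 2 * κ * c * 4 ^ r * K))) ≤
      Ex winv (primesIoc H (H * T)) (fun W => ind (HasDiv T (H * T) W)) := by
  have hT1 : 1 < T := hH.trans_le hHT
  have hL : 0 < Real.log T := Real.log_pos hT1
  have hh : 0 < Real.log H := Real.log_pos hH
  have ha0 : 0 < a := by rw [ha]; positivity
  set G := primesIoc g (H * T) with hG
  set U := (Finset.range K).biUnion J with hU
  have hUs : U ⊆ primesIoc H g := by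
    rw [hU, Finset.biUnion_subset]
    exact fun i hi => hJs i (Finset.mem_range.1 hi)
  have hd : Disjoint U G := by
    rw [Finset.disjoint_left]
    intro p hp hp2
    have h1 := (mem_primesIoc.1 (hUs hp)).2.2
    have h2 := (mem_primesIoc.1 hp2).2.1
    linarith
  set P := ∏ i ∈ Finset.range K, esym (J i) (r + 1) with hP
  have hP0 : 0 ≤ P := Finset.prod_nonneg fun i _ => esym_nonneg _ _
  set M := (2 : ℝ) ^ ((r + 1) * K) * (1 + 2 * κ * c * 4 ^ r * K) with hM
  have hM0 : 0 < M := by positivity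
  set t := a + M with ht
  have ht0 : 0 < t := by positivity
  set φ : Finset ℕ → ℝ := fun W => Ex winv G (fun V => ind (HasDiv T (H * T) (W ∪ V))) with hφ
  have hφ0 : ∀ W, 0 ≤ φ W := fun W =>
    Ex_nonneg winv_nonneg winv_le_one fun V _ => ind_nonneg _
  -- Jensen's inequality: the completion bound `a / (a + N)` is convex in the number `N` of close
  -- pairs, whose average is at most `M`.
  have h1 : P * (a / t) ≤ It J (r + 1) K φ := by
    have h2 : It J (r + 1) K (fun W => (2 * a / t - a * a / t ^ 2) * 1 +
        (-(a / t ^ 2)) * pairs (Real.log H) W 0) ≤ It J (r + 1) K φ := by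
      refine It_mono fun W hW => ?_
      have hW1 := hUs.trans' hW.subset
      have h3 := completion_ge hC0 hC hH hHT hCh
        (fun q hq => (mem_primesIoc.1 (hW1 hq)).1) (fun q hq => (mem_primesIoc.1 (hW1 hq)).2.2)
        (by linarith) (hprod W hW)
      rw [hW.card hJ, ← ha] at h3
      rw [mul_one]
      exact (tangent_aux ha0 ht0 (pairs_pos hh W)).trans h3
    rw [It_lin, It_one, ← hP] at h2
    have h4 := It_pairs_le hc hJ hconc hκ K le_rfl 0
    rw [← hP, mul_assoc, ← hM] at h4
    have h5 := mul_le_mul_of_nonneg_left h4 (show 0 ≤ a / t ^ 2 by positivity)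
    have e : P * (a / t) = (2 * a / t - a * a / t ^ 2) * P - a / t ^ 2 * (P * M) := by
      rw [ht]
      field_simp
      ring
    rw [e]
    linarith
  have h6 := It_le_Ex (R := r + 1) hJ K hφ0
  have h7 : Ex winv U φ ≤ Ex winv (primesIoc H (H * T)) (fun W => ind (HasDiv T (H * T) W)) := by
    rw [hφ, ← Ex_union hd (fun W => ind (HasDiv T (H * T) W))]
    refine Ex_hasDiv_mono winv_nonneg winv_le_one (Finset.union_subset ?_ ?_)
    · intro p hp
      have hp := mem_primesIoc.1 (hUs hp)
      rw [mem_primesIoc]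
      exact ⟨hp.1, hp.2.1, by nlinarith [hp.2.2]⟩
    · intro p hp
      rw [hG, mem_primesIoc] at hp
      rw [mem_primesIoc]
      exact ⟨hp.1, hgH.trans_lt hp.2.1, hp.2.2⟩
  refine le_trans ?_ (h6.trans h7)
  rw [Finset.prod_mul_distrib, mul_assoc]
  refine mul_le_mul_of_nonneg_left h1 (Finset.prod_nonneg fun i _ =>
    Finset.prod_nonneg fun q _ => sub_nonneg.2 (winv_le_one q))

/-! ### Estimates for one range of primes -/

/-- Elementary form of Stirling's upper bound. -/
lemma factorial_le (R : ℕ) (hR : 1 ≤ R) :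
    (R.factorial : ℝ) * Real.exp R ≤ Real.exp 1 * (R * (R : ℝ) ^ R) := by
  induction R, hR using Nat.le_induction with
  | base => simp
  | succ R hR ih =>
    have hR0 : (0 : ℝ) < R := by exact_mod_cast hR
    have h1 : Real.exp 1 * (R : ℝ) ^ (R + 1) ≤ ((R : ℝ) + 1) ^ (R + 1) := by
      have h2 : (R : ℝ) / (R + 1) ≤ Real.exp (-(1 / ((R : ℝ) + 1))) := by
        refine le_trans (le_of_eq ?_) (Real.one_sub_le_exp_neg _)
        field_simp
        ring
      have h3 := pow_le_pow_left₀ (by positivity) h2 (R + 1)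
      rw [← Real.exp_nat_mul, div_pow, div_le_iff₀ (by positivity)] at h3
      have e : ((R + 1 : ℕ) : ℝ) * -(1 / ((R : ℝ) + 1)) = -1 := by
        push_cast
        field_simp
      rw [e, Real.exp_neg] at h3
      have h4 := mul_le_mul_of_nonneg_left h3 (Real.exp_pos 1).le
      rwa [← mul_assoc, mul_inv_cancel₀ (Real.exp_pos 1).ne', one_mul] at h4
    rw [Nat.factorial_succ]
    push_cast
    rw [Real.exp_add]
    calc ((R : ℝ) + 1) * R.factorial * (Real.exp R * Real.exp 1)
        = (((R : ℝ) + 1) * Real.exp 1) * (R.factorial * Real.exp R) := by ring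
      _ ≤ (((R : ℝ) + 1) * Real.exp 1) * (Real.exp 1 * (R * (R : ℝ) ^ R)) :=
          mul_le_mul_of_nonneg_left ih (by positivity)
      _ = (((R : ℝ) + 1) * Real.exp 1) * (Real.exp 1 * (R : ℝ) ^ (R + 1)) := by ring
      _ ≤ (((R : ℝ) + 1) * Real.exp 1) * ((R : ℝ) + 1) ^ (R + 1) :=
          mul_le_mul_of_nonneg_left h1 (by positivity)
      _ = _ := by ring

/-- The Poisson probability of the value `R` for the parameter `R log 2` is about
`2 ^ (-deltaEFT R)`. -/
lemma exists_poisson_gt {δ : ℝ} (hδ : deltaEFT < δ) :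
    ∃ r : ℕ, (2 : ℝ) ^ (-(((r + 1 : ℕ) : ℝ) * δ)) <
      Real.exp (-(((r + 1 : ℕ) : ℝ) * Real.log 2)) * (((r + 1 : ℕ) : ℝ) * Real.log 2) ^ (r + 1) /
        ((r + 1).factorial : ℝ) := by
  have hl2 : 0 < Real.log 2 := Real.log_pos (by norm_num)
  have hτ : 0 < (δ - deltaEFT) * Real.log 2 := mul_pos (by linarith) hl2
  have hev : ∀ᶠ x : ℝ in atTop, Real.log x ≤ (δ - deltaEFT) * Real.log 2 / 2 * x := by
    have := Real.isLittleO_log_id_atTop.def (half_pos hτ)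
    filter_upwards [this, eventually_ge_atTop (1 : ℝ)] with x hx hx1
    rw [Real.norm_of_nonneg (Real.log_nonneg hx1), id, Real.norm_of_nonneg (by linarith)] at hx
    exact hx
  have hev2 : ∀ᶠ x : ℝ in atTop, 1 < (δ - deltaEFT) * Real.log 2 / 2 * x :=
    (tendsto_id.const_mul_atTop (half_pos hτ)).eventually_gt_atTop 1
  have hev3 := tendsto_natCast_atTop_atTop.eventually (hev.and hev2)
  obtain ⟨R, hR, hR1⟩ := (hev3.and (eventually_ge_atTop 1)).exists
  obtain ⟨r, rfl⟩ : ∃ r, R = r + 1 := ⟨R - 1, by omega⟩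
  refine ⟨r, ?_⟩
  set R := r + 1 with hRdef
  have hR0 : (0 : ℝ) < R := by exact_mod_cast hR1
  have hfac : (0 : ℝ) < R.factorial := by exact_mod_cast R.factorial_pos
  rw [lt_div_iff₀ hfac]
  have h1 : (R.factorial : ℝ) ≤ Real.exp 1 * (R * (R : ℝ) ^ R) * Real.exp (-R) := by
    have := mul_le_mul_of_nonneg_right (factorial_le R hR1) (Real.exp_pos (-(R : ℝ))).le
    rwa [mul_assoc, ← Real.exp_add, add_neg_cancel, Real.exp_zero, mul_one] at this
  refine (mul_le_mul_of_nonneg_left h1 (by positivity)).trans_lt ?_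
  rw [mul_pow]
  have hRR : (0 : ℝ) < (R : ℝ) ^ R := by positivity
  have e1 : (2 : ℝ) ^ (-((R : ℝ) * δ)) * (Real.exp 1 * (R * (R : ℝ) ^ R) * Real.exp (-R)) =
      (R : ℝ) ^ R * Real.exp (-(Real.log 2 * (R * δ)) + 1 + Real.log R - R) := by
    rw [Real.rpow_def_of_pos (by norm_num), Real.exp_sub, Real.exp_add, Real.exp_add,
      Real.exp_log hR0, Real.exp_neg (R : ℝ), mul_neg]
    ring
  have e2 : Real.exp (-((R : ℝ) * Real.log 2)) * ((R : ℝ) ^ R * Real.log 2 ^ R) =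
      (R : ℝ) ^ R * Real.exp (-(R * Real.log 2) + R * Real.log (Real.log 2)) := by
    rw [Real.exp_add, Real.exp_nat_mul (Real.log (Real.log 2)), Real.exp_log hl2]
    ring
  rw [e1, e2]
  refine mul_lt_mul_of_pos_left (Real.exp_lt_exp.2 ?_) hRR
  have h2 := deltaEFT_mul_log_two
  have h3 : (R : ℝ) * (deltaEFT * Real.log 2) = R * (Real.log 2 - 1 - Real.log (Real.log 2)) := by
    rw [h2]
  obtain ⟨h4, h5⟩ := hR
  nlinarith

lemma prod_one_sub_ge {J : Finset ℕ} {m : ℝ} (hm : ∀ q ∈ J, winv q ≤ m) (hm2 : m ≤ 1 / 2) :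
    Real.exp (-((∑ q ∈ J, winv q) * (1 + 2 * m))) ≤ ∏ q ∈ J, (1 - winv q) := by
  rw [Finset.sum_mul, ← Finset.sum_neg_distrib, Real.exp_sum]
  refine Finset.prod_le_prod (fun q _ => (Real.exp_pos _).le) fun q hq => ?_
  have h0 := winv_nonneg q
  have h1 := hm q hq
  have h2 : 0 < 1 - winv q := by linarith
  rw [Real.exp_neg, inv_le_comm₀ (Real.exp_pos _) h2]
  refine le_trans ?_ (Real.add_one_le_exp _)
  rw [← one_div, div_le_iff₀ h2]
  nlinarith [mul_nonneg h0 (sub_nonneg.2 h1), mul_nonneg h0 h0]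

/-- Estimates for the primes in `(e ^ A, e ^ (2 ^ R A)]`. -/
lemma block_sum {C : ℝ} (hC : ∀ a b : ℝ, 2 ≤ a → a ≤ b →
      |∑ p ∈ primesIoc a b, 1 / (p : ℝ) - (Real.log (Real.log b) - Real.log (Real.log a))| ≤
        C / Real.log a) {A : ℝ} (hA : 1 ≤ A) (R : ℕ) :
    |∑ q ∈ primesIoc (Real.exp A) (Real.exp (2 ^ R * A)), winv q - R * Real.log 2| ≤ C / A := by
  have h2 : (1 : ℝ) ≤ 2 ^ R := one_le_pow₀ (by norm_num)
  have h := hC (Real.exp A) (Real.exp (2 ^ R * A)) (by linarith [Real.add_one_le_exp A])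
    (Real.exp_le_exp.2 (by nlinarith))
  rw [Real.log_exp, Real.log_exp, Real.log_mul (by positivity) (by linarith), Real.log_pow,
    add_sub_cancel_right] at h
  exact h

lemma block_winv_le {A B h : ℝ} (hh : 0 < h) (hA : h ≤ A) :
    ∀ q ∈ primesIoc (Real.exp A) B, winv q ≤ 1 / h := by
  intro q hq
  have h1 := (mem_primesIoc.1 hq).2.1
  exact one_div_le_one_div_of_le hh (by linarith [Real.add_one_le_exp A])

/-- Concentration: beyond `e ^ A`, the primes `q` with `log q` in a window of length `2 h` have total
weight `O(h / A)`. -/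
lemma block_conc {C : ℝ} (hC : ∀ a b : ℝ, 1 ≤ a → a ≤ b →
      |∑ p ∈ primesIoc a b, Real.log p / p - (Real.log b - Real.log a)| ≤ C)
    {A B h : ℝ} (hh : 0 < h) (hCh : C ≤ h) (hA : 0 < A) (x : ℝ) :
    ∑ q ∈ primesIoc (Real.exp A) B, winv q * ind (|x + Real.log q| < h) ≤ 3 * (h / A) := by
  set J := primesIoc (Real.exp A) B with hJ
  set a := max 1 (Real.exp (-x - h)) with ha
  set b := Real.exp (-x + h) with hb
  have hlp : ∀ p : ℕ, 0 ≤ Real.log p / p := fun p =>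
    div_nonneg (Real.log_natCast_nonneg p) (Nat.cast_nonneg p)
  have h1 : ∑ q ∈ J, winv q * ind (|x + Real.log q| < h) ≤
      (1 / A) * ∑ q ∈ primesIoc a b, Real.log q / q := by
    have h2 : ∑ q ∈ J, winv q * ind (|x + Real.log q| < h) ≤
        ∑ q ∈ J.filter (fun q : ℕ => |x + Real.log q| < h), 1 / A * (Real.log q / q) := by
      rw [Finset.sum_filter]
      refine Finset.sum_le_sum fun q hq => ?_
      split_ifs with hx
      · rw [ind_of hx, mul_one]
        have hq := mem_primesIoc.1 hq
        have hq0 : (0 : ℝ) < q := by exact_mod_cast hq.1.pos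
        have : A ≤ Real.log q := (Real.le_log_iff_exp_le hq0).2 hq.2.1.le
        rw [winv, one_div_mul_eq_div, div_div, div_le_div_iff₀ hq0 (by positivity)]
        nlinarith
      · rw [ind_of_not hx, mul_zero]
    refine h2.trans ?_
    rw [Finset.mul_sum]
    refine Finset.sum_le_sum_of_subset_of_nonneg ?_ fun q _ _ =>
      mul_nonneg (by positivity) (hlp q)
    intro q hq
    obtain ⟨hq, hx⟩ := Finset.mem_filter.1 hq
    have hq := mem_primesIoc.1 hq
    have hq0 : (0 : ℝ) < q := by exact_mod_cast hq.1.pos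
    rw [abs_lt] at hx
    rw [mem_primesIoc]
    refine ⟨hq.1, max_lt (by exact_mod_cast hq.1.one_lt) ?_, ?_⟩
    · rw [← Real.lt_log_iff_exp_lt hq0]; linarith
    · rw [hb, ← Real.log_le_iff_le_exp hq0]; linarith
  have h3 : ∑ q ∈ primesIoc a b, Real.log q / q ≤ 3 * h := by
    rcases le_or_gt a b with hab | hab
    · have h4 := (abs_le.1 (hC a b (le_max_left _ _) hab)).2
      have h5 : -x - h ≤ Real.log a := by
        rw [Real.le_log_iff_exp_le (lt_of_lt_of_le one_pos (le_max_left _ _))]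
        exact le_max_right _ _
      rw [hb, Real.log_exp] at h4
      linarith
    · rw [Finset.sum_eq_zero]
      · linarith
      · intro q hq
        have := mem_primesIoc.1 hq
        exfalso
        linarith [this.2.1, this.2.2]
  calc _ ≤ _ := h1
    _ ≤ 1 / A * (3 * h) := mul_le_mul_of_nonneg_left h3 (by positivity)
    _ = 3 * (h / A) := by ring

/-- The combined lower bound for one block. -/
lemma block_theta {J : Finset ℕ} {C ε μ₀ : ℝ} {R : ℕ} (hε : 0 ≤ ε)
    (hε2 : ε ≤ 1 / 2) (hm : ∀ q ∈ J, winv q ≤ ε) (hμ : |∑ q ∈ J, winv q - μ₀| ≤ C * ε)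
    (hpos : 0 ≤ μ₀ - (C + R) * ε) :
    Real.exp (-((μ₀ + C * ε) * (1 + 2 * ε))) * (μ₀ - (C + R) * ε) ^ R / (R.factorial : ℝ) ≤
      (∏ q ∈ J, (1 - winv q)) * esym J R := by
  have hμ := abs_le.1 hμ
  rw [mul_div_assoc]
  refine mul_le_mul ?_ ?_ (by positivity) ?_
  · refine le_trans (Real.exp_le_exp.2 (neg_le_neg ?_)) (prod_one_sub_ge hm hε2)
    exact mul_le_mul_of_nonneg_right (by linarith [hμ.2]) (by linarith)
  · refine le_trans ?_ (esym_ge hε hm rfl R (by linarith [hμ.1]) R le_rfl)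
    exact div_le_div_of_nonneg_right (pow_le_pow_left₀ hpos (by linarith [hμ.1]) R)
      (by positivity)
  · exact Finset.prod_nonneg fun q _ => sub_nonneg.2 (winv_le_one q)

/-! ### The choice of the prime ranges -/

/-- The primes in `(e ^ (2 ^ (R b) h), e ^ (2 ^ (R (b + 1)) h)]`. -/
noncomputable def blk (R : ℕ) (h : ℝ) (b : ℕ) : Finset ℕ :=
  primesIoc (Real.exp (2 ^ (R * b) * h)) (Real.exp (2 ^ R * (2 ^ (R * b) * h)))

lemma blk_exponent (R : ℕ) (h : ℝ) (b : ℕ) :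
    2 ^ R * ((2 : ℝ) ^ (R * b) * h) = 2 ^ (R * (b + 1)) * h := by
  rw [mul_add, mul_one, pow_add]; ring

lemma blk_disjoint {R : ℕ} {h : ℝ} (hh : 0 ≤ h) (i j : ℕ) (hij : i < j) :
    Disjoint (blk R h j) (blk R h i) := by
  rw [Finset.disjoint_left]
  intro p hp hp2
  have h1 := (mem_primesIoc.1 hp).2.1
  have h2 := (mem_primesIoc.1 hp2).2.2
  rw [blk_exponent] at h2
  have h3 : (2 : ℝ) ^ (R * (i + 1)) * h ≤ 2 ^ (R * j) * h :=
    mul_le_mul_of_nonneg_right (pow_le_pow_right₀ (by norm_num) (Nat.mul_le_mul_left R hij)) hh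
  linarith [Real.exp_le_exp.2 h3]

/-- If `R` primes are chosen in each of the first `b` ranges, the logarithm of their product is
dominated by a geometric series. -/
lemma good_blk_prod_le {r : ℕ} {h : ℝ} (hh : 0 ≤ h) {b : ℕ} {W : Finset ℕ}
    (hW : Good (blk (r + 1) h) (r + 1) b W) :
    ∏ q ∈ W, (q : ℝ) ≤ Real.exp (2 * ((r + 1 : ℕ) : ℝ) * h * 2 ^ ((r + 1) * b)) := by
  induction b generalizing W with
  | zero =>
    rw [show W = ∅ from hW, Finset.prod_empty]
    exact Real.one_le_exp (by positivity)
  | succ b ih =>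
    obtain ⟨E, hE, W', hW', rfl⟩ := hW
    obtain ⟨h1, h2⟩ := Finset.mem_powersetCard.1 hE
    rw [Finset.prod_union ((disjoint_biUnion (blk_disjoint hh) b).mono h1 hW'.subset)]
    have h3 : ∏ q ∈ E, (q : ℝ) ≤ Real.exp (2 ^ ((r + 1) * (b + 1)) * h) ^ (r + 1) := by
      refine (Finset.prod_le_prod (fun q _ => Nat.cast_nonneg q) fun q hq =>
        (mem_primesIoc.1 (h1 hq)).2.2).trans (le_of_eq ?_)
      rw [Finset.prod_const, h2, blk_exponent]
    refine (mul_le_mul h3 (ih hW') (by positivity) (by positivity)).trans ?_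
    rw [← Real.exp_nat_mul, ← Real.exp_add]
    refine Real.exp_le_exp.2 ?_
    have h4 : 2 * (2 : ℝ) ^ ((r + 1) * b) ≤ 2 ^ ((r + 1) * (b + 1)) := by
      rw [mul_add, mul_one, pow_add, mul_comm]
      refine mul_le_mul_of_nonneg_left ?_ (by positivity)
      exact le_self_pow₀ (by norm_num) (by omega)
    have h5 := mul_le_mul_of_nonneg_left h4 (show 0 ≤ ((r + 1 : ℕ) : ℝ) * h by positivity)
    linarith

/-- The single block estimate, uniformly in large `h`. -/
lemma exists_block_params {δ : ℝ} (hδ : deltaEFT < δ) {C : ℝ} (hC0 : 0 < C)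
    (hC : ∀ a b : ℝ, 2 ≤ a → a ≤ b →
      |∑ p ∈ primesIoc a b, 1 / (p : ℝ) - (Real.log (Real.log b) - Real.log (Real.log a))| ≤
        C / Real.log a) :
    ∃ (r : ℕ) (h₀ : ℝ), 1 ≤ h₀ ∧ ∀ h, h₀ ≤ h → ∀ b : ℕ,
      (2 : ℝ) ^ (-(((r + 1 : ℕ) : ℝ) * δ)) ≤
        (∏ q ∈ blk (r + 1) h b, (1 - winv q)) * esym (blk (r + 1) h b) (r + 1) ∧
      esym (blk (r + 1) h b) r ≤ 2 * ((r : ℝ) + 1) * esym (blk (r + 1) h b) (r + 1) := by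
  obtain ⟨r, hr⟩ := exists_poisson_gt hδ
  have hl2 : 0.6931471803 < Real.log 2 := Real.log_two_gt_d9
  set R := r + 1 with hR
  have hR1 : (1 : ℝ) ≤ R := by exact_mod_cast Nat.succ_le_succ (Nat.zero_le r)
  set F : ℝ → ℝ := fun ε => Real.exp (-(((R : ℝ) * Real.log 2 + C * ε) * (1 + 2 * ε))) *
    ((R : ℝ) * Real.log 2 - (C + R) * ε) ^ R / (R.factorial : ℝ) with hF
  have hFc : Continuous F := by fun_prop
  have hF0 : (2 : ℝ) ^ (-((R : ℝ) * δ)) < F 0 := by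
    simpa [hF] using hr
  have h1 : ∀ᶠ ε in 𝓝 (0 : ℝ), (2 : ℝ) ^ (-((R : ℝ) * δ)) < F ε :=
    hFc.continuousAt.eventually (lt_mem_nhds hF0)
  have h2 : ∀ᶠ ε in 𝓝 (0 : ℝ), 1 / 2 < (R : ℝ) * Real.log 2 - (C + R) * ε := by
    have hc : Continuous fun ε : ℝ => (R : ℝ) * Real.log 2 - (C + R) * ε := by fun_prop
    refine hc.continuousAt.eventually (lt_mem_nhds ?_)
    simp only [mul_zero, sub_zero]
    nlinarith
  have h3 : ∀ᶠ ε in 𝓝 (0 : ℝ), ε < 1 / 2 := gt_mem_nhds (by norm_num)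
  have h4 : Tendsto (fun h : ℝ => 1 / h) atTop (𝓝 0) := by
    simpa [one_div] using (tendsto_inv_atTop_zero (𝕜 := ℝ))
  obtain ⟨h₀, hh₀⟩ := eventually_atTop.1 (h4.eventually (h1.and (h2.and h3)))
  refine ⟨r, max 1 h₀, le_max_left _ _, fun h hh b => ?_⟩
  obtain ⟨g1, g2, g3⟩ := hh₀ h ((le_max_right _ _).trans hh)
  have hh1 : 1 ≤ h := (le_max_left _ _).trans hh
  have hA : h ≤ 2 ^ (R * b) * h := le_mul_of_one_le_left (by linarith) (one_le_pow₀ (by norm_num))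
  have hε : 0 ≤ 1 / h := by positivity
  have hm : ∀ q ∈ blk R h b, winv q ≤ 1 / h := block_winv_le (by linarith) hA
  have hμ : |∑ q ∈ blk R h b, winv q - R * Real.log 2| ≤ C * (1 / h) := by
    refine (block_sum hC (hh1.trans hA) R).trans ?_
    rw [mul_one_div]
    exact div_le_div_of_nonneg_left hC0.le (by linarith) hA
  refine ⟨g1.le.trans (block_theta hε g3.le hm hμ (by linarith)), ?_⟩
  have h5 := esym_succ_ge hm r
  have h6 := (abs_le.1 hμ).1
  have h7 : 1 / 2 ≤ ∑ q ∈ blk R h b, winv q - r * (1 / h) := by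
    have : (r : ℝ) * (1 / h) ≤ R * (1 / h) := by
      refine mul_le_mul_of_nonneg_right ?_ hε
      rw [hR]; push_cast; linarith
    linarith
  have h8 := mul_le_mul_of_nonneg_left h7 (esym_nonneg (blk R h b) r)
  linarith

/-- The choice of the number `K` of ranges: as many as fit below `log T`, with enough room left for
the product of the selected primes and a completing prime. -/
lemma exists_scale (R : ℕ) (hR : 1 ≤ R) {h L : ℝ} (hh : 0 < h) (hhL : h ≤ L) :
    ∃ K : ℕ, L < 2 ^ (R * (K + 1)) * (4 * R * h) ∧ 2 ^ (R * K) * h ≤ L ∧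
      (K ≠ 0 → 2 ^ (R * K) * (4 * R * h) ≤ L) := by
  have hR1 : (1 : ℝ) ≤ R := by exact_mod_cast hR
  have hex : ∃ n : ℕ, L < 2 ^ (R * (n + 1)) * (4 * R * h) := by
    obtain ⟨n, hn⟩ := pow_unbounded_of_one_lt (L / (4 * R * h)) (one_lt_two)
    refine ⟨n, ?_⟩
    rw [div_lt_iff₀ (by positivity)] at hn
    refine hn.trans_le (mul_le_mul_of_nonneg_right ?_ (by positivity))
    exact pow_le_pow_right₀ (by norm_num) (by nlinarith)
  have h1 : Nat.find hex ≠ 0 → 2 ^ (R * Nat.find hex) * (4 * R * h) ≤ L := by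
    intro h0
    have := Nat.find_min hex (m := Nat.find hex - 1) (by omega)
    rw [Nat.sub_add_cancel (by omega)] at this
    exact not_lt.1 this
  refine ⟨Nat.find hex, Nat.find_spec hex, ?_, h1⟩
  by_cases h0 : Nat.find hex = 0
  · rw [h0]; simpa using hhL
  · refine le_trans ?_ (h1 h0)
    exact mul_le_mul_of_nonneg_left (by nlinarith) (by positivity)

/-- With at least `m * ρ` expected completions, the second moment bound is at least a constant times
`1 / (1 + k)`. -/
lemma ratio_aux {a m ρ D k : ℝ} (hm : 0 < m) (hρ : 0 < ρ) (hD : 0 ≤ D) (hk : 0 ≤ k)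
    (ha : m * ρ ≤ a) : ρ / (ρ + 1 + D) / (1 + k) ≤ a / (a + m * (1 + D * k)) := by
  have ha0 : 0 < a := lt_of_lt_of_le (by positivity) ha
  rw [div_div, div_le_div_iff₀ (by positivity) (by positivity)]
  have h1 : ρ * (m * (1 + D * k)) ≤ a * (1 + D * k) := by
    nlinarith [mul_nonneg hD hk]
  nlinarith [mul_nonneg hD hk, mul_nonneg ha0.le hk, mul_nonneg (mul_nonneg ha0.le hk) hρ.le,
    mul_nonneg ha0.le hD, mul_nonneg (mul_nonneg ha0.le hk) hD]

/-- The powers of `u` absorb a factor which is logarithmic in `1 / u`. -/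
lemma log_absorb {u τ : ℝ} {K : ℕ} (hu : 0 < u) (hτ : 0 < τ) (hK : (2 : ℝ) ^ K * u ≤ 1) :
    min 1 (τ * Real.log 2) * u ^ τ ≤ 1 / (1 + (K : ℝ)) := by
  have hl2 : 0 < Real.log 2 := Real.log_pos (by norm_num)
  have h1 : (K : ℝ) * Real.log 2 + Real.log u ≤ 0 := by
    rw [← Real.log_pow, ← Real.log_mul (by positivity) hu.ne']
    exact Real.log_nonpos (by positivity) hK
  have h2 : u ^ τ ≤ 1 / (1 + τ * (K * Real.log 2)) := by
    rw [Real.rpow_def_of_pos hu, le_div_iff₀ (by positivity)]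
    have h3 := Real.add_one_le_exp (τ * (K * Real.log 2))
    calc Real.exp (Real.log u * τ) * (1 + τ * (K * Real.log 2))
        ≤ Real.exp (Real.log u * τ) * Real.exp (τ * (K * Real.log 2)) :=
          mul_le_mul_of_nonneg_left (by linarith) (Real.exp_pos _).le
      _ = Real.exp (τ * (K * Real.log 2 + Real.log u)) := by rw [← Real.exp_add]; ring_nf
      _ ≤ 1 := Real.exp_le_one_iff.2 (mul_nonpos_of_nonneg_of_nonpos hτ.le h1)
  refine (mul_le_mul_of_nonneg_left h2 (by positivity)).trans ?_
  rw [mul_one_div, div_le_div_iff₀ (by positivity) (by positivity), one_mul, mul_add, mul_one]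
  have h4 := mul_le_mul_of_nonneg_right (min_le_right 1 (τ * Real.log 2)) (Nat.cast_nonneg (α := ℝ) K)
  have h5 := min_le_left 1 (τ * Real.log 2)
  linarith

lemma deltaEFT_pos : 0 < deltaEFT := by
  have hl2 : 0 < Real.log 2 := Real.log_pos (by norm_num)
  have h1 : Real.log 2 ≠ 1 := by
    have := Real.log_two_lt_d9
    linarith
  have h2 := Real.log_lt_sub_one_of_pos hl2 h1
  have h3 := deltaEFT_mul_log_two
  by_contra hc
  push Not at hc
  nlinarith

/-! ### The lower bound for the probability of a divisor in a block -/

/-- The primes in `(H, H T]` produce a divisor in `(T, H T]` with probability at least about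
`(log H / log T) ^ deltaEFT`. -/
lemma lower_bound {δ₁ : ℝ} (hδ : deltaEFT < δ₁) :
    ∃ c h₀ : ℝ, 0 < c ∧ ∀ T H : ℝ, 0 < H → h₀ ≤ Real.log H → H ≤ T →
      c * (Real.log H / Real.log T) ^ δ₁ ≤
        Ex winv (primesIoc H (H * T)) (fun W => ind (HasDiv T (H * T) W)) := by
  obtain ⟨C₁, hC₁0, hC₁⟩ := mertens_interval
  obtain ⟨C₂, hC₂0, hC₂⟩ := mertens_second
  set δ' := (deltaEFT + δ₁) / 2 with hδ'
  have hδ'1 : deltaEFT < δ' := by rw [hδ']; linarith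
  have hδ'2 : 0 < δ₁ - δ' := by rw [hδ']; linarith
  have hδ'0 : 0 < δ' := deltaEFT_pos.trans hδ'1
  obtain ⟨r, h₀, hh₀1, hblk⟩ := exists_block_params hδ'1 hC₂0 hC₂
  set R := r + 1 with hR
  have hR1 : (1 : ℝ) ≤ R := by exact_mod_cast Nat.succ_le_succ (Nat.zero_le r)
  set κ : ℝ := 2 * ((r : ℝ) + 1) with hκ
  set D : ℝ := 2 * κ * 3 * 4 ^ r with hD
  set ρ : ℝ := 1 / (48 * R * 2 ^ R) with hρ
  have hκ0 : 0 ≤ κ := by positivity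
  have hD0 : 0 ≤ D := by positivity
  have hρ0 : 0 < ρ := by positivity
  have hl2 : 0 < Real.log 2 := Real.log_pos (by norm_num)
  have hmin : 0 < min 1 ((δ₁ - δ') * Real.log 2) := lt_min one_pos (mul_pos hδ'2 hl2)
  refine ⟨ρ / (ρ + 1 + D) * min 1 ((δ₁ - δ') * Real.log 2), max h₀ (2 * C₁), by positivity,
    fun T H hH0 hHh hHT => ?_⟩
  set h := Real.log H with hh
  set L := Real.log T with hL
  have hh1 : h₀ ≤ h := (le_max_left _ _).trans hHh
  have hh2 : 2 * C₁ ≤ h := (le_max_right _ _).trans hHh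
  have hhp : 0 < h := by linarith
  have hhL : h ≤ L := Real.log_le_log hH0 hHT
  have hLp : 0 < L := by linarith
  have hH1 : 1 < H := by
    rw [← Real.exp_log hH0]
    exact Real.one_lt_exp_iff.2 hhp
  have hT0 : 0 < T := by linarith
  have eH : H = Real.exp h := (Real.exp_log hH0).symm
  have eT : T = Real.exp L := (Real.exp_log hT0).symm
  obtain ⟨K, hK1, hK2, hK3⟩ := exists_scale R (by omega) hhp hhL
  -- half of `log T` is kept for the completing prime, unless there is no range of primes at all
  set g : ℝ := if K = 0 then T else Real.exp (L / 2) with hg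
  have hg1 : H ≤ g ∧ g ≤ T := by
    rw [hg]
    split_ifs with h0
    · exact ⟨hHT, le_rfl⟩
    · have h1 := hK3 h0
      have h2 : (1 : ℝ) ≤ 2 ^ (R * K) := one_le_pow₀ (by norm_num)
      have h3 : 4 * R * h ≤ 2 ^ (R * K) * (4 * R * h) :=
        le_mul_of_one_le_left (by positivity) h2
      have h4 : h ≤ R * h := le_mul_of_one_le_left hhp.le hR1
      rw [eH, eT]
      exact ⟨Real.exp_le_exp.2 (by linarith), Real.exp_le_exp.2 (by linarith)⟩
  have hJs : ∀ b < K, blk R h b ⊆ primesIoc H g := by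
    intro b hb p hp
    have hp := mem_primesIoc.1 hp
    have hK0 : K ≠ 0 := by omega
    rw [mem_primesIoc, hg, if_neg hK0]
    refine ⟨hp.1, lt_of_le_of_lt ?_ hp.2.1, hp.2.2.trans ?_⟩
    · rw [eH]
      exact Real.exp_le_exp.2 (le_mul_of_one_le_left hhp.le (one_le_pow₀ (by norm_num)))
    · rw [blk_exponent]
      refine Real.exp_le_exp.2 ?_
      have h1 := hK3 hK0
      have h2 : (2 : ℝ) ^ (R * (b + 1)) ≤ 2 ^ (R * K) :=
        pow_le_pow_right₀ (by norm_num) (Nat.mul_le_mul_left R hb)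
      have h3 := mul_le_mul_of_nonneg_right h2 hhp.le
      have h4 : 2 ^ (R * K) * h ≤ R * (2 ^ (R * K) * h) :=
        le_mul_of_one_le_left (by positivity) hR1
      linarith
  have hprod : ∀ W, Good (blk R h) R K W → (∏ q ∈ W, (q : ℝ)) * g ≤ T := by
    intro W hW
    rw [hg]
    split_ifs with h0
    · rw [h0] at hW
      rw [show W = ∅ from hW]
      simp
    · have h1 := hK3 h0
      refine (mul_le_mul_of_nonneg_right (good_blk_prod_le hhp.le hW) (Real.exp_pos _).le).trans ?_
      rw [← Real.exp_add, eT]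
      refine Real.exp_le_exp.2 ?_
      linarith
  have hcore := core_lower (J := blk R h) (r := r) (K := K) (T := T) (H := H) (g := g) (C := C₁)
    (c := 3) (κ := κ) hC₁0 hC₁ hH1 hHT hh2 hg1.1 hg1.2 (by norm_num) hκ0
    (blk_disjoint hhp.le) hJs hprod (fun b _ x => by
      refine (block_conc hC₁ hhp (by linarith) (by positivity) x).trans (le_of_eq ?_)
      have hne := hhp.ne'
      rw [← hR, one_div, inv_pow]
      field_simp) (fun b _ => (hblk h hh1 b).2) rfl
  rw [← hh, ← hL, ← hR, ← hD] at hcore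
  refine le_trans ?_ hcore
  have hu0 : 0 < h / L := by positivity
  have hKu : (2 : ℝ) ^ (R * K) * (h / L) ≤ 1 := by
    rw [← mul_div_assoc, div_le_one hLp]; exact hK2
  -- each range costs `2 ^ (-R δ')`, and `2 ^ (-R K)` is at least `h / L`
  have hprodge : (h / L) ^ δ' ≤
      ∏ i ∈ Finset.range K, ((∏ q ∈ blk R h i, (1 - winv q)) * esym (blk R h i) R) := by
    have h1 : ((2 : ℝ) ^ (-((R : ℝ) * δ'))) ^ K ≤
        ∏ i ∈ Finset.range K, ((∏ q ∈ blk R h i, (1 - winv q)) * esym (blk R h i) R) := by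
      have := Finset.prod_le_prod (s := Finset.range K) (f := fun _ => (2 : ℝ) ^ (-((R : ℝ) * δ')))
        (g := fun i => (∏ q ∈ blk R h i, (1 - winv q)) * esym (blk R h i) R)
        (fun _ _ => by positivity) fun i _ => (hblk h hh1 i).1
      rwa [Finset.prod_const, Finset.card_range] at this
    refine le_trans ?_ h1
    have h2 : ((2 : ℝ) ^ (-((R : ℝ) * δ'))) ^ K = (((2 : ℝ) ^ (R * K))⁻¹) ^ δ' := by
      rw [← Real.rpow_natCast, ← Real.rpow_mul (by norm_num), ← Real.rpow_natCast 2 (R * K),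
        ← Real.rpow_neg (by norm_num), ← Real.rpow_mul (by norm_num)]
      congr 1
      push_cast
      ring
    rw [h2]
    refine Real.rpow_le_rpow hu0.le ?_ hδ'0.le
    rw [← one_div, le_div_iff₀ (by positivity), mul_comm]
    exact hKu
  -- by the maximality of `K`, the expected number of completions is bounded below
  have hratio := ratio_aux (a := 4 ^ (R * K) * h / (12 * L)) (m := 2 ^ (R * K)) (k := K)
    (by positivity) hρ0 hD0 (Nat.cast_nonneg K) (by
      have h4 : (4 : ℝ) ^ (R * K) = 2 ^ (R * K) * 2 ^ (R * K) := by rw [← mul_pow]; norm_num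
      rw [h4, mul_assoc, mul_div_assoc]
      refine mul_le_mul_of_nonneg_left ?_ (by positivity)
      rw [hρ, div_le_div_iff₀ (by positivity) (by positivity)]
      rw [mul_add, mul_one, pow_add] at hK1
      linarith)
  have habs := log_absorb hu0 hδ'2 (K := K) (by
    refine le_trans (mul_le_mul_of_nonneg_right ?_ hu0.le) hKu
    exact pow_le_pow_right₀ (by norm_num) (Nat.le_mul_of_pos_left K (by omega)))
  calc ρ / (ρ + 1 + D) * min 1 ((δ₁ - δ') * Real.log 2) * (h / L) ^ δ₁
      = (h / L) ^ δ' * (ρ / (ρ + 1 + D) *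
          (min 1 ((δ₁ - δ') * Real.log 2) * (h / L) ^ (δ₁ - δ'))) := by
        have : (h / L) ^ δ₁ = (h / L) ^ δ' * (h / L) ^ (δ₁ - δ') := by
          rw [← Real.rpow_add hu0]
          congr 1
          ring
        rw [this]
        ring
    _ ≤ (h / L) ^ δ' * (ρ / (ρ + 1 + D) * (1 / (1 + (K : ℝ)))) := by
        refine mul_le_mul_of_nonneg_left (mul_le_mul_of_nonneg_left habs ?_) ?_ <;> positivity
    _ ≤ _ := by
        rw [mul_one_div]
        refine mul_le_mul hprodge hratio (by positivity) ?_
        exact (Real.rpow_nonneg hu0.le _).trans hprodge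

end BlockBehrend

/-! ### The criterion -/

theorem behrend_criterion_long_blocks
    (η : ℝ) (hη : 0 < η) (T H : ℕ → ℝ)
    -- block sequence with parameter η
    (hT2 : ∀ j : ℕ, 1 ≤ j → 2 ≤ T j)
    (hTmono : ∀ j : ℕ, 1 ≤ j → T j < T (j + 1))
    (hHlow : ∀ j : ℕ, 1 ≤ j → 1 + (T j) ^ (-(1 - η)) ≤ H j)
    (hHhigh : ∀ j : ℕ, 1 ≤ j → H j ≤ min (T j) (T (j + 1) / T j))
    -- the blocks are long
    (ε : ℝ) (hε0 : 0 < ε) (hε1 : ε < 1)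
    (hlong : ∀ j : ℕ, 1 ≤ j →
      Real.log (H (j + 1)) >
        2 * (Real.log (T (j + 1))) ^ ε * (Real.log (T j)) ^ (1 - ε))
    (A : Set ℕ)
    (hA : A = {n : ℕ | ∃ j : ℕ, 1 ≤ j ∧ T j < (n : ℝ) ∧ (n : ℝ) ≤ H j * T j}) :
    (∀ δ₁ : ℝ, deltaEFT < δ₁ →
      ¬ Summable (fun j : ℕ => (Real.log (H (j + 1)) / Real.log (T (j + 1))) ^ δ₁) →
      IsBehrend A) ∧
    (∀ δ₂ : ℝ, δ₂ < deltaEFT →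
      Summable (fun j : ℕ => (Real.log (H (j + 1)) / Real.log (T (j + 1))) ^ δ₂) →
      ¬ IsBehrend A) := by
  have hA' : A = BlockBehrend.blocks T H := hA
  rw [hA']
  have hT0 : ∀ j, 1 ≤ j → 0 < T j := fun j hj => by linarith [hT2 j hj]
  have hlT : ∀ j, 1 ≤ j → 0 < Real.log (T j) := fun j hj =>
    Real.log_pos (by linarith [hT2 j hj])
  have hH1 : ∀ j, 1 ≤ j → 1 < H j := fun j hj => by
    linarith [hHlow j hj, Real.rpow_pos_of_pos (hT0 j hj) (-(1 - η))]
  have hHT : ∀ j, 1 ≤ j → H j ≤ T j := fun j hj => (hHhigh j hj).trans (min_le_left _ _)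
  -- the geometric mean of `log T (j + 1)` and `log T j` is at least the smaller of the two
  have hstep : ∀ j, 1 ≤ j → 2 * Real.log (T j) ≤ Real.log (H (j + 1)) := fun j hj => by
    have h1 : Real.log (T j) ^ ε ≤ Real.log (T (j + 1)) ^ ε :=
      Real.rpow_le_rpow (hlT j hj).le (Real.log_le_log (hT0 j hj) (hTmono j hj).le) hε0.le
    have h2 : Real.log (T j) = Real.log (T j) ^ ε * Real.log (T j) ^ (1 - ε) := by
      rw [← Real.rpow_add (hlT j hj), add_sub_cancel, Real.rpow_one]
    have h3 := mul_le_mul_of_nonneg_right h1 (Real.rpow_nonneg (hlT j hj).le (1 - ε))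
    have h4 := hlong j hj
    rw [← h2] at h3
    linarith
  have hHl : ∀ j, 1 ≤ j → Real.log (H j) ≤ Real.log (T j) := fun j hj =>
    Real.log_le_log (by linarith [hH1 j hj]) (hHT j hj)
  have hgrow : ∀ j : ℕ, (2 : ℝ) ^ j * Real.log 2 ≤ Real.log (T (j + 1)) := by
    intro j
    induction j with
    | zero => simpa using Real.log_le_log (by norm_num) (hT2 1 le_rfl)
    | succ j ih =>
      have h1 := hstep (j + 1) (by omega)
      have h2 := hHl (j + 1 + 1) (by omega)
      rw [pow_succ]
      linarith
  have hl2 : 0 < Real.log 2 := Real.log_pos (by norm_num)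
  have hpow : Tendsto (fun j : ℕ => (2 : ℝ) ^ j * Real.log 2) atTop atTop :=
    (tendsto_pow_atTop_atTop_of_one_lt (by norm_num)).atTop_mul_const hl2
  have hlTtop : Tendsto (fun j => Real.log (T j)) atTop atTop :=
    (tendsto_add_atTop_iff_nat 1).1 (tendsto_atTop_mono hgrow hpow)
  have hTtop : Tendsto T atTop atTop := by
    refine tendsto_atTop_mono' _ ?_ hlTtop
    filter_upwards [eventually_ge_atTop 1] with j hj
    linarith [Real.log_le_sub_one_of_pos (hT0 j hj)]
  have hHtop : Tendsto (fun j => Real.log (H j)) atTop atTop := by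
    refine (tendsto_add_atTop_iff_nat 1).1 (tendsto_atTop_mono' _ ?_ hlTtop)
    filter_upwards [eventually_ge_atTop 1] with j hj
    linarith [hstep j hj, hlT j hj]
  refine ⟨fun δ₁ hδ hsum => ?_, fun δ₂ hδ hsum =>
    BlockBehrend.not_isBehrend_blocks hT2 hH1 hHT hTtop hHtop hδ hsum⟩
  obtain ⟨c, h₀, hc, hlb⟩ := BlockBehrend.lower_bound hδ
  obtain ⟨j₀, hj₀⟩ := eventually_atTop.1 (hHtop.eventually_ge_atTop h₀)
  refine BlockBehrend.isBehrend_blocks (j₀ := j₀) hc hT2 hH1 (fun j hj => ?_)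
    (fun j hj => hlb _ _ (by linarith [hH1 (j + 1) (by omega)]) (hj₀ _ (by omega))
      (hHT _ (by omega))) hsum
  calc H j * T j ≤ T j * T j := mul_le_mul_of_nonneg_right (hHT j hj) (hT0 j hj).le
    _ = Real.exp (2 * Real.log (T j)) := by
      rw [two_mul, Real.exp_add, Real.exp_log (hT0 j hj)]
    _ ≤ H (j + 1) := by
      rw [← Real.le_log_iff_exp_le (by linarith [hH1 (j + 1) (by omega)])]
      exact hstep j hj
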